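/- arXiv:2310.02244 — 5 statements merged into one kernel-verified Lean document; each statement's English description precedes it below -/
import Mathlib

section
/- Let W_1, W_2, … be i.i.d. standard Gaussian random variables. Then the product Π_{k=1}^{L}(1 + W_k/√L) converges in distribution, as L → ∞, to the log-normal random variable exp(Z − 1/2), where Z is standard Gaussian. -/
open MeasureTheory ProbabilityTheory Filter Topology

/-- The joint law of `L` i.i.d. standard Gaussian random variables `W_1, …, W_L`,
realized canonically on `Fin L → ℝ`. -/
noncomputable def stdGaussPi (L : ℕ) : Measure (Fin L → ℝ) :=
  Measure.pi fun _ => gaussianReal 0 1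

/-!
For i.i.d. centered `X k` of variance `v`, divide the product of the `1 + X k / √n` by
`exp (∑ k, X k / √n)`, whose exponent converges in law to a Gaussian `Z` of variance `v` by the
central limit theorem. The quotient converges almost surely to the constant `exp (-v / 2)`: by the
strong law the averages of the `X k ^ 2` converge to `v`, and this single fact also makes the
increments `X k / √n` uniformly small in `k < n`, so that the cubic remainders in
`log (1 + y) = y - y ^ 2 / 2 + O(|y| ^ 3)` sum to `o(1)`. Slutsky's theorem combines the two limits
into `exp (Z - v / 2)`.
-/

lemma abs_log_one_add_sub_le {t : ℝ} (ht : |t| ≤ 1 / 2) :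
    |Real.log (1 + t) - (t - t ^ 2 / 2)| ≤ 2 * |t| ^ 3 := by
  have htaylor := Real.abs_log_sub_add_sum_range_le (x := -t) (by rw [abs_neg]; linarith) 2
  norm_num [Finset.sum_range_succ] at htaylor
  calc |Real.log (1 + t) - (t - t ^ 2 / 2)|
      = |-t + t ^ 2 / 2 + Real.log (1 + t)| := by congr 1; ring
    _ ≤ |t| ^ 3 / (1 - |t|) := htaylor
    _ ≤ |t| ^ 3 / (1 / 2) := by gcongr; linarith
    _ = 2 * |t| ^ 3 := by ring

lemma abs_sum_log_one_add_sub_le {ι : Type*} [Fintype ι] {y : ι → ℝ} (hy : ‖y‖ ≤ 1 / 2) :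
    |∑ k, Real.log (1 + y k) - (∑ k, y k - (∑ k, y k ^ 2) / 2)| ≤ 2 * ‖y‖ * ∑ k, y k ^ 2 := by
  have hle (k : ι) : |y k| ≤ ‖y‖ := norm_le_pi_norm y k
  calc |∑ k, Real.log (1 + y k) - (∑ k, y k - (∑ k, y k ^ 2) / 2)|
      = |∑ k, (Real.log (1 + y k) - (y k - y k ^ 2 / 2))| := by
        simp only [Finset.sum_sub_distrib, Finset.sum_div]
    _ ≤ ∑ k, |Real.log (1 + y k) - (y k - y k ^ 2 / 2)| := Finset.abs_sum_le_sum_abs _ _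
    _ ≤ ∑ k, 2 * ‖y‖ * y k ^ 2 := by
        gcongr with k
        calc |Real.log (1 + y k) - (y k - y k ^ 2 / 2)|
            ≤ 2 * |y k| ^ 3 := abs_log_one_add_sub_le ((hle k).trans hy)
          _ = 2 * |y k| * y k ^ 2 := by rw [← sq_abs (y k)]; ring
          _ ≤ 2 * ‖y‖ * y k ^ 2 := by gcongr; exact hle k
    _ = 2 * ‖y‖ * ∑ k, y k ^ 2 := by rw [Finset.mul_sum]

theorem tendsto_exp_neg_sum_mul_prod_one_add {α : Type*} {l : Filter α} {ι : α → Type*}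
    [∀ a, Fintype (ι a)] {y : ∀ a, ι a → ℝ} {v : ℝ}
    (hnull : Tendsto (fun a ↦ ‖y a‖) l (𝓝 0))
    (hsq : Tendsto (fun a ↦ ∑ k, y a k ^ 2) l (𝓝 v)) :
    Tendsto (fun a ↦ Real.exp (-∑ k, y a k) * ∏ k, (1 + y a k)) l (𝓝 (Real.exp (-(v / 2)))) := by
  have hsmall : ∀ᶠ a in l, ‖y a‖ ≤ 1 / 2 := hnull.eventually_le_const (by norm_num)
  have hremainder : Tendsto
      (fun a ↦ ∑ k, Real.log (1 + y a k) - (∑ k, y a k - (∑ k, y a k ^ 2) / 2)) l (𝓝 0) := by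
    refine squeeze_zero_norm' (hsmall.mono fun a ha ↦ abs_sum_log_one_add_sub_le ha) ?_
    simpa using (hnull.const_mul 2).mul hsq
  have hexponent := (hremainder.sub (hsq.div_const 2)).rexp
  rw [zero_sub] at hexponent
  refine hexponent.congr' ?_
  filter_upwards [hsmall] with a ha
  have hpos (k : ι a) : 0 < 1 + y a k := by
    linarith [(abs_le.1 ((norm_le_pi_norm (y a) k).trans ha)).1]
  rw [← Real.exp_log (Finset.prod_pos fun k _ ↦ hpos k),
    Real.log_prod fun k _ ↦ (hpos k).ne', ← Real.exp_add]
  congr 1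
  ring

lemma isLittleO_norm_fin_of_monotone {E : Type*} [SeminormedAddCommGroup E] {u : ℕ → E}
    {b : ℕ → ℝ} (hmono : Monotone b) (hb : Tendsto b atTop atTop) (hu : u =o[atTop] b) :
    (fun n ↦ ‖fun k : Fin n ↦ u k‖) =o[atTop] b := by
  refine Asymptotics.isLittleO_iff.2 fun c hc ↦ ?_
  obtain ⟨N, hN⟩ := eventually_atTop.1 ((hu.bound hc).and (hb.eventually_ge_atTop 0))
  have hinitial : ∀ᶠ n in atTop, ∀ k ∈ Finset.range N, ‖u k‖ ≤ c * b n :=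
    (Finset.eventually_all _).2 fun k _ ↦ (hb.const_mul_atTop hc).eventually_ge_atTop ‖u k‖
  filter_upwards [hinitial, eventually_ge_atTop N] with n hn hNn
  have hbn : 0 ≤ b n := (hN n hNn).2
  rw [norm_norm, Real.norm_of_nonneg hbn, pi_norm_le_iff_of_nonneg (by positivity)]
  intro k
  obtain hk | hk := lt_or_ge (k : ℕ) N
  · exact hn k (Finset.mem_range.2 hk)
  · calc ‖u k‖ ≤ c * ‖b k‖ := (hN k hk).1
      _ = c * b k := by rw [Real.norm_of_nonneg (hN k hk).2]
      _ ≤ c * b n := by gcongr; exact hmono k.is_lt.le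

lemma isLittleO_natCast_of_tendsto_average {E : Type*} [SeminormedAddCommGroup E]
    [NormedSpace ℝ E] {u : ℕ → E} {v : E}
    (h : Tendsto (fun n : ℕ ↦ (n : ℝ)⁻¹ • ∑ i ∈ Finset.range n, u i) atTop (𝓝 v)) :
    u =o[atTop] fun n ↦ (n : ℝ) := by
  set average : ℕ → E := fun n ↦ (n : ℝ)⁻¹ • ∑ i ∈ Finset.range n, u i
  have hshift : Tendsto (fun n ↦ average (n + 1)) atTop (𝓝 v) := h.comp (tendsto_add_atTop_nat 1)
  have hincrement : (fun n : ℕ ↦ (n : ℝ) • (average (n + 1) - average n)) =o[atTop]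
      fun n : ℕ ↦ (n : ℝ) := by
    have hdiff : (fun n ↦ average (n + 1) - average n) =o[atTop] fun _ ↦ (1 : ℝ) :=
      (Asymptotics.isLittleO_one_iff ℝ).2 (by simpa using hshift.sub h)
    exact ((Asymptotics.isBigO_refl (fun n : ℕ ↦ (n : ℝ)) atTop).smul_isLittleO hdiff).congr_right
      fun n ↦ mul_one (n : ℝ)
  have hbounded : (fun n ↦ average (n + 1)) =o[atTop] fun n : ℕ ↦ (n : ℝ) :=
    (hshift.isBigO_one ℝ).trans_isLittleO
      (Asymptotics.isLittleO_const_left.2 <| .inr <|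
        tendsto_norm_atTop_atTop.comp tendsto_natCast_atTop_atTop)
  have hsum (n : ℕ) : (n : ℝ) • average n = ∑ i ∈ Finset.range n, u i := by
    rcases eq_or_ne n 0 with rfl | hn
    · simp
    · exact smul_inv_smul₀ (Nat.cast_ne_zero.2 hn) _
  refine (hincrement.add hbounded).congr_left fun n ↦ ?_
  calc (n : ℝ) • (average (n + 1) - average n) + average (n + 1)
      = ((n + 1 : ℕ) : ℝ) • average (n + 1) - (n : ℝ) • average n := by push_cast; module
    _ = u n := by rw [hsum, hsum, Finset.sum_range_succ, add_sub_cancel_left]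

lemma tendsto_norm_fin_div_sqrt {x : ℕ → ℝ} {v : ℝ}
    (h : Tendsto (fun n : ℕ ↦ (∑ i ∈ Finset.range n, x i ^ 2) / n) atTop (𝓝 v)) :
    Tendsto (fun n : ℕ ↦ ‖fun k : Fin n ↦ x k / √n‖) atTop (𝓝 0) := by
  have hx : x =o[atTop] fun n : ℕ ↦ √n := by
    refine Asymptotics.IsLittleO.of_pow (n := 2) ?_ two_ne_zero
    simpa [Pi.pow_def] using
      isLittleO_natCast_of_tendsto_average (h.congr fun n ↦ div_eq_inv_mul _ (n : ℝ))
  have hmax := isLittleO_norm_fin_of_monotone (b := fun n : ℕ ↦ √n)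
    (fun _ _ hmn ↦ Real.sqrt_le_sqrt (Nat.cast_le.2 hmn))
    (Real.tendsto_sqrt_atTop.comp tendsto_natCast_atTop_atTop) hx
  refine hmax.tendsto_div_nhds_zero.congr fun n ↦ ?_
  have hsmul : (fun k : Fin n ↦ x k / √n) = (√n)⁻¹ • fun k : Fin n ↦ x k := by
    ext; simp [div_eq_inv_mul]
  rw [hsmul, norm_smul, norm_inv, Real.norm_of_nonneg (Real.sqrt_nonneg _), div_eq_inv_mul]

theorem tendsto_exp_neg_sum_mul_prod_one_add_div_sqrt {x : ℕ → ℝ} {v : ℝ}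
    (h : Tendsto (fun n : ℕ ↦ (∑ k ∈ Finset.range n, x k ^ 2) / n) atTop (𝓝 v)) :
    Tendsto (fun n : ℕ ↦ Real.exp (-((√n)⁻¹ * ∑ k ∈ Finset.range n, x k)) *
      ∏ k ∈ Finset.range n, (1 + x k / √n)) atTop (𝓝 (Real.exp (-(v / 2)))) := by
  have hsq : Tendsto (fun n : ℕ ↦ ∑ k : Fin n, (x k / √n) ^ 2) atTop (𝓝 v) :=
    h.congr fun n ↦ by simp [div_pow, Finset.sum_div, Finset.sum_range]
  refine (tendsto_exp_neg_sum_mul_prod_one_add (tendsto_norm_fin_div_sqrt h) hsq).congr fun n ↦ ?_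
  rw [← Finset.sum_div, div_eq_inv_mul, Finset.sum_range, Finset.prod_range]

section IID

variable {Ω : Type*} {mΩ : MeasurableSpace Ω} {P : Measure Ω} {X : ℕ → Ω → ℝ}

lemma ae_tendsto_average_sq (hX : MemLp (X 0) 2 P) (hindep : Pairwise fun i j ↦ X i ⟂ᵢ[P] X j)
    (hident : ∀ i, IdentDistrib (X i) (X 0) P P) :
    ∀ᵐ ω ∂P, Tendsto (fun n : ℕ ↦ (∑ k ∈ Finset.range n, X k ω ^ 2) / n) atTop
      (𝓝 P[X 0 ^ 2]) :=
  strong_law_ae_real (fun i ω ↦ X i ω ^ 2) hX.integrable_sq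
    (fun _ _ hij ↦ (hindep hij).comp (measurable_id.pow_const 2) (measurable_id.pow_const 2))
    fun i ↦ (hident i).comp (measurable_id.pow_const 2)

theorem tendstoInDistribution_prod_one_add_div_sqrt [IsProbabilityMeasure P]
    {Ω' : Type*} {mΩ' : MeasurableSpace Ω'} {P' : Measure Ω'} [IsProbabilityMeasure P']
    {Y : Ω' → ℝ} (hY : HasLaw Y (gaussianReal 0 Var[X 0; P].toNNReal) P') (hX : MemLp (X 0) 2 P)
    (hcentered : P[X 0] = 0) (hindep : iIndepFun X P)
    (hident : ∀ i, IdentDistrib (X i) (X 0) P P) :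
    TendstoInDistribution (fun (n : ℕ) ω ↦ ∏ k ∈ Finset.range n, (1 + X k ω / √n)) atTop
      (fun ω ↦ Real.exp (Y ω - Var[X 0; P] / 2)) (fun _ ↦ P) P' := by
  have hmeas (k : ℕ) : AEMeasurable (X k) P := (hident k).aemeasurable_fst
  have hvar : P[X 0 ^ 2] = Var[X 0; P] := by simp [variance_eq_sub hX, hcentered]
  have hclt : TendstoInDistribution (fun (n : ℕ) ω ↦ (√n)⁻¹ * ∑ k ∈ Finset.range n, X k ω)
      atTop Y (fun _ ↦ P) P' := by
    simpa [hcentered] using tendstoInDistribution_inv_sqrt_mul_sum_sub hY hX hindep hident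
  have hratio_meas (n : ℕ) : AEMeasurable (fun ω ↦
      Real.exp (-((√n)⁻¹ * ∑ k ∈ Finset.range n, X k ω)) *
        ∏ k ∈ Finset.range n, (1 + X k ω / √n)) P := by fun_prop
  have hratio := tendstoInMeasure_of_tendsto_ae (fun n ↦ (hratio_meas n).aestronglyMeasurable)
    ((ae_tendsto_average_sq hX (fun _ _ hij ↦ hindep.indepFun hij) hident).mono fun ω hω ↦
      tendsto_exp_neg_sum_mul_prod_one_add_div_sqrt (hvar ▸ hω))
  have hslutsky := hclt.continuous_comp_prodMk_of_tendstoInMeasure_const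
    (g := fun p : ℝ × ℝ ↦ Real.exp p.1 * p.2) (by fun_prop) hratio hratio_meas
  refine hslutsky.congr (fun n ↦ ae_of_all _ fun ω ↦ ?_) (ae_of_all _ fun ω ↦ ?_)
  · simp [← mul_assoc, ← Real.exp_add]
  · simp [← Real.exp_add, sub_eq_add_neg]

end IID

theorem stmt_3_general {μ : Measure ℝ} [IsProbabilityMeasure μ] (hμ : MemLp id 2 μ)
    (hcentered : μ[id] = 0) (φ : BoundedContinuousFunction ℝ ℝ) :
    Tendsto (fun L : ℕ ↦ ∫ ω, φ (∏ k, (1 + ω k / √L)) ∂(Measure.pi fun _ : Fin L ↦ μ)) atTop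
      (𝓝 (∫ z, φ (Real.exp (z - Var[id; μ] / 2)) ∂(gaussianReal 0 Var[id; μ].toNNReal))) := by
  obtain ⟨Ω, _, P, X, hmeas, hlaw, hindep, _⟩ := exists_iid ℕ μ
  have hlim : TendstoInDistribution (fun (n : ℕ) ω ↦ ∏ k ∈ Finset.range n, (1 + X k ω / √n)) atTop
      (fun z ↦ Real.exp (z - Var[id; μ] / 2)) (fun _ ↦ P)
      (gaussianReal 0 Var[id; μ].toNNReal) := by
    rw [← (hlaw 0).variance_eq]
    refine tendstoInDistribution_prod_one_add_div_sqrt HasLaw.id ?_ ?_ hindep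
      fun i ↦ (hlaw i).identDistrib (hlaw 0)
    · rw [← (hlaw 0).map_eq] at hμ
      exact hμ.comp_of_map (hmeas 0).aemeasurable
    · exact (hlaw 0).integral_eq.trans hcentered
  have hφ := ProbabilityMeasure.tendsto_iff_forall_integral_tendsto.1 hlim.tendsto φ
  simp only [ProbabilityMeasure.coe_mk] at hφ
  rw [integral_map (by fun_prop) (by fun_prop)] at hφ
  refine hφ.congr fun L ↦ ?_
  have hpi : HasLaw (fun ω (i : Fin L) ↦ X i ω) (Measure.pi fun _ ↦ μ) P :=
    iIndepFun.hasLaw_pi (fun i : Fin L ↦ hlaw i) (hindep.precomp Fin.val_injective)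
  rw [integral_map (hlim.forall_aemeasurable L) (by fun_prop), ← hpi.map_eq,
    integral_map hpi.aemeasurable (Measurable.aestronglyMeasurable (by fun_prop))]
  simp only [Finset.prod_range]

/-- For i.i.d. standard Gaussians `W_1, W_2, …`, the product
`∏_{k=1}^{L}(1 + W_k/√L)` converges in distribution, as `L → ∞`, to the log-normal
random variable `exp(Z − 1/2)` with `Z` standard Gaussian: tested against every
bounded continuous function. -/
theorem stmt_3 (φ : BoundedContinuousFunction ℝ ℝ) :
    Filter.Tendsto
      (fun L : ℕ => ∫ ω, φ (∏ k, (1 + ω k / Real.sqrt L)) ∂(stdGaussPi L))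
      Filter.atTop
      (𝓝 (∫ z, φ (Real.exp (z - 1 / 2)) ∂(gaussianReal 0 1))) := by
  simpa [stdGaussPi] using
    stmt_3_general (μ := gaussianReal 0 1) (memLp_id_gaussianReal 2) integral_id_gaussianReal φ
end

section
/- Linear residual network at initialization: fix integers n, L ≥ 1, a real α, and a nonzero vector x⁰ ∈ ℝⁿ; let W¹, …, W^L be independent n×n random matrices with i.i.d. N(0, 1/n) entries, and define h^l := W^l x^{l−1} and x^l := x^{l−1} + L^{−α} h^l for l = 1, …, L. Then for every 1 ≤ l ≤ L, E‖x^l‖² = (1 + L^{−2α})^l · ‖x⁰‖² and E‖h^l‖² = (1 + L^{−2α})^{l−1} · ‖x⁰‖². -/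
open MeasureTheory ProbabilityTheory Finset
open scoped NNReal

/-- The joint law of `L` independent `n × n` random matrices `W¹, …, W^L` with
i.i.d. `N(0, 1/n)` entries, realized canonically on `Fin L → Fin n → Fin n → ℝ`. -/
noncomputable def gaussMats (n L : ℕ) : Measure (Fin L → Fin n → Fin n → ℝ) :=
  Measure.pi fun _ => Measure.pi fun _ => Measure.pi fun _ => gaussianReal 0 (n : ℝ≥0)⁻¹

/-!
Each state depends only on the earlier weight matrices, so it is independent of the matrix that is
applied to it. The rows of that matrix are centred and isotropic with variance `1 / n`: averaging
over them first makes the cross term in `‖x + c W x‖²` vanish and gives the branch `W x` the same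
second moment as `x`. Every layer thus multiplies the second moment by `1 + c²`.
-/

open scoped Matrix

section Isotropic

variable {Ω Ω' ι κ : Type*} [MeasurableSpace Ω] [MeasurableSpace Ω'] {P : Measure Ω}
  {Q : Measure Ω'} {v : ℝ}

/-- A centred isotropic random vector: its entries are square integrable, centred, pairwise
uncorrelated, and have common variance `v`. This is all that the second-moment computation uses
about a row of a random weight matrix. -/
structure IsIsotropic (X : Ω → κ → ℝ) (v : ℝ) (P : Measure Ω) : Prop where
  memLp : ∀ j, MemLp (fun ω => X ω j) 2 P
  integral_eq_zero : ∀ j, ∫ ω, X ω j ∂P = 0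
  integral_sq : ∀ j, ∫ ω, X ω j ^ 2 ∂P = v
  integral_mul_of_ne : ∀ j k, j ≠ k → ∫ ω, X ω j * X ω k ∂P = 0

namespace IsIsotropic

variable {X Y : Ω → κ → ℝ}

lemma comp_measurePreserving {f : Ω' → Ω} (hX : IsIsotropic X v P) (hf : MeasurePreserving f Q P) :
    IsIsotropic (X ∘ f) v Q where
  memLp j := (hX.memLp j).comp_measurePreserving hf
  integral_eq_zero j :=
    (hf.hasLaw.integral_comp (hX.memLp j).1).trans (hX.integral_eq_zero j)
  integral_sq j :=
    (hf.hasLaw.integral_comp (hX.memLp j).integrable_sq.1).trans (hX.integral_sq j)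
  integral_mul_of_ne j k hjk :=
    (hf.hasLaw.integral_comp ((hX.memLp j).integrable_mul (hX.memLp k)).1).trans
      (hX.integral_mul_of_ne j k hjk)

variable [Fintype κ]

lemma integral_mul_dotProduct_eq_zero [IsFiniteMeasure P] {Z : Ω → ℝ} (hX : IsIsotropic X v P)
    (hind : X ⟂ᵢ[P] fun ω => (Z ω, Y ω)) (hZ : MemLp Z 2 P)
    (hY : ∀ j, MemLp (fun ω => Y ω j) 2 P) :
    ∫ ω, Z ω * (X ω ⬝ᵥ Y ω) ∂P = 0 := by
  have indep (j : κ) : (fun ω => X ω j) ⟂ᵢ[P] (fun ω => Z ω * Y ω j) :=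
    hind.comp (φ := fun x : κ → ℝ => x j) (ψ := fun zy : ℝ × (κ → ℝ) => zy.1 * zy.2 j)
      (by fun_prop) (by fun_prop)
  have integrable_X (j : κ) : Integrable (fun ω => X ω j) P :=
    (hX.memLp j).integrable one_le_two
  have integrable_ZY (j : κ) : Integrable (fun ω => Z ω * Y ω j) P := hZ.integrable_mul (hY j)
  calc ∫ ω, Z ω * (X ω ⬝ᵥ Y ω) ∂P
      = ∫ ω, ∑ j, X ω j * (Z ω * Y ω j) ∂P := by
        simp only [dotProduct, mul_sum, mul_left_comm]
    _ = ∑ j, ∫ ω, X ω j * (Z ω * Y ω j) ∂P :=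
        integral_finsetSum _ fun j _ => (indep j).integrable_mul (integrable_X j) (integrable_ZY j)
    _ = ∑ j, (∫ ω, X ω j ∂P) * ∫ ω, Z ω * Y ω j ∂P :=
        sum_congr rfl fun j _ =>
          (indep j).integral_fun_mul_eq_mul_integral (integrable_X j).1 (integrable_ZY j).1
    _ = 0 := by simp only [hX.integral_eq_zero, zero_mul, sum_const_zero]

lemma memLp_dotProduct (hX : IsIsotropic X v P) (hind : X ⟂ᵢ[P] Y)
    (hY : ∀ j, MemLp (fun ω => Y ω j) 2 P) :
    MemLp (fun ω => X ω ⬝ᵥ Y ω) 2 P := by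
  refine memLp_finsetSum _ fun j _ => ?_
  have indep_sq : (fun ω => X ω j ^ 2) ⟂ᵢ[P] (fun ω => Y ω j ^ 2) :=
    hind.comp (φ := fun x : κ → ℝ => x j ^ 2) (ψ := fun y : κ → ℝ => y j ^ 2)
      (by fun_prop) (by fun_prop)
  refine (memLp_two_iff_integrable_sq ((hX.memLp j).1.mul (hY j).1)).2 ?_
  simpa only [Pi.mul_def, mul_pow] using
    indep_sq.integrable_mul (hX.memLp j).integrable_sq (hY j).integrable_sq

lemma integral_dotProduct_sq (hX : IsIsotropic X v P) (hind : X ⟂ᵢ[P] Y)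
    (hY : ∀ j, MemLp (fun ω => Y ω j) 2 P) :
    ∫ ω, (X ω ⬝ᵥ Y ω) ^ 2 ∂P = v * ∫ ω, ∑ j, Y ω j ^ 2 ∂P := by
  have indep (j k : κ) : (fun ω => X ω j * X ω k) ⟂ᵢ[P] (fun ω => Y ω j * Y ω k) :=
    hind.comp (φ := fun x : κ → ℝ => x j * x k) (ψ := fun y : κ → ℝ => y j * y k)
      (by fun_prop) (by fun_prop)
  have integrable_XX (j k : κ) : Integrable (fun ω => X ω j * X ω k) P :=
    (hX.memLp j).integrable_mul (hX.memLp k)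
  have integrable_YY (j k : κ) : Integrable (fun ω => Y ω j * Y ω k) P :=
    (hY j).integrable_mul (hY k)
  have integrable_XXYY (j k : κ) : Integrable (fun ω => X ω j * X ω k * (Y ω j * Y ω k)) P :=
    (indep j k).integrable_mul (integrable_XX j k) (integrable_YY j k)
  calc ∫ ω, (X ω ⬝ᵥ Y ω) ^ 2 ∂P
      = ∫ ω, ∑ j, ∑ k, X ω j * X ω k * (Y ω j * Y ω k) ∂P := by
        simp only [dotProduct, sq, sum_mul_sum, mul_mul_mul_comm]
    _ = ∑ j, ∑ k, ∫ ω, X ω j * X ω k * (Y ω j * Y ω k) ∂P := by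
        rw [integral_finsetSum _ fun j _ => integrable_finsetSum _ fun k _ => integrable_XXYY j k]
        exact sum_congr rfl fun j _ => integral_finsetSum _ fun k _ => integrable_XXYY j k
    _ = ∑ j, ∑ k, (∫ ω, X ω j * X ω k ∂P) * ∫ ω, Y ω j * Y ω k ∂P :=
        sum_congr rfl fun j _ => sum_congr rfl fun k _ =>
          (indep j k).integral_fun_mul_eq_mul_integral (integrable_XX j k).1 (integrable_YY j k).1
    _ = ∑ j, (∫ ω, X ω j * X ω j ∂P) * ∫ ω, Y ω j * Y ω j ∂P :=
        sum_congr rfl fun j _ => Fintype.sum_eq_single j fun k hkj => by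
          rw [hX.integral_mul_of_ne j k hkj.symm, zero_mul]
    _ = v * ∫ ω, ∑ j, Y ω j ^ 2 ∂P := by
        simp only [← sq, hX.integral_sq, ← mul_sum]
        rw [integral_finsetSum _ fun j _ => (hY j).integrable_sq]

end IsIsotropic

lemma isIsotropic_pi [Fintype κ] {ν : Measure ℝ} [IsProbabilityMeasure ν] (hν : MemLp id 2 ν)
    (hmean : ∫ t, t ∂ν = 0) :
    IsIsotropic (fun y : κ → ℝ => y) Var[id; ν] (Measure.pi fun _ => ν) where
  memLp j := hν.comp_measurePreserving (measurePreserving_eval _ j)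
  integral_eq_zero j :=
    (integral_comp_eval (μ := fun _ => ν) (f := fun t => t) (i := j) hν.1).trans hmean
  integral_sq j := by
    rw [variance_of_integral_eq_zero aemeasurable_id hmean]
    exact integral_comp_eval (μ := fun _ => ν) (f := fun t => t ^ 2) hν.integrable_sq.1
  integral_mul_of_ne j k hjk := by
    have hindep : (fun y : κ → ℝ => y j) ⟂ᵢ[Measure.pi fun _ => ν] (fun y => y k) :=
      (iIndepFun_pi (X := fun _ => id) fun _ => aemeasurable_id).indepFun hjk
    rw [hindep.integral_fun_mul_eq_mul_integral (measurable_pi_apply j).aestronglyMeasurable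
      (measurable_pi_apply k).aestronglyMeasurable,
      integral_comp_eval (μ := fun _ => ν) (f := fun t => t) hν.1, hmean, zero_mul]

lemma integral_add_mul_sq_of_integral_mul_eq_zero {f g : Ω → ℝ} (hf : MemLp f 2 P)
    (hg : MemLp g 2 P) (hfg : ∫ ω, f ω * g ω ∂P = 0) (c : ℝ) :
    ∫ ω, (f ω + c * g ω) ^ 2 ∂P = ∫ ω, f ω ^ 2 ∂P + c ^ 2 * ∫ ω, g ω ^ 2 ∂P := by
  have expand (ω : Ω) :
      (f ω + c * g ω) ^ 2 = f ω ^ 2 + 2 * c * (f ω * g ω) + c ^ 2 * g ω ^ 2 := by ring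
  have integrable_cross : Integrable (fun ω => 2 * c * (f ω * g ω)) P :=
    (hf.integrable_mul hg).const_mul (2 * c)
  simp only [expand]
  rw [integral_add (f := fun ω => f ω ^ 2 + 2 * c * (f ω * g ω))
      (hf.integrable_sq.add integrable_cross) (hg.integrable_sq.const_mul _),
    integral_add hf.integrable_sq integrable_cross, integral_const_mul, integral_const_mul, hfg,
    mul_zero, add_zero]

variable [Fintype κ]

lemma memLp_mulVec {W : Ω → ι → κ → ℝ} {Y : Ω → κ → ℝ}
    (hW : ∀ i, IsIsotropic (fun ω => W ω i) v P) (hind : W ⟂ᵢ[P] Y)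
    (hY : ∀ j, MemLp (fun ω => Y ω j) 2 P) (i : ι) :
    MemLp (fun ω => (Matrix.of (W ω) *ᵥ Y ω) i) 2 P :=
  (hW i).memLp_dotProduct (hind.comp (measurable_pi_apply i) measurable_id) hY

variable [Fintype ι]

lemma integral_sum_mulVec_sq {W : Ω → ι → κ → ℝ} {Y : Ω → κ → ℝ}
    (hW : ∀ i, IsIsotropic (fun ω => W ω i) v P) (hind : W ⟂ᵢ[P] Y)
    (hY : ∀ j, MemLp (fun ω => Y ω j) 2 P) :
    ∫ ω, ∑ i, (Matrix.of (W ω) *ᵥ Y ω) i ^ 2 ∂P =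
      Fintype.card ι * v * ∫ ω, ∑ j, Y ω j ^ 2 ∂P := by
  have integral_row (i : ι) :
      ∫ ω, (Matrix.of (W ω) *ᵥ Y ω) i ^ 2 ∂P = v * ∫ ω, ∑ j, Y ω j ^ 2 ∂P :=
    (hW i).integral_dotProduct_sq (hind.comp (measurable_pi_apply i) measurable_id) hY
  rw [integral_finsetSum _ fun i _ => (memLp_mulVec hW hind hY i).integrable_sq]
  simp only [integral_row, sum_const, card_univ, nsmul_eq_mul, mul_assoc]

lemma integral_sum_add_smul_mulVec_sq [IsFiniteMeasure P] {W : Ω → ι → ι → ℝ} {Y : Ω → ι → ℝ}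
    (hW : ∀ i, IsIsotropic (fun ω => W ω i) v P) (hind : W ⟂ᵢ[P] Y)
    (hY : ∀ i, MemLp (fun ω => Y ω i) 2 P) (c : ℝ) :
    ∫ ω, ∑ i, (Y ω + c • Matrix.of (W ω) *ᵥ Y ω) i ^ 2 ∂P =
      (1 + c ^ 2 * (Fintype.card ι * v)) * ∫ ω, ∑ i, Y ω i ^ 2 ∂P := by
  have memLp_branch := memLp_mulVec hW hind hY
  have cross_eq_zero (i : ι) : ∫ ω, Y ω i * (Matrix.of (W ω) *ᵥ Y ω) i ∂P = 0 :=
    (hW i).integral_mul_dotProduct_eq_zero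
      (hind.comp (φ := fun w : ι → ι → ℝ => w i) (ψ := fun y : ι → ℝ => (y i, y))
        (by fun_prop) (by fun_prop))
      (hY i) hY
  calc ∫ ω, ∑ i, (Y ω + c • Matrix.of (W ω) *ᵥ Y ω) i ^ 2 ∂P
      = ∑ i, ∫ ω, (Y ω i + c * (Matrix.of (W ω) *ᵥ Y ω) i) ^ 2 ∂P :=
        integral_finsetSum _ fun i _ => ((hY i).add ((memLp_branch i).const_mul c)).integrable_sq
    _ = ∑ i, (∫ ω, Y ω i ^ 2 ∂P + c ^ 2 * ∫ ω, (Matrix.of (W ω) *ᵥ Y ω) i ^ 2 ∂P) :=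
        sum_congr rfl fun i _ => integral_add_mul_sq_of_integral_mul_eq_zero (hY i)
          (memLp_branch i) (cross_eq_zero i) c
    _ = ∫ ω, ∑ i, Y ω i ^ 2 ∂P + c ^ 2 * ∫ ω, ∑ i, (Matrix.of (W ω) *ᵥ Y ω) i ^ 2 ∂P := by
        rw [sum_add_distrib, ← mul_sum, integral_finsetSum _ fun i _ => (hY i).integrable_sq,
          integral_finsetSum _ fun i _ => (memLp_branch i).integrable_sq]
    _ = (1 + c ^ 2 * (Fintype.card ι * v)) * ∫ ω, ∑ i, Y ω i ^ 2 ∂P := by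
        rw [integral_sum_mulVec_sq hW hind hY]
        ring

end Isotropic

section Network

variable {Ω ι : Type*} [Fintype ι] {mΩ : MeasurableSpace Ω} {P : Measure Ω} {L : ℕ} {c v : ℝ}
  {ℱ : Filtration ℕ mΩ} {W : Fin L → Ω → ι → ι → ℝ} {x : ℕ → Ω → ι → ℝ}

/-- The forward pass `x (l + 1) = x l + c • W l *ᵥ x l` of a linear residual network with random
weights. The weights are indexed from `0`, so `W l` is the paper's `W^{l+1}`. The σ-algebra `ℱ l`
may carry more information than the input and the first `l` weight matrices, as long as `W l` is
independent of it. -/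
structure IsLinearResNet (ℱ : Filtration ℕ mΩ) (W : Fin L → Ω → ι → ι → ℝ) (c v : ℝ)
    (x : ℕ → Ω → ι → ℝ) (P : Measure Ω) : Prop where
  measurable_input : Measurable[ℱ 0] (x 0)
  memLp_input : ∀ i, MemLp (fun ω => x 0 ω i) 2 P
  measurable_weight : ∀ l : Fin L, Measurable[ℱ (l + 1)] (W l)
  indep_weight : ∀ l : Fin L, Indep (MeasurableSpace.comap (W l) inferInstance) (ℱ l) P
  isIsotropic_weight : ∀ l i, IsIsotropic (fun ω => W l ω i) v P
  succ_eq : ∀ (l : Fin L) ω, x (l + 1) ω = x l ω + c • Matrix.of (W l ω) *ᵥ x l ω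

lemma measurable_add_smul_mulVec (c : ℝ) :
    Measurable fun p : (ι → ι → ℝ) × (ι → ℝ) => p.2 + c • Matrix.of p.1 *ᵥ p.2 := by
  refine measurable_pi_lambda _ fun i => ?_
  simp only [Pi.add_apply, Pi.smul_apply, Matrix.mulVec, dotProduct, Matrix.of_apply]
  fun_prop

namespace IsLinearResNet

lemma measurable (h : IsLinearResNet ℱ W c v x P) {l : ℕ} (hl : l ≤ L) :
    Measurable[ℱ l] (x l) := by
  induction l with
  | zero => exact h.measurable_input
  | succ l ih =>
    have measurable_state : Measurable[ℱ (l + 1)] (x l) :=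
      (ih (Nat.le_of_succ_le hl)).mono (ℱ.mono l.le_succ) le_rfl
    rw [funext (h.succ_eq ⟨l, hl⟩)]
    exact (measurable_add_smul_mulVec c).comp
      (Measurable.prodMk (h.measurable_weight ⟨l, hl⟩) measurable_state)

lemma indepFun (h : IsLinearResNet ℱ W c v x P) (l : Fin L) : W l ⟂ᵢ[P] x l :=
  indep_of_indep_of_le_right (h.indep_weight l) (h.measurable l.is_lt.le).comap_le

lemma memLp (h : IsLinearResNet ℱ W c v x P) {l : ℕ} (hl : l ≤ L) (i : ι) :
    MemLp (fun ω => x l ω i) 2 P := by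
  induction l generalizing i with
  | zero => exact h.memLp_input i
  | succ l ih =>
    have memLp_state := ih (Nat.le_of_succ_le hl)
    rw [funext (h.succ_eq ⟨l, hl⟩)]
    exact (memLp_state i).add ((memLp_mulVec (h.isIsotropic_weight ⟨l, hl⟩) (h.indepFun ⟨l, hl⟩)
      memLp_state i).const_smul c)

lemma integral_sum_sq [IsFiniteMeasure P] (h : IsLinearResNet ℱ W c v x P) {l : ℕ} (hl : l ≤ L) :
    ∫ ω, ∑ i, x l ω i ^ 2 ∂P =
      (1 + c ^ 2 * (Fintype.card ι * v)) ^ l * ∫ ω, ∑ i, x 0 ω i ^ 2 ∂P := by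
  induction l with
  | zero => rw [pow_zero, one_mul]
  | succ l ih =>
    have hl' := Nat.le_of_succ_le hl
    simp only [h.succ_eq ⟨l, hl⟩]
    rw [integral_sum_add_smul_mulVec_sq (h.isIsotropic_weight ⟨l, hl⟩) (h.indepFun ⟨l, hl⟩)
      (h.memLp hl'), ih hl', pow_succ' (1 + _), mul_assoc (1 + _)]

lemma integral_sum_branch_sq [IsFiniteMeasure P] (h : IsLinearResNet ℱ W c v x P) (l : Fin L) :
    ∫ ω, ∑ i, (Matrix.of (W l ω) *ᵥ x l ω) i ^ 2 ∂P =
      Fintype.card ι * v *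
        ((1 + c ^ 2 * (Fintype.card ι * v)) ^ (l : ℕ) * ∫ ω, ∑ i, x 0 ω i ^ 2 ∂P) := by
  rw [integral_sum_mulVec_sq (h.isIsotropic_weight l) (h.indepFun l) (h.memLp l.is_lt.le),
    h.integral_sum_sq l.is_lt.le]

end IsLinearResNet

theorem stmt_4_general [IsFiniteMeasure P] (h : IsLinearResNet ℱ W c v x P) (l : Fin L) :
    ∫ ω, ∑ i, x (l + 1) ω i ^ 2 ∂P =
        (1 + c ^ 2 * (Fintype.card ι * v)) ^ (l + 1 : ℕ) * ∫ ω, ∑ i, x 0 ω i ^ 2 ∂P ∧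
      ∫ ω, ∑ i, (Matrix.of (W l ω) *ᵥ x l ω) i ^ 2 ∂P =
        Fintype.card ι * v *
          ((1 + c ^ 2 * (Fintype.card ι * v)) ^ (l : ℕ) * ∫ ω, ∑ i, x 0 ω i ^ 2 ∂P) :=
  ⟨h.integral_sum_sq l.is_lt, h.integral_sum_branch_sq l⟩

end Network

section PastFiltration

variable {Ω E : Type*} {mΩ : MeasurableSpace Ω} [MeasurableSpace E] {P : Measure Ω} {L : ℕ}
  {W : Fin L → Ω → E}

/-- The filtration whose σ-algebra at time `l` is generated by `W k` for `k < l`. Unlike for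
`Filtration.natural`, the inequality is strict, so that independent `W` make `W l` independent of
the σ-algebra at time `l`. -/
def pastFiltration (W : Fin L → Ω → E) (hW : ∀ k, Measurable (W k)) : Filtration ℕ mΩ where
  seq l := ⨆ k ∈ {k : Fin L | (k : ℕ) < l}, MeasurableSpace.comap (W k) inferInstance
  mono' _ _ hlm := biSup_mono fun _ hk => lt_of_lt_of_le hk hlm
  le' _ := iSup₂_le fun k _ => (hW k).comap_le

lemma measurable_pastFiltration_succ (hW : ∀ k, Measurable (W k)) (l : Fin L) :
    Measurable[pastFiltration W hW (l + 1)] (W l) :=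
  measurable_iff_comap_le.2 <| le_iSup₂_of_le l (Nat.lt_succ_self l) le_rfl

lemma indep_comap_pastFiltration (hW : ∀ k, Measurable (W k)) (hindep : iIndepFun W P)
    (l : Fin L) :
    Indep (MeasurableSpace.comap (W l) inferInstance) (pastFiltration W hW l) P := by
  have hdisj : Disjoint {l} {k : Fin L | (k : ℕ) < l} := by simp
  have hsup := indep_iSup_of_disjoint (fun k => (hW k).comap_le) hindep hdisj
  rwa [_root_.iSup_singleton] at hsup

end PastFiltration

section Gaussian

variable {n L : ℕ}

instance : IsProbabilityMeasure (gaussMats n L) := by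
  unfold gaussMats
  infer_instance

lemma iIndepFun_eval_gaussMats :
    iIndepFun (fun (l : Fin L) (ω : Fin L → Fin n → Fin n → ℝ) => ω l) (gaussMats n L) :=
  iIndepFun_pi (X := fun _ => id) fun _ => aemeasurable_id

lemma measurePreserving_row_gaussMats (l : Fin L) (i : Fin n) :
    MeasurePreserving (fun ω => ω l i) (gaussMats n L)
      (Measure.pi fun _ => gaussianReal 0 (n : ℝ≥0)⁻¹) :=
  (measurePreserving_eval (fun _ : Fin n => Measure.pi fun _ : Fin n => gaussianReal 0 (n : ℝ≥0)⁻¹)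
    i).comp (measurePreserving_eval _ l)

lemma isIsotropic_row_gaussMats (l : Fin L) (i : Fin n) :
    IsIsotropic (fun ω => ω l i) (n : ℝ)⁻¹ (gaussMats n L) := by
  have isotropic_gaussian := isIsotropic_pi (κ := Fin n) (ν := gaussianReal 0 (n : ℝ≥0)⁻¹)
    (memLp_id_gaussianReal 2) integral_id_gaussianReal
  rw [variance_id_gaussianReal] at isotropic_gaussian
  exact isotropic_gaussian.comp_measurePreserving (measurePreserving_row_gaussMats l i)

lemma isLinearResNet_gaussMats {c : ℝ} {x0 : Fin n → ℝ}
    {x : ℕ → (Fin L → Fin n → Fin n → ℝ) → Fin n → ℝ} (hinit : ∀ ω, x 0 ω = x0)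
    (hrec : ∀ ω, ∀ l : ℕ, ∀ h : l < L,
      x (l + 1) ω = x l ω + c • Matrix.of (ω ⟨l, h⟩) *ᵥ x l ω) :
    IsLinearResNet (pastFiltration (fun l ω => ω l) fun l => measurable_pi_apply l)
      (fun l ω => ω l) c (n : ℝ)⁻¹ x (gaussMats n L) where
  measurable_input := by
    rw [funext hinit]
    exact measurable_const
  memLp_input i := by
    simp only [hinit]
    exact memLp_const _
  measurable_weight := measurable_pastFiltration_succ _
  indep_weight := indep_comap_pastFiltration _ iIndepFun_eval_gaussMats
  isIsotropic_weight := isIsotropic_row_gaussMats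
  succ_eq l ω := hrec ω l l.is_lt

end Gaussian

/-- For the linear residual network `x^l = x^{l−1} + L^{−α} W^l x^{l−1}`
(`h^l = W^l x^{l−1}`) at initialization, for every `1 ≤ l ≤ L`:
`E‖x^l‖² = (1 + L^{−2α})^l·‖x⁰‖²` and `E‖h^l‖² = (1 + L^{−2α})^{l−1}·‖x⁰‖²`. -/
theorem stmt_4 (n L : ℕ) (hn : 1 ≤ n) (hL : 1 ≤ L) (α : ℝ)
    (x0 : Fin n → ℝ) (hx0 : x0 ≠ 0)
    (x : ℕ → (Fin L → Fin n → Fin n → ℝ) → Fin n → ℝ)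
    (hinit : ∀ ω, x 0 ω = x0)
    (hrec : ∀ ω, ∀ l : ℕ, ∀ h : l < L,
      x (l + 1) ω = x l ω +
        ((L : ℝ) ^ (-α)) • Matrix.mulVec (Matrix.of (ω ⟨l, h⟩)) (x l ω)) :
    ∀ l : ℕ, ∀ hl1 : 1 ≤ l, ∀ hl2 : l ≤ L,
      (∫ ω, (∑ i, (x l ω i) ^ 2) ∂(gaussMats n L)) =
        (1 + (L : ℝ) ^ (-(2 * α))) ^ l * ∑ i, (x0 i) ^ 2 ∧
      (∫ ω, (∑ i, (Matrix.mulVec (Matrix.of (ω ⟨l - 1, by omega⟩)) (x (l - 1) ω) i) ^ 2)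
          ∂(gaussMats n L)) =
        (1 + (L : ℝ) ^ (-(2 * α))) ^ (l - 1) * ∑ i, (x0 i) ^ 2 := by
  have sq_multiplier : ((L : ℝ) ^ (-α)) ^ 2 = (L : ℝ) ^ (-(2 * α)) := by
    rw [← Real.rpow_mul_natCast L.cast_nonneg, Nat.cast_ofNat, neg_mul, mul_comm]
  have width_mul_variance : (n : ℝ) * (n : ℝ)⁻¹ = 1 := mul_inv_cancel₀ (by positivity)
  rintro (_ | l) hl1 hl2
  · omega
  · simpa only [Fintype.card_fin, width_mul_variance, mul_one, one_mul, sq_multiplier, hinit,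
      add_tsub_cancel_right, integral_const, probReal_univ, one_smul] using
      stmt_4_general (isLinearResNet_gaussMats hinit hrec) ⟨l, hl2⟩
end

section
/- Linear residual network at initialization: fix integers n, L ≥ 1, a real α, and a nonzero vector x⁰ ∈ ℝⁿ; let W¹, …, W^L be independent n×n random matrices with i.i.d. N(0, 1/n) entries, and define x^l := x^{l−1} + L^{−α} W^l x^{l−1} for l = 1, …, L. Then sup over positive integers L of E‖x^L‖² is finite if and only if α ≥ 1/2. More precisely, E‖x^L‖² = (1 + L^{−2α})^L‖x⁰‖², which converges to ‖x⁰‖² as L → ∞ if α > 1/2, converges to e·‖x⁰‖² if α = 1/2, and diverges to +∞ if α < 1/2. -/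
open MeasureTheory ProbabilityTheory Finset Filter Topology
open scoped NNReal

/-- The forward pass of the linear residual network at initialization:
`x⁰` is the input and `x^l = x^{l−1} + L^{−α} W^l x^{l−1}` for `1 ≤ l ≤ L`. -/
noncomputable def resX (n : ℕ) (α : ℝ) (x0 : Fin n → ℝ) (L : ℕ)
    (ω : Fin L → Fin n → Fin n → ℝ) : ℕ → Fin n → ℝ
  | 0 => x0
  | l + 1 =>
    resX n α x0 L ω l +
      if h : l < L then
        ((L : ℝ) ^ (-α)) • Matrix.mulVec (Matrix.of (ω ⟨l, h⟩)) (resX n α x0 L ω l)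
      else 0

/-!
Resampling the single matrix `W^{l+1}` leaves the joint law unchanged and does not affect `x^l`.
Given `x^l`, the coordinates of `W^{l+1} x^l` are centred with variance `‖x^l‖² / n`, so the mean
square of `x^{l+1}` is `1 + L^{-2α}` times that of `x^l`. The three regimes then follow from
`L · L^{-2α} = L^{1-2α}`, which tends to `0`, `1` or `∞`.
-/

section PiMeasure

variable {ι : Type*} [Fintype ι] [DecidableEq ι] {X : ι → Type*} [∀ i, MeasurableSpace (X i)]
  {μ : ∀ i, Measure (X i)} [∀ i, SigmaFinite (μ i)]

lemma measurePreserving_update_pi (i : ι) [IsProbabilityMeasure (μ i)] :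
    MeasurePreserving (fun p : (∀ j, X j) × X i => Function.update p.1 i p.2)
      ((Measure.pi μ).prod (μ i)) (Measure.pi μ) where
  measurable := by fun_prop
  map_eq := by
    refine (Measure.pi_eq fun s hs => ?_).symm
    have hpre : (fun p : (∀ j, X j) × X i => Function.update p.1 i p.2) ⁻¹' Set.univ.pi s =
        Set.univ.pi (Function.update s i Set.univ) ×ˢ s i := by
      ext p
      simp only [Set.mem_preimage, Set.mem_prod, Set.mem_univ_pi]
      rw [Function.forall_update_iff p.1 fun j y => y ∈ s j,
        Function.forall_update_iff s fun j t => p.1 j ∈ t]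
      simp [and_comm]
    rw [Measure.map_apply (by fun_prop) (MeasurableSet.univ_pi hs), hpre, Measure.prod_prod,
      Measure.pi_pi, ← mul_prod_erase univ (fun j => μ j (s j)) (mem_univ i),
      ← mul_prod_erase univ _ (mem_univ i), Function.update_self, measure_univ, one_mul, mul_comm]
    congr 1
    exact prod_congr rfl fun j hj => by rw [Function.update_of_ne (ne_of_mem_erase hj)]

lemma integrable_pi_of_update {f : (∀ j, X j) → ℝ} (hf : AEStronglyMeasurable f (Measure.pi μ))
    (hf_nonneg : 0 ≤ f) (i : ι) [IsProbabilityMeasure (μ i)]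
    (hf_fiber : ∀ x, Integrable (fun y => f (Function.update x i y)) (μ i))
    (hf_marginal : Integrable (fun x => ∫ y, f (Function.update x i y) ∂μ i) (Measure.pi μ)) :
    Integrable f (Measure.pi μ) := by
  have hmp := measurePreserving_update_pi (μ := μ) i
  rw [← hmp.integrable_comp hf, integrable_prod_iff (hf.comp_measurePreserving hmp)]
  refine ⟨ae_of_all _ hf_fiber, ?_⟩
  simpa only [Function.comp_apply, Real.norm_of_nonneg (hf_nonneg _)] using hf_marginal

lemma integral_integral_update_pi {E : Type*} [NormedAddCommGroup E] [NormedSpace ℝ E]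
    {f : (∀ j, X j) → E} (hf : Integrable f (Measure.pi μ)) (i : ι)
    [IsProbabilityMeasure (μ i)] :
    ∫ x, ∫ y, f (Function.update x i y) ∂μ i ∂Measure.pi μ = ∫ x, f x ∂Measure.pi μ := by
  have hmp := measurePreserving_update_pi (μ := μ) i
  rw [← integral_prod (fun p : (∀ j, X j) × X i => f (Function.update p.1 i p.2))
    (hmp.integrable_comp_of_integrable hf)]
  have hf_map := hf.aestronglyMeasurable
  rw [← hmp.map_eq] at hf_map
  rw [← integral_map hmp.aemeasurable hf_map, hmp.map_eq]

end PiMeasure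

section IIDEntries

lemma integral_sq_const_add_const_mul {Ω : Type*} {mΩ : MeasurableSpace Ω} {μ : Measure Ω}
    [IsProbabilityMeasure μ] {Y : Ω → ℝ} (hY : MemLp Y 2 μ) (hY_mean : μ[Y] = 0) (a c : ℝ) :
    ∫ ω, (a + c * Y ω) ^ 2 ∂μ = a ^ 2 + c ^ 2 * Var[Y; μ] := by
  have hmean : ∫ ω, (a + c * Y ω) ∂μ = a := by
    rw [integral_add (integrable_const a) ((hY.integrable one_le_two).const_mul c),
      integral_const_mul, hY_mean]
    simp
  have hvar := variance_eq_sub ((memLp_const a).add (hY.const_mul c))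
  simp only [Pi.add_def, Pi.pow_apply, hmean] at hvar
  rw [variance_const_add (hY.const_mul c).aestronglyMeasurable, variance_const_mul] at hvar
  linarith

variable {ι : Type*} [Fintype ι] {ν : Measure ℝ} [IsProbabilityMeasure ν]

lemma memLp_dotProduct_pi {p : ENNReal} (hν : MemLp id p ν) (x : ι → ℝ) :
    MemLp (fun w => w ⬝ᵥ x) p (Measure.pi fun _ : ι => ν) :=
  memLp_finsetSum _ fun i _ =>
    (hν.comp_measurePreserving (measurePreserving_eval (fun _ : ι => ν) i)).mul_const (x i)

lemma integral_dotProduct_pi (hν : Integrable id ν) (x : ι → ℝ) :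
    ∫ w, w ⬝ᵥ x ∂(Measure.pi fun _ : ι => ν) = (∫ t, t ∂ν) * ∑ i, x i := by
  simp only [dotProduct]
  rw [integral_finsetSum _ fun i _ => (integrable_eval hν).mul_const (x i), mul_sum]
  exact sum_congr rfl fun i _ => by rw [integral_mul_const, integral_eval]

lemma variance_dotProduct_pi (hν : MemLp id 2 ν) (x : ι → ℝ) :
    Var[fun w => w ⬝ᵥ x; Measure.pi fun _ : ι => ν] = Var[id; ν] * ∑ i, x i ^ 2 := by
  have hsum : (fun w : ι → ℝ => w ⬝ᵥ x) = ∑ i, fun w => id (w i) * x i := by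
    ext w
    simp [dotProduct]
  rw [hsum, variance_sum_pi (fun i => hν.mul_const (x i)), mul_sum]
  exact sum_congr rfl fun i _ => variance_mul_const (x i) id ν

lemma memLp_residual_apply {p : ENNReal} (hν : MemLp id p ν) (c : ℝ) (x : ι → ℝ) (i : ι) :
    MemLp (fun W : ι → ι → ℝ => (x + c • Matrix.mulVec (Matrix.of W) x) i) p
      (Measure.pi fun _ => Measure.pi fun _ => ν) :=
  (memLp_const (x i)).add <| ((memLp_dotProduct_pi hν x).comp_measurePreserving
    (measurePreserving_eval (fun _ : ι => Measure.pi fun _ => ν) i)).const_mul c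

lemma integral_sq_residual_apply (hν : MemLp id 2 ν) (hν_mean : ∫ t, t ∂ν = 0) (c : ℝ)
    (x : ι → ℝ) (i : ι) :
    ∫ W : ι → ι → ℝ, ((x + c • Matrix.mulVec (Matrix.of W) x) i) ^ 2
        ∂(Measure.pi fun _ => Measure.pi fun _ => ν) =
      x i ^ 2 + c ^ 2 * (Var[id; ν] * ∑ j, x j ^ 2) := by
  have hrow := memLp_dotProduct_pi hν x
  have hrow_mean : ∫ w, w ⬝ᵥ x ∂(Measure.pi fun _ : ι => ν) = 0 := by
    rw [integral_dotProduct_pi (hν.integrable one_le_two), hν_mean, zero_mul]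
  rw [← variance_dotProduct_pi hν x, ← integral_sq_const_add_const_mul hrow hrow_mean]
  exact integral_comp_eval (μ := fun _ : ι => Measure.pi fun _ => ν) (i := i)
    (f := fun w => (x i + c * (w ⬝ᵥ x)) ^ 2)
    ((memLp_const (x i)).add (hrow.const_mul c)).integrable_sq.aestronglyMeasurable

lemma integral_sum_sq_residual (hν : MemLp id 2 ν) (hν_mean : ∫ t, t ∂ν = 0) (c : ℝ)
    (x : ι → ℝ) :
    ∫ W : ι → ι → ℝ, ∑ i, ((x + c • Matrix.mulVec (Matrix.of W) x) i) ^ 2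
        ∂(Measure.pi fun _ => Measure.pi fun _ => ν) =
      (1 + c ^ 2 * (Fintype.card ι * Var[id; ν])) * ∑ i, x i ^ 2 := by
  rw [integral_finsetSum _ fun i _ => (memLp_residual_apply hν c x i).integrable_sq]
  simp only [integral_sq_residual_apply hν hν_mean, sum_add_distrib, sum_const, card_univ,
    nsmul_eq_mul]
  ring

end IIDEntries

/-- The joint law of `L` independent `n × n` random matrices with i.i.d. entries of law `ν`,
realized on the same space as `gaussMats`, which is the case `ν = gaussianReal 0 n⁻¹`. -/
noncomputable def iidMats (ν : Measure ℝ) (n L : ℕ) : Measure (Fin L → Fin n → Fin n → ℝ) :=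
  Measure.pi fun _ => Measure.pi fun _ => Measure.pi fun _ => ν

instance (ν : Measure ℝ) [IsProbabilityMeasure ν] (n L : ℕ) :
    IsProbabilityMeasure (iidMats ν n L) := by
  unfold iidMats
  infer_instance

namespace resX

variable {n L l : ℕ} {α : ℝ} {x0 : Fin n → ℝ}

lemma succ_of_lt (hl : l < L) (ω : Fin L → Fin n → Fin n → ℝ) :
    resX n α x0 L ω (l + 1) = resX n α x0 L ω l +
      (L : ℝ) ^ (-α) • Matrix.mulVec (Matrix.of (ω ⟨l, hl⟩)) (resX n α x0 L ω l) := by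
  rw [resX, dif_pos hl]

lemma update_of_le {k : Fin L} (hlk : l ≤ k) (ω : Fin L → Fin n → Fin n → ℝ)
    (W : Fin n → Fin n → ℝ) :
    resX n α x0 L (Function.update ω k W) l = resX n α x0 L ω l := by
  induction l with
  | zero => rfl
  | succ l ih =>
    have hne : (⟨l, by lia⟩ : Fin L) ≠ k := Fin.ne_of_val_ne (by simp; lia)
    rw [succ_of_lt (by lia), succ_of_lt (by lia), ih (by lia), Function.update_of_ne hne]

lemma succ_update (hl : l < L) (ω : Fin L → Fin n → Fin n → ℝ) (W : Fin n → Fin n → ℝ) :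
    resX n α x0 L (Function.update ω ⟨l, hl⟩ W) (l + 1) = resX n α x0 L ω l +
      (L : ℝ) ^ (-α) • Matrix.mulVec (Matrix.of W) (resX n α x0 L ω l) := by
  rw [succ_of_lt hl, update_of_le le_rfl, Function.update_self]

protected lemma continuous (hl : l ≤ L) : Continuous fun ω => resX n α x0 L ω l := by
  induction l with
  | zero => exact continuous_const
  | succ l ih =>
    simp only [succ_of_lt (Nat.lt_of_succ_le hl)]
    have hx := ih (by lia)
    fun_prop

variable {ν : Measure ℝ} [IsProbabilityMeasure ν]

lemma integral_sum_sq_succ_update (hν : MemLp id 2 ν) (hν_mean : ∫ t, t ∂ν = 0) (hl : l < L)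
    (ω : Fin L → Fin n → Fin n → ℝ) :
    ∫ W, ∑ i, (resX n α x0 L (Function.update ω ⟨l, hl⟩ W) (l + 1) i) ^ 2
        ∂(Measure.pi fun _ => Measure.pi fun _ => ν) =
      (1 + ((L : ℝ) ^ (-α)) ^ 2 * (n * Var[id; ν])) * ∑ i, (resX n α x0 L ω l i) ^ 2 := by
  simp only [succ_update, integral_sum_sq_residual hν hν_mean, Fintype.card_fin]

lemma integrable_sum_sq (hν : MemLp id 2 ν) (hν_mean : ∫ t, t ∂ν = 0) (hl : l ≤ L) :
    Integrable (fun ω => ∑ i, (resX n α x0 L ω l i) ^ 2) (iidMats ν n L) := by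
  have hcont {l : ℕ} (hl : l ≤ L) : Continuous fun ω => ∑ i, (resX n α x0 L ω l i) ^ 2 :=
    continuous_finsetSum _ fun i _ => (continuous_pi_iff.1 (resX.continuous hl) i).pow 2
  induction l with
  | zero => exact integrable_const (∑ i, x0 i ^ 2)
  | succ l ih =>
    refine integrable_pi_of_update (hcont hl).aestronglyMeasurable
      (fun ω => sum_nonneg fun i _ => sq_nonneg _) ⟨l, hl⟩ (fun ω => ?_) ?_
    · simp only [succ_update]
      exact integrable_finsetSum _ fun i _ => (memLp_residual_apply hν _ _ i).integrable_sq
    · simp only [integral_sum_sq_succ_update hν hν_mean]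
      exact (ih (by lia)).const_mul _

lemma integral_sum_sq (hν : MemLp id 2 ν) (hν_mean : ∫ t, t ∂ν = 0) (hl : l ≤ L) :
    ∫ ω, ∑ i, (resX n α x0 L ω l i) ^ 2 ∂(iidMats ν n L) =
      (1 + ((L : ℝ) ^ (-α)) ^ 2 * (n * Var[id; ν])) ^ l * ∑ i, x0 i ^ 2 := by
  induction l with
  | zero => simp [resX, iidMats]
  | succ l ih =>
    calc ∫ ω, ∑ i, (resX n α x0 L ω (l + 1) i) ^ 2 ∂(iidMats ν n L)
      _ = ∫ ω, ∫ W, ∑ i, (resX n α x0 L (Function.update ω ⟨l, hl⟩ W) (l + 1) i) ^ 2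
            ∂(Measure.pi fun _ => Measure.pi fun _ => ν) ∂(iidMats ν n L) :=
        (integral_integral_update_pi (integrable_sum_sq hν hν_mean hl) _).symm
      _ = (1 + ((L : ℝ) ^ (-α)) ^ 2 * (n * Var[id; ν])) *
            ∫ ω, ∑ i, (resX n α x0 L ω l i) ^ 2 ∂(iidMats ν n L) := by
        simp only [integral_sum_sq_succ_update hν hν_mean, integral_const_mul]
      _ = _ := by rw [ih (by lia), ← mul_assoc, ← pow_succ']

lemma integral_sum_sq_last (hν : MemLp id 2 ν) (hν_mean : ∫ t, t ∂ν = 0)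
    (hν_var : n * Var[id; ν] = 1) :
    ∫ ω, ∑ i, (resX n α x0 L ω L i) ^ 2 ∂(iidMats ν n L) =
      (1 + (L : ℝ) ^ (-(2 * α))) ^ L * ∑ i, x0 i ^ 2 := by
  have hsq : ((L : ℝ) ^ (-α)) ^ 2 = (L : ℝ) ^ (-(2 * α)) := by
    rw [← Real.rpow_mul_natCast L.cast_nonneg]
    ring_nf
  rw [integral_sum_sq hν hν_mean le_rfl, hν_var, mul_one, hsq]

end resX

section DepthLimit

lemma tendsto_one_add_pow_atTop {g : ℕ → ℝ} (hg : ∀ᶠ n in atTop, -2 ≤ g n)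
    (h : Tendsto (fun n : ℕ => n * g n) atTop atTop) :
    Tendsto (fun n => (1 + g n) ^ n) atTop atTop := by
  refine tendsto_atTop_mono' _ ?_ (tendsto_atTop_add_const_left _ 1 h)
  filter_upwards [hg] with n hn using one_add_mul_le_pow hn n

variable {s : ℝ}

lemma natCast_mul_rpow_neg_eventuallyEq :
    (fun n : ℕ => (n : ℝ) * (n : ℝ) ^ (-s)) =ᶠ[atTop] fun n => (n : ℝ) ^ (1 - s) := by
  filter_upwards [eventually_gt_atTop 0] with n hn
  rw [sub_eq_add_neg, Real.rpow_add (Nat.cast_pos.2 hn), Real.rpow_one]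

lemma tendsto_one_add_rpow_neg_pow_nhds_one (hs : 1 < s) :
    Tendsto (fun n : ℕ => (1 + (n : ℝ) ^ (-s)) ^ n) atTop (𝓝 1) := by
  have hzero : Tendsto (fun n : ℕ => (n : ℝ) ^ (1 - s)) atTop (𝓝 0) := by
    simpa only [neg_sub, Function.comp_def] using
      (tendsto_rpow_neg_atTop (sub_pos.2 hs)).comp tendsto_natCast_atTop_atTop
  simpa only [Real.exp_zero] using Real.tendsto_one_add_pow_exp_of_tendsto
    (hzero.congr' natCast_mul_rpow_neg_eventuallyEq.symm)

lemma tendsto_one_add_rpow_neg_one_pow_exp :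
    Tendsto (fun n : ℕ => (1 + (n : ℝ) ^ (-1 : ℝ)) ^ n) atTop (𝓝 (Real.exp 1)) := by
  simpa only [Real.rpow_neg_one, one_div] using Real.tendsto_one_add_div_pow_exp 1

lemma tendsto_one_add_rpow_neg_pow_atTop (hs : s < 1) :
    Tendsto (fun n : ℕ => (1 + (n : ℝ) ^ (-s)) ^ n) atTop atTop := by
  refine tendsto_one_add_pow_atTop (Eventually.of_forall fun n => ?_)
    (Tendsto.congr' natCast_mul_rpow_neg_eventuallyEq.symm ?_)
  · linarith [Real.rpow_nonneg n.cast_nonneg (-s)]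
  · exact (tendsto_rpow_atTop (sub_pos.2 hs)).comp tendsto_natCast_atTop_atTop

lemma exists_forall_one_add_rpow_neg_pow_mul_le_iff {a : ℝ} (ha : 0 < a) :
    (∃ M : ℝ, ∀ n : ℕ, 1 ≤ n → (1 + (n : ℝ) ^ (-s)) ^ n * a ≤ M) ↔ 1 ≤ s := by
  refine ⟨fun ⟨M, hM⟩ => ?_, fun hs => ?_⟩
  · by_contra! hs
    have hlarge := ((tendsto_one_add_rpow_neg_pow_atTop hs).atTop_mul_const
      ha).eventually_gt_atTop M
    obtain ⟨n, hn, hMn⟩ := ((eventually_ge_atTop 1).and hlarge).exists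
    exact (hM n hn).not_gt hMn
  · have hconv : ∃ b, Tendsto (fun n : ℕ => (1 + (n : ℝ) ^ (-s)) ^ n) atTop (𝓝 b) := by
      rcases hs.eq_or_lt with rfl | hs
      · exact ⟨_, tendsto_one_add_rpow_neg_one_pow_exp⟩
      · exact ⟨_, tendsto_one_add_rpow_neg_pow_nhds_one hs⟩
    obtain ⟨b, hb⟩ := hconv
    obtain ⟨M, hM⟩ := (hb.mul_const a).bddAbove_range
    exact ⟨M, fun n _ => hM ⟨n, rfl⟩⟩

end DepthLimit

theorem stmt_5_general {ν : Measure ℝ} [IsProbabilityMeasure ν] (hν : MemLp id 2 ν)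
    (hν_mean : ∫ t, t ∂ν = 0) {n : ℕ} (hν_var : n * Var[id; ν] = 1) (α : ℝ) {x0 : Fin n → ℝ}
    (hx0 : x0 ≠ 0) :
    ((∃ M : ℝ, ∀ L : ℕ, 1 ≤ L →
        (∫ ω, (∑ i, (resX n α x0 L ω L i) ^ 2) ∂(iidMats ν n L)) ≤ M) ↔ 1 / 2 ≤ α) ∧
    (∀ L : ℕ, 1 ≤ L →
      (∫ ω, (∑ i, (resX n α x0 L ω L i) ^ 2) ∂(iidMats ν n L)) =
        (1 + (L : ℝ) ^ (-(2 * α))) ^ L * ∑ i, (x0 i) ^ 2) ∧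
    (1 / 2 < α →
      Tendsto (fun L : ℕ => ∫ ω, (∑ i, (resX n α x0 L ω L i) ^ 2) ∂(iidMats ν n L))
        atTop (𝓝 (∑ i, (x0 i) ^ 2))) ∧
    (α = 1 / 2 →
      Tendsto (fun L : ℕ => ∫ ω, (∑ i, (resX n α x0 L ω L i) ^ 2) ∂(iidMats ν n L))
        atTop (𝓝 (Real.exp 1 * ∑ i, (x0 i) ^ 2))) ∧
    (α < 1 / 2 →
      Tendsto (fun L : ℕ => ∫ ω, (∑ i, (resX n α x0 L ω L i) ^ 2) ∂(iidMats ν n L))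
        atTop atTop) := by
  have hpos : 0 < ∑ i, x0 i ^ 2 := by
    obtain ⟨i, hi⟩ := Function.ne_iff.1 hx0
    exact sum_pos' (fun _ _ => sq_nonneg _) ⟨i, mem_univ i, sq_pos_of_ne_zero hi⟩
  simp only [resX.integral_sum_sq_last hν hν_mean hν_var]
  refine ⟨?_, fun _ _ => trivial, fun hα => ?_, ?_, fun hα => ?_⟩
  · rw [exists_forall_one_add_rpow_neg_pow_mul_le_iff hpos, div_le_iff₀' two_pos]
  · simpa only [one_mul] using
      (tendsto_one_add_rpow_neg_pow_nhds_one (by linarith : 1 < 2 * α)).mul_const (∑ i, x0 i ^ 2)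
  · rintro rfl
    rw [mul_one_div_cancel two_ne_zero]
    exact tendsto_one_add_rpow_neg_one_pow_exp.mul_const _
  · exact (tendsto_one_add_rpow_neg_pow_atTop (by linarith)).atTop_mul_const hpos

/-- `E‖x^L‖² = (1 + L^{−2α})^L‖x⁰‖²`; the supremum over depths `L ≥ 1`
is finite iff `α ≥ 1/2`; the limit is `‖x⁰‖²` if `α > 1/2`, `e·‖x⁰‖²` if `α = 1/2`,
and `+∞` if `α < 1/2`. -/
theorem stmt_5 (n : ℕ) (hn : 1 ≤ n) (α : ℝ) (x0 : Fin n → ℝ) (hx0 : x0 ≠ 0) :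
    ((∃ M : ℝ, ∀ L : ℕ, 1 ≤ L →
        (∫ ω, (∑ i, (resX n α x0 L ω L i) ^ 2) ∂(gaussMats n L)) ≤ M) ↔ 1 / 2 ≤ α) ∧
    (∀ L : ℕ, 1 ≤ L →
      (∫ ω, (∑ i, (resX n α x0 L ω L i) ^ 2) ∂(gaussMats n L)) =
        (1 + (L : ℝ) ^ (-(2 * α))) ^ L * ∑ i, (x0 i) ^ 2) ∧
    (1 / 2 < α →
      Tendsto (fun L : ℕ => ∫ ω, (∑ i, (resX n α x0 L ω L i) ^ 2) ∂(gaussMats n L))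
        atTop (𝓝 (∑ i, (x0 i) ^ 2))) ∧
    (α = 1 / 2 →
      Tendsto (fun L : ℕ => ∫ ω, (∑ i, (resX n α x0 L ω L i) ^ 2) ∂(gaussMats n L))
        atTop (𝓝 (Real.exp 1 * ∑ i, (x0 i) ^ 2))) ∧
    (α < 1 / 2 →
      Tendsto (fun L : ℕ => ∫ ω, (∑ i, (resX n α x0 L ω L i) ^ 2) ∂(gaussMats n L))
        atTop atTop) := by
  exact stmt_5_general (memLp_id_gaussianReal 2) integral_id_gaussianReal
    (by simp [variance_id_gaussianReal, Nat.one_le_iff_ne_zero.1 hn]) α hx0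
end

section
/- Backward pass of a linear residual network at initialization: fix integers n, L ≥ 1, a real α, and a nonzero vector v ∈ ℝⁿ; let W¹, …, W^L be independent n×n random matrices with i.i.d. N(0, 1/n) entries, and define d^L := v and d^{l−1} := d^l + L^{−α}(W^l)ᵀ d^l for l = L, L−1, …, 1. Then for every 0 ≤ l ≤ L, E‖d^l‖² = (1 + L^{−2α})^{L−l} · ‖v‖². In particular sup over L of E‖d^0‖² is finite if and only if α ≥ 1/2. -/
open MeasureTheory ProbabilityTheory Finset
open scoped NNReal

/-- The backward pass of the linear residual network at initialization, indexed by the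
number of steps from the top: `resD … j = d^{L−j}`, where `d^L = v` and
`d^{l−1} = d^l + L^{−α} (W^l)ᵀ d^l`.  (So step `j → j+1` uses `W^{L−j}`, whose 0-based
index is `L − 1 − j`.) -/
noncomputable def resD (n : ℕ) (α : ℝ) (v : Fin n → ℝ) (L : ℕ)
    (ω : Fin L → Fin n → Fin n → ℝ) : ℕ → Fin n → ℝ
  | 0 => v
  | j + 1 =>
    resD n α v L ω j +
      if h : j < L then
        ((L : ℝ) ^ (-α)) •
          Matrix.mulVec (Matrix.of (ω ⟨L - 1 - j, by omega⟩)).transpose (resD n α v L ω j)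
      else 0

/-!
Conditionally on `W^{l+1}, …, W^L`, the vector `x = d^l` is a constant and each coordinate of
`(W^l)ᵀ x` is centered with variance `‖x‖² / n`, so the `n` coordinates of `d^{l-1}` have second
moments summing to `(1 + L^{-2α}) ‖x‖²`. Conditioning is realized by resampling the single
coordinate `W^l` of the product measure, on which `d^l` does not depend. The recursion is run for
the Lebesgue integral, which needs no integrability of `‖d^l‖²`.

The dichotomy at `α = 1/2` comes from `L^{1-s} ≤ (1 + L^{-s})^L ≤ exp (L^{1-s})` with `s = 2α`.
-/

open scoped ENNReal Matrix

section Resampling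

variable {ι : Type*} [Fintype ι] [DecidableEq ι] {X : ι → Type*} [∀ i, MeasurableSpace (X i)]
  {μ : ∀ i, Measure (X i)} [∀ i, IsProbabilityMeasure (μ i)]

lemma lintegral_lintegral_update_pi {f : (∀ i, X i) → ℝ≥0∞} (hf : Measurable f) (i : ι) :
    ∫⁻ x, ∫⁻ y, f (Function.update x i y) ∂μ i ∂Measure.pi μ = ∫⁻ x, f x ∂Measure.pi μ := by
  obtain ⟨x₀⟩ := (Measure.pi μ).nonempty_of_neZero
  have inner_measurable : Measurable fun x => ∫⁻ y, f (Function.update x i y) ∂μ i := by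
    simpa only [lmarginal_singleton] using hf.lmarginal μ (s := {i})
  rw [lintegral_eq_lmarginal_univ x₀, lintegral_eq_lmarginal_univ x₀,
    lmarginal_erase' _ inner_measurable (mem_univ i), lmarginal_erase' _ hf (mem_univ i)]
  simp only [Function.update_idem, lintegral_const, measure_univ, mul_one]

end Resampling

section RandomMatrix

lemma transpose_mulVec_of_apply {ι κ : Type*} [Fintype ι] (W : ι → κ → ℝ)
    (x : ι → ℝ) (i : κ) :
    ((Matrix.of W)ᵀ *ᵥ x) i = ∑ a, x a * W a i := by
  simp only [Matrix.mulVec, dotProduct, Matrix.transpose_apply, Matrix.of_apply, mul_comm]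

/-- The law of a random `ι × κ` matrix whose entries are independent with common law `ν`. -/
noncomputable abbrev iidMatrix (ι κ : Type*) [Fintype ι] [Fintype κ] (ν : Measure ℝ) :
    Measure (ι → κ → ℝ) :=
  Measure.pi fun _ => Measure.pi fun _ => ν

variable {ι κ : Type*} [Fintype ι] [Fintype κ] {ν : Measure ℝ} [IsProbabilityMeasure ν]

lemma measurePreserving_iidMatrix_entry (a : ι) (i : κ) :
    MeasurePreserving (fun W : ι → κ → ℝ => W a i) (iidMatrix ι κ ν) ν :=
  (measurePreserving_eval (fun _ => ν) i).comp (measurePreserving_eval (fun _ => Measure.pi _) a)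

lemma memLp_iidMatrix_transpose_mulVec (hν : MemLp id 2 ν) (x : ι → ℝ) (i : κ) :
    MemLp (fun W => ((Matrix.of W)ᵀ *ᵥ x) i) 2 (iidMatrix ι κ ν) := by
  simp only [transpose_mulVec_of_apply]
  exact memLp_finsetSum _ fun a _ =>
    (hν.comp_measurePreserving (measurePreserving_iidMatrix_entry a i)).const_mul (x a)

lemma integral_iidMatrix_transpose_mulVec (hν : Integrable id ν) (x : ι → ℝ) (i : κ) :
    ∫ W, ((Matrix.of W)ᵀ *ᵥ x) i ∂iidMatrix ι κ ν = (∑ a, x a) * ∫ t, t ∂ν := by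
  have entry_integrable (a : ι) : Integrable (fun W => W a i) (iidMatrix ι κ ν) :=
    (measurePreserving_iidMatrix_entry a i).integrable_comp_of_integrable hν
  have entry_mean (a : ι) : ∫ W, W a i ∂iidMatrix ι κ ν = ∫ t, t ∂ν :=
    (integral_comp_eval (μ := fun _ => Measure.pi fun _ => ν) (f := fun w : κ → ℝ => w i)
      (measurable_pi_apply i).aestronglyMeasurable).trans integral_eval
  simp only [transpose_mulVec_of_apply]
  rw [integral_finsetSum _ fun a _ => (entry_integrable a).const_mul (x a), sum_mul]
  simp only [integral_const_mul, entry_mean]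

lemma variance_iidMatrix_transpose_mulVec (hν : MemLp id 2 ν) (x : ι → ℝ) (i : κ) :
    Var[fun W => ((Matrix.of W)ᵀ *ᵥ x) i; iidMatrix ι κ ν] = (∑ a, x a ^ 2) * Var[id; ν] := by
  have row_entry := measurePreserving_eval (fun _ : κ => ν) i
  have entry_variance : Var[fun w : κ → ℝ => w i; Measure.pi fun _ => ν] = Var[id; ν] :=
    row_entry.variance_fun_comp aemeasurable_id
  have row_memLp (a : ι) : MemLp (fun w : κ → ℝ => x a * w i) 2 (Measure.pi fun _ => ν) :=
    (hν.comp_measurePreserving row_entry).const_mul (x a)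
  calc Var[fun W => ((Matrix.of W)ᵀ *ᵥ x) i; iidMatrix ι κ ν]
      = Var[∑ a, fun W => x a * W a i; iidMatrix ι κ ν] := by
        congr 1 with W
        simp only [transpose_mulVec_of_apply, Finset.sum_apply]
    _ = ∑ a, Var[fun w : κ → ℝ => x a * w i; Measure.pi fun _ => ν] :=
        variance_sum_pi (X := fun a (w : κ → ℝ) => x a * w i) row_memLp
    _ = (∑ a, x a ^ 2) * Var[id; ν] := by
        simp only [variance_const_mul, entry_variance, sum_mul]

lemma integral_sq_add_mul_of_integral_eq_zero {Ω : Type*} [MeasurableSpace Ω] {μ : Measure Ω}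
    [IsProbabilityMeasure μ] {X : Ω → ℝ} (hX : MemLp X 2 μ) (hX₀ : ∫ ω, X ω ∂μ = 0) (y c : ℝ) :
    ∫ ω, (y + c * X ω) ^ 2 ∂μ = y ^ 2 + c ^ 2 * Var[X; μ] := by
  have hcX : MemLp (fun ω => c * X ω) 2 μ := hX.const_mul c
  have mean : ∫ ω, (y + c * X ω) ∂μ = y := by
    rw [integral_add (integrable_const y) (hcX.integrable one_le_two), integral_const_mul, hX₀]
    simp
  have var := variance_eq_sub ((memLp_const y).add hcX)
  simp only [Pi.add_def, Pi.pow_apply] at var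
  rw [mean, variance_const_add hcX.1, variance_const_mul] at var
  linarith

lemma lintegral_iidMatrix_sum_sq_add_smul_transpose_mulVec (hν : MemLp id 2 ν)
    (hν₀ : ∫ t, t ∂ν = 0) (c : ℝ) (x : ι → ℝ) (y : κ → ℝ) :
    ∫⁻ W, ENNReal.ofReal (∑ i, (y + c • (Matrix.of W)ᵀ *ᵥ x) i ^ 2) ∂iidMatrix ι κ ν =
      ENNReal.ofReal (∑ i, y i ^ 2 + c ^ 2 * (Fintype.card κ * Var[id; ν]) * ∑ a, x a ^ 2) := by
  have hM := memLp_iidMatrix_transpose_mulVec (κ := κ) hν x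
  have coord_integrable (i : κ) :
      Integrable (fun W => (y i + c * ((Matrix.of W)ᵀ *ᵥ x) i) ^ 2) (iidMatrix ι κ ν) :=
    ((memLp_const (y i)).add ((hM i).const_mul c)).integrable_sq
  have coord_mean (i : κ) : ∫ W, ((Matrix.of W)ᵀ *ᵥ x) i ∂iidMatrix ι κ ν = 0 := by
    rw [integral_iidMatrix_transpose_mulVec (hν.integrable one_le_two), hν₀, mul_zero]
  simp only [Pi.add_apply, Pi.smul_apply, smul_eq_mul]
  rw [← ofReal_integral_eq_lintegral_ofReal (integrable_finsetSum _ fun i _ => coord_integrable i)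
    (ae_of_all _ fun W => by positivity), integral_finsetSum _ fun i _ => coord_integrable i]
  simp only [integral_sq_add_mul_of_integral_eq_zero (hM _) (coord_mean _),
    variance_iidMatrix_transpose_mulVec hν, sum_add_distrib, sum_const, card_univ, nsmul_eq_mul]
  ring_nf

end RandomMatrix

section BackwardPass

variable {n L j : ℕ} {α : ℝ} {v : Fin n → ℝ}

lemma resD_succ_of_lt (hj : j < L) (ω : Fin L → Fin n → Fin n → ℝ) :
    resD n α v L ω (j + 1) = resD n α v L ω j +
      (L : ℝ) ^ (-α) • (Matrix.of (ω ⟨L - 1 - j, by omega⟩))ᵀ *ᵥ resD n α v L ω j := by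
  rw [resD, dif_pos hj]

lemma measurable_resD : Measurable fun ω => resD n α v L ω j := by
  induction j with
  | zero => exact measurable_const
  | succ j ih =>
    by_cases hj : j < L
    · simp only [resD_succ_of_lt hj]
      refine ih.add (measurable_pi_iff.2 fun i => ?_)
      simp only [Pi.smul_apply, transpose_mulVec_of_apply]
      fun_prop
    · simpa only [resD, dif_neg hj, add_zero] using ih

lemma resD_update_of_add_lt {k : Fin L} (hk : k + j < L) (ω : Fin L → Fin n → Fin n → ℝ)
    (W : Fin n → Fin n → ℝ) :
    resD n α v L (Function.update ω k W) j = resD n α v L ω j := by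
  induction j with
  | zero => rfl
  | succ j ih =>
    have layer_ne : (⟨L - 1 - j, by omega⟩ : Fin L) ≠ k := by
      rw [Ne, Fin.ext_iff, Fin.val_mk]
      omega
    rw [resD_succ_of_lt (by omega), resD_succ_of_lt (by omega), ih (by omega),
      Function.update_of_ne layer_ne]

variable {ν : Measure ℝ} [IsProbabilityMeasure ν]

lemma lintegral_sum_sq_resD_succ (hν : MemLp id 2 ν) (hν₀ : ∫ t, t ∂ν = 0) (hj : j < L) :
    ∫⁻ ω, ENNReal.ofReal (∑ i, resD n α v L ω (j + 1) i ^ 2)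
        ∂Measure.pi (fun _ => iidMatrix (Fin n) (Fin n) ν) =
      ENNReal.ofReal (1 + ((L : ℝ) ^ (-α)) ^ 2 * (n * Var[id; ν])) *
        ∫⁻ ω, ENNReal.ofReal (∑ i, resD n α v L ω j i ^ 2)
          ∂Measure.pi (fun _ => iidMatrix (Fin n) (Fin n) ν) := by
  have sum_sq_measurable (m : ℕ) :
      Measurable fun ω => ENNReal.ofReal (∑ i, resD n α v L ω m i ^ 2) := by
    have := measurable_resD (n := n) (L := L) (j := m) (α := α) (v := v)
    fun_prop
  have hVar := variance_nonneg id ν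
  rw [← lintegral_const_mul _ (sum_sq_measurable j),
    ← lintegral_lintegral_update_pi (sum_sq_measurable (j + 1)) ⟨L - 1 - j, by omega⟩]
  refine lintegral_congr fun ω => ?_
  have layer_free := resD_update_of_add_lt (α := α) (v := v) (k := ⟨L - 1 - j, by omega⟩)
    (show L - 1 - j + j < L by omega) ω
  simp only [resD_succ_of_lt hj, Function.update_self, layer_free]
  rw [lintegral_iidMatrix_sum_sq_add_smul_transpose_mulVec hν hν₀, Fintype.card_fin,
    ← ENNReal.ofReal_mul (by positivity), one_add_mul]

lemma integral_sum_sq_resD (hν : MemLp id 2 ν) (hν₀ : ∫ t, t ∂ν = 0) (hj : j ≤ L) :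
    ∫ ω, ∑ i, resD n α v L ω j i ^ 2 ∂Measure.pi (fun _ => iidMatrix (Fin n) (Fin n) ν) =
      (1 + ((L : ℝ) ^ (-α)) ^ 2 * (n * Var[id; ν])) ^ j * ∑ i, v i ^ 2 := by
  have hVar := variance_nonneg id ν
  have lintegral_eq : ∫⁻ ω, ENNReal.ofReal (∑ i, resD n α v L ω j i ^ 2)
        ∂Measure.pi (fun _ => iidMatrix (Fin n) (Fin n) ν) =
      ENNReal.ofReal ((1 + ((L : ℝ) ^ (-α)) ^ 2 * (n * Var[id; ν])) ^ j * ∑ i, v i ^ 2) := by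
    induction j with
    | zero => simp [resD]
    | succ j ih =>
      rw [lintegral_sum_sq_resD_succ hν hν₀ hj, ih (by omega),
        ← ENNReal.ofReal_mul (by positivity), pow_succ' _ j, mul_assoc]
  have hd := measurable_resD (n := n) (L := L) (j := j) (α := α) (v := v)
  rw [integral_eq_lintegral_of_nonneg_ae (ae_of_all _ fun ω => by positivity) (by fun_prop),
    lintegral_eq, ENNReal.toReal_ofReal (by positivity)]

lemma integral_sum_sq_resD_of_mul_variance_eq_one (hν : MemLp id 2 ν) (hν₀ : ∫ t, t ∂ν = 0)
    (hVar : n * Var[id; ν] = 1) (hj : j ≤ L) :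
    ∫ ω, ∑ i, resD n α v L ω j i ^ 2 ∂Measure.pi (fun _ => iidMatrix (Fin n) (Fin n) ν) =
      (1 + (L : ℝ) ^ (-(2 * α))) ^ j * ∑ i, v i ^ 2 := by
  have multiplier_sq : ((L : ℝ) ^ (-α)) ^ 2 = (L : ℝ) ^ (-(2 * α)) := by
    rw [← Real.rpow_mul_natCast L.cast_nonneg]
    congr 1
    push_cast
    ring
  rw [integral_sum_sq_resD hν hν₀ hj, hVar, mul_one, multiplier_sq]

end BackwardPass

section Growth

variable {L : ℕ} {s : ℝ}

lemma natCast_mul_rpow_neg (hL : L ≠ 0) : (L : ℝ) * (L : ℝ) ^ (-s) = (L : ℝ) ^ (1 - s) := by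
  rw [sub_eq_add_neg, Real.rpow_add (by positivity), Real.rpow_one]

lemma rpow_one_sub_le_one_add_rpow_neg_pow (hL : L ≠ 0) :
    (L : ℝ) ^ (1 - s) ≤ (1 + (L : ℝ) ^ (-s)) ^ L := by
  have h₀ : 0 ≤ (L : ℝ) ^ (-s) := by positivity
  have bernoulli := one_add_mul_le_pow (by linarith : -2 ≤ (L : ℝ) ^ (-s)) L
  rw [natCast_mul_rpow_neg hL] at bernoulli
  linarith

lemma one_add_rpow_neg_pow_le_exp (hL : L ≠ 0) :
    (1 + (L : ℝ) ^ (-s)) ^ L ≤ Real.exp ((L : ℝ) ^ (1 - s)) := by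
  calc (1 + (L : ℝ) ^ (-s)) ^ L
      ≤ Real.exp ((L : ℝ) ^ (-s)) ^ L := by
        gcongr
        rw [add_comm]
        exact Real.add_one_le_exp _
    _ = Real.exp ((L : ℝ) ^ (1 - s)) := by
        rw [← Real.exp_nat_mul, natCast_mul_rpow_neg hL]

lemma exists_forall_one_add_rpow_neg_pow_le_iff :
    (∃ M : ℝ, ∀ L : ℕ, 1 ≤ L → (1 + (L : ℝ) ^ (-s)) ^ L ≤ M) ↔ 1 ≤ s := by
  constructor
  · rintro ⟨M, hM⟩
    by_contra! hs
    have unbounded : Filter.Tendsto (fun L : ℕ => (L : ℝ) ^ (1 - s)) Filter.atTop Filter.atTop :=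
      (tendsto_rpow_atTop (sub_pos.2 hs)).comp tendsto_natCast_atTop_atTop
    obtain ⟨L, hML, hL⟩ :=
      ((unbounded.eventually_gt_atTop M).and (Filter.eventually_ge_atTop 1)).exists
    exact (hML.trans_le (rpow_one_sub_le_one_add_rpow_neg_pow (by omega))).not_ge (hM L hL)
  · refine fun hs => ⟨Real.exp 1, fun L hL => (one_add_rpow_neg_pow_le_exp (by omega)).trans ?_⟩
    gcongr
    exact Real.rpow_le_one_of_one_le_of_nonpos (by exact_mod_cast hL) (by linarith)

end Growth

theorem stmt_6_general {n : ℕ} {ν : Measure ℝ} [IsProbabilityMeasure ν] (hν : MemLp id 2 ν)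
    (hν₀ : ∫ t, t ∂ν = 0) (hVar : n * Var[id; ν] = 1) (α : ℝ) {v : Fin n → ℝ} (hv : v ≠ 0) :
    (∀ L : ℕ, 1 ≤ L → ∀ l : ℕ, l ≤ L →
      ∫ ω, ∑ i, resD n α v L ω (L - l) i ^ 2
          ∂Measure.pi (fun _ => iidMatrix (Fin n) (Fin n) ν) =
        (1 + (L : ℝ) ^ (-(2 * α))) ^ (L - l) * ∑ i, v i ^ 2) ∧
    ((∃ M : ℝ, ∀ L : ℕ, 1 ≤ L →
      ∫ ω, ∑ i, resD n α v L ω L i ^ 2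
          ∂Measure.pi (fun _ => iidMatrix (Fin n) (Fin n) ν) ≤ M) ↔ 1 / 2 ≤ α) := by
  have norm_sq_pos : 0 < ∑ i, v i ^ 2 := by
    obtain ⟨i, hi⟩ := Function.ne_iff.1 hv
    exact sum_pos' (fun i _ => sq_nonneg _) ⟨i, mem_univ i, sq_pos_of_ne_zero hi⟩
  have second_moment {L j : ℕ} (hj : j ≤ L) :=
    integral_sum_sq_resD_of_mul_variance_eq_one (α := α) (v := v) hν hν₀ hVar hj
  refine ⟨fun L _ l _ => second_moment (Nat.sub_le L l), ?_⟩
  have half_le_iff : 1 / 2 ≤ α ↔ 1 ≤ 2 * α := by constructor <;> intro <;> linarith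
  rw [half_le_iff, ← exists_forall_one_add_rpow_neg_pow_le_iff]
  simp only [second_moment le_rfl]
  constructor
  · rintro ⟨M, hM⟩
    exact ⟨M / ∑ i, v i ^ 2, fun L hL => (le_div_iff₀ norm_sq_pos).2 (hM L hL)⟩
  · rintro ⟨M, hM⟩
    exact ⟨M * ∑ i, v i ^ 2, fun L hL => mul_le_mul_of_nonneg_right (hM L hL) norm_sq_pos.le⟩

/-- For the backward pass `d^{l−1} = d^l + L^{−α}(W^l)ᵀ d^l`, `d^L = v`, at
initialization: `E‖d^l‖² = (1 + L^{−2α})^{L−l}·‖v‖²` for `0 ≤ l ≤ L`, and the supremum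
over depths `L` of `E‖d^0‖²` is finite iff `α ≥ 1/2`. -/
theorem stmt_6 (n : ℕ) (hn : 1 ≤ n) (α : ℝ) (v : Fin n → ℝ) (hv : v ≠ 0) :
    (∀ L : ℕ, 1 ≤ L → ∀ l : ℕ, l ≤ L →
      (∫ ω, (∑ i, (resD n α v L ω (L - l) i) ^ 2) ∂(gaussMats n L)) =
        (1 + (L : ℝ) ^ (-(2 * α))) ^ (L - l) * ∑ i, (v i) ^ 2) ∧
    ((∃ M : ℝ, ∀ L : ℕ, 1 ≤ L →
        (∫ ω, (∑ i, (resD n α v L ω L i) ^ 2) ∂(gaussMats n L)) ≤ M) ↔ 1 / 2 ≤ α) := by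
  have hVar : (n : ℝ) * Var[id; gaussianReal 0 (n : ℝ≥0)⁻¹] = 1 := by
    simp [variance_id_gaussianReal, Nat.one_le_iff_ne_zero.1 hn]
  exact stmt_6_general (memLp_id_gaussianReal 2) integral_id_gaussianReal hVar α hv
end

section
/- With Γ^L and C^L as defined in the context, for every t ∈ {0, …, T−1}, every s ∈ {−1, …, t−1}, every a, b ∈ {0,1}, every p ∈ [0,1] (p ∈ (0,1] for C), and every q ∈ (0,1], the sequences (Γ^{2^k}_{t,s,a,b}(p,q))_{k∈ℕ} and (C^{2^k}_{t,s,a}(p))_{k∈ℕ} are Cauchy sequences of real numbers (hence convergent as k → ∞). -/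
open MeasureTheory Set Finset Filter Topology

/-- The defining recursion (from the Tensor-Program analysis of a depth-`L` linear residual
network `x^l = x^{l−1} + L^{−1/2} W^l x^{l−1}` trained for `T` SGD steps under Depth-μP)
for the coefficient functions `Γ^L_{t,r,a,b}(p,q)` and covariance functions `C^L_{t,s,a}(p)`,
together with the output values `f̊_t` and loss derivatives `χ̊_t = ℓ'_t(f̊_t)`.

Conventions: Booleans encode the indices `a, b ∈ {0,1}` (`false = 0`, `true = 1`); the
time index `r, s = −1` refers to the input/output layers `U, V`; `C_{−1,−1,·} ≡ 1`;
`C_{t,s,·} ≡ 0` if exactly one of `t, s` is `−1`; `C` is symmetric; `Γ_{s,r,·,·} ≡ 0` for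
`r > s`; `Γ^L` is constant in `p` on each interval `((l−1)/L, l/L]`. -/
structure IsLinearTP (T L : ℕ) (ξ : ℕ → ℝ) (ℓ' : ℕ → ℝ → ℝ)
    (Γ : ℕ → ℤ → Bool → Bool → ℝ → ℝ → ℝ)
    (C : ℤ → ℤ → Bool → ℝ → ℝ)
    (f χ : ℕ → ℝ) : Prop where
  C_symm : ∀ (t s : ℤ) (b : Bool) (p : ℝ), C t s b p = C s t b p
  C_base : ∀ (b : Bool) (p : ℝ), C (-1) (-1) b p = 1
  C_mixed : ∀ t : ℤ, 0 ≤ t → ∀ (b : Bool) (p : ℝ), C t (-1) b p = 0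
  Γ_vanish : ∀ (t : ℕ) (r : ℤ), (t : ℤ) < r → ∀ (a b : Bool) (p q : ℝ), Γ t r a b p q = 0
  Γ_const : ∀ t : ℕ, t < T → ∀ r : ℤ, -1 ≤ r → r ≤ (t : ℤ) → ∀ a b : Bool,
    ∀ l : ℕ, 1 ≤ l → l ≤ L → ∀ p q : ℝ, ((l : ℝ) - 1) / L < p → p ≤ (l : ℝ) / L →
      0 < q → q ≤ 1 → Γ t r a b p q = Γ t r a b ((l : ℝ) / L) q
  fwd_init : ∀ t : ℕ, t < T → ∀ r : ℤ, -1 ≤ r → r ≤ (t : ℤ) → ∀ b : Bool,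
    ∀ q : ℝ, 0 < q → q ≤ 1 →
      Γ t r false b 0 q = if r = -1 ∧ b = false then ξ t else 0
  fwd_step : ∀ t : ℕ, t < T → ∀ l : ℕ, 1 ≤ l → l ≤ L → ∀ r : ℤ, -1 ≤ r → r ≤ (t : ℤ) →
    ∀ b : Bool, ∀ p q : ℝ, ((l : ℝ) - 1) / L < p → p ≤ (l : ℝ) / L → 0 < q → q ≤ 1 →
      Γ t r false b p q =
        Γ t r false b (((l : ℝ) - 1) / L) q
          + (if (t : ℤ) = r ∧ b = false ∧ (l : ℤ) = ⌈(L : ℝ) * q⌉ then 1 else 0)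
          + (1 / (L : ℝ)) * ∑ s ∈ Finset.range t,
              Γ s r true b ((l : ℝ) / L) q *
                (Γ t (s : ℤ) false true (((l : ℝ) - 1) / L) ((l : ℝ) / L)
                  - C (t : ℤ) (s : ℤ) false ((l : ℝ) / L))
  fwd_C : ∀ t : ℕ, t < T → ∀ s : ℕ, s ≤ t → ∀ l : ℕ, 1 ≤ l → l ≤ L →
    ∀ p : ℝ, ((l : ℝ) - 1) / L < p → p ≤ (l : ℝ) / L →
      C (t : ℤ) (s : ℤ) false p =
        ∑ t' ∈ Finset.Icc (-1 : ℤ) (t : ℤ), ∑ s' ∈ Finset.Icc (-1 : ℤ) (s : ℤ), ∑ b : Bool,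
          ∫ q in Ioc (0 : ℝ) 1,
            Γ t t' false b (((l : ℝ) - 1) / L) q * C t' s' b q *
              Γ s s' false b (((l : ℝ) - 1) / L) q
  f_def : ∀ t : ℕ, t < T → f t = Γ t (-1) false true 1 1
  χ_def : ∀ t : ℕ, t < T → χ t = ℓ' t (f t)
  bwd_init : ∀ t : ℕ, t < T → ∀ r : ℤ, -1 ≤ r → r ≤ (t : ℤ) → ∀ b : Bool,
    ∀ q : ℝ, 0 < q → q ≤ 1 →
      Γ t r true b 1 q = if r = -1 ∧ b = true then χ t else 0
  bwd_step : ∀ t : ℕ, t < T → ∀ l : ℕ, 1 ≤ l → l ≤ L → ∀ r : ℤ, -1 ≤ r → r ≤ (t : ℤ) →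
    ∀ b : Bool, ∀ p q : ℝ, ((l : ℝ) - 2) / L < p → p ≤ ((l : ℝ) - 1) / L → 0 ≤ p →
      0 < q → q ≤ 1 →
      Γ t r true b p q =
        Γ t r true b ((l : ℝ) / L) q
          + (if (t : ℤ) = r ∧ b = true ∧ (l : ℤ) = ⌈(L : ℝ) * q⌉ then 1 else 0)
          + (1 / (L : ℝ)) * ∑ s ∈ Finset.range t,
              Γ s r false b (((l : ℝ) - 1) / L) q *
                (Γ t (s : ℤ) true false ((l : ℝ) / L) ((l : ℝ) / L)
                  - C (t : ℤ) (s : ℤ) true ((l : ℝ) / L))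
  bwd_C : ∀ t : ℕ, t < T → ∀ s : ℕ, s ≤ t → ∀ l : ℕ, 1 ≤ l → l ≤ L →
    ∀ p : ℝ, ((l : ℝ) - 1) / L < p → p ≤ (l : ℝ) / L →
      C (t : ℤ) (s : ℤ) true p =
        ∑ t' ∈ Finset.Icc (-1 : ℤ) (t : ℤ), ∑ s' ∈ Finset.Icc (-1 : ℤ) (s : ℤ), ∑ b : Bool,
          ∫ q in Ioc (0 : ℝ) 1,
            Γ t t' true b ((l : ℝ) / L) q * C t' s' b q * Γ s s' true b ((l : ℝ) / L) q

/-! On a grid with `L` cells, the sweep of the recursion at time `t` solves a linear system whose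
unknowns are `Γ_{t,r,a,b}` and `C_{t,s,a}` and whose coefficients come from the earlier steps. A
discrete Grönwall argument bounds its solutions by the residuals, uniformly in `L`. Doubling `L`
changes the coefficients by `O(1 / L)`, except next to the diagonal, where `Γ_{s,s,a,b}` jumps; an
average over the cells meets the diagonal only boundedly often, so the depth-`L` solution solves the
depth-`2 L` system up to a residual `O(1 / L)`, and hence lies within `O(1 / L)` of its solution.
This stability under doubling propagates from one time step to the next: forward sweep, output, loss
derivative, backward sweep. Along `L = 2 ^ k` consecutive values then differ by `O(2 ^ (-k))`. -/

open scoped NNReal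

section

variable {E G : Type*} [NormedAddCommGroup E] [NormedAddCommGroup G]

/-! ### Doubling-stable grid families -/

/-- The indicator of node `i` being an endpoint of the grid cell `j`, which lies between the nodes
`j` and `j + 1`. -/
def endpointWeight (i j : ℕ) : ℝ≥0 := (if i = j then 1 else 0) + if i = j + 1 then 1 else 0

theorem sum_endpointWeight_cell_le (N i : ℕ) :
    ∑ j ∈ Finset.range N, endpointWeight i j ≤ 2 := by
  have hleft : ∑ j ∈ Finset.range N, (if i = j then 1 else 0 : ℝ≥0) ≤ 1 := by
    rw [Finset.sum_ite_eq]; split_ifs <;> simp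
  have hright : ∑ j ∈ Finset.range N, (if i = j + 1 then 1 else 0 : ℝ≥0) ≤ 1 := by
    cases i with
    | zero => simp
    | succ i => simp only [Nat.add_right_cancel_iff, Finset.sum_ite_eq]; split_ifs <;> simp
  simpa only [endpointWeight, Finset.sum_add_distrib, one_add_one_eq_two]
    using add_le_add hleft hright

theorem sum_endpointWeight_node_le (N j : ℕ) :
    ∑ i ∈ Finset.range N, endpointWeight (i + 1) j ≤ 2 := by
  have hleft : ∑ i ∈ Finset.range N, (if i + 1 = j then 1 else 0 : ℝ≥0) ≤ 1 := by
    cases j with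
    | zero => simp
    | succ j => simp only [Nat.add_right_cancel_iff, Finset.sum_ite_eq']; split_ifs <;> simp
  have hright : ∑ i ∈ Finset.range N, (if i + 1 = j + 1 then 1 else 0 : ℝ≥0) ≤ 1 := by
    simp only [Nat.add_right_cancel_iff, Finset.sum_ite_eq']; split_ifs <;> simp
  simpa only [endpointWeight, Finset.sum_add_distrib, one_add_one_eq_two]
    using add_le_add hleft hright

theorem endpointWeight_reflect {N i j : ℕ} (hi : i ≤ N) (hj : j < N) :
    endpointWeight (N - i) (N - 1 - j) = endpointWeight i j := by
  have hleft : N - i = N - 1 - j ↔ i = j + 1 := by omega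
  have hright : N - i = N - 1 - j + 1 ↔ i = j := by omega
  simp only [endpointWeight, hleft, hright]
  exact add_comm _ _

/-- `F L i j` is thought of as a function sampled at the node `i ≤ L` and the cell `j < L` of the
uniform grid with `L` cells. The family is doubling-stable with weight `w` and constant `M` if it
is bounded by `M` and passing from depth `L` to depth `2 * L` changes it by at most
`M * (1 / L + w)`. A fine node `i'` is compared with its coarse neighbours, that is with
`i' / 2` if `i'` is even and with both `(i' - 1) / 2` and `(i' + 1) / 2` if it is odd. -/
structure DoublingStableWith (w : ℕ → ℕ → ℝ≥0) (M : ℝ) (F : ℕ → ℕ → ℕ → E) : Prop where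
  norm_le : ∀ {L i j : ℕ}, 1 ≤ L → i ≤ L → j < L → ‖F L i j‖ ≤ M
  norm_sub_le : ∀ {L i i' j : ℕ}, 1 ≤ L → i ≤ L → i' ≤ 2 * L → j < 2 * L →
    2 * i ≤ i' + 1 → i' ≤ 2 * i + 1 → ‖F L i (j / 2) - F (2 * L) i' j‖ ≤ M * (1 / L + w i' j)

/-- Doubling stability with an unspecified constant. The weight is `0` for families that vary
continuously, and `endpointWeight` for families with a jump across the diagonal. -/
def DoublingStable (w : ℕ → ℕ → ℝ≥0) (F : ℕ → ℕ → ℕ → E) : Prop :=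
  ∃ M, DoublingStableWith w M F

namespace DoublingStableWith

variable {w : ℕ → ℕ → ℝ≥0} {M M' : ℝ} {F : ℕ → ℕ → ℕ → E}

theorem nonneg (h : DoublingStableWith w M F) : 0 ≤ M :=
  (norm_nonneg _).trans (h.norm_le le_rfl zero_le_one zero_lt_one)

theorem mono (h : DoublingStableWith w M F) (hM : M ≤ M') : DoublingStableWith w M' F where
  norm_le hL hi hj := (h.norm_le hL hi hj).trans hM
  norm_sub_le hL hi hi' hj h₁ h₂ := (h.norm_sub_le hL hi hi' hj h₁ h₂).trans (by gcongr)

theorem zero_iff : DoublingStableWith 0 M F ↔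
    (∀ {L i j : ℕ}, 1 ≤ L → i ≤ L → j < L → ‖F L i j‖ ≤ M) ∧
      ∀ {L i i' j : ℕ}, 1 ≤ L → i ≤ L → i' ≤ 2 * L → j < 2 * L → 2 * i ≤ i' + 1 →
        i' ≤ 2 * i + 1 → ‖F L i (j / 2) - F (2 * L) i' j‖ ≤ M / L := by
  have hweight (L i j : ℕ) : M * (1 / L + ((0 : ℕ → ℕ → ℝ≥0) i j : ℝ)) = M / L := by
    simp [div_eq_mul_inv]
  exact ⟨fun h => ⟨h.norm_le, fun hL hi hi' hj h₁ h₂ =>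
      (h.norm_sub_le hL hi hi' hj h₁ h₂).trans_eq (hweight _ _ _)⟩,
    fun h => ⟨h.1, fun hL hi hi' hj h₁ h₂ =>
      (h.2 hL hi hi' hj h₁ h₂).trans_eq (hweight _ _ _).symm⟩⟩

theorem norm_sub_le_div (h : DoublingStableWith 0 M F) {L i i' j : ℕ} (hL : 1 ≤ L) (hi : i ≤ L)
    (hi' : i' ≤ 2 * L) (hj : j < 2 * L) (h₁ : 2 * i ≤ i' + 1) (h₂ : i' ≤ 2 * i + 1) :
    ‖F L i (j / 2) - F (2 * L) i' j‖ ≤ M / L :=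
  (zero_iff.1 h).2 hL hi hi' hj h₁ h₂

end DoublingStableWith

namespace DoublingStable

variable {w : ℕ → ℕ → ℝ≥0} {F F' : ℕ → ℕ → ℕ → E} {f : ℕ → ℕ → ℕ → ℝ}

theorem eventually (h : DoublingStable w F) : ∀ᶠ M in atTop, DoublingStableWith w M F :=
  let ⟨M, hM⟩ := h
  (eventually_ge_atTop M).mono fun _ => hM.mono

theorem of_zero (h : DoublingStable 0 F) : DoublingStable w F := by
  obtain ⟨M, hM⟩ := h
  have := hM.nonneg
  refine ⟨M, hM.norm_le, fun hL hi hi' hj h₁ h₂ => (hM.norm_sub_le hL hi hi' hj h₁ h₂).trans ?_⟩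
  gcongr
  exact zero_le

theorem congr (h : DoublingStable w F)
    (e : ∀ {L i j : ℕ}, 1 ≤ L → i ≤ L → j < L → F' L i j = F L i j) : DoublingStable w F' := by
  obtain ⟨M, hM⟩ := h
  refine ⟨M, fun hL hi hj => e hL hi hj ▸ hM.norm_le hL hi hj,
    fun {L i i' j} hL hi hi' hj h₁ h₂ => ?_⟩
  rw [e hL hi (by omega), e (by omega) hi' hj]
  exact hM.norm_sub_le hL hi hi' hj h₁ h₂

protected theorem const (x : E) : DoublingStable w fun _ _ _ => x :=
  ⟨‖x‖, fun _ _ _ => le_rfl, fun _ _ _ _ _ _ => by rw [sub_self, norm_zero]; positivity⟩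

protected theorem add (h : DoublingStable w F) (h' : DoublingStable w F') :
    DoublingStable w fun L i j => F L i j + F' L i j := by
  obtain ⟨M, hM⟩ := h
  obtain ⟨M', hM'⟩ := h'
  refine ⟨M + M', fun hL hi hj => norm_add_le_of_le (hM.norm_le hL hi hj) (hM'.norm_le hL hi hj),
    fun hL hi hi' hj h₁ h₂ => ?_⟩
  rw [add_sub_add_comm, add_mul]
  exact norm_add_le_of_le (hM.norm_sub_le hL hi hi' hj h₁ h₂) (hM'.norm_sub_le hL hi hi' hj h₁ h₂)

protected theorem sum {κ : Type*} {s : Finset κ} {F : κ → ℕ → ℕ → ℕ → E}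
    (h : ∀ k ∈ s, DoublingStable w (F k)) :
    DoublingStable w fun L i j => ∑ k ∈ s, F k L i j := by
  classical
  induction s using Finset.induction_on with
  | empty => simpa using DoublingStable.const 0
  | insert k s hk ih =>
    simp only [Finset.sum_insert hk]
    rw [Finset.forall_mem_insert] at h
    exact h.1.add (ih h.2)

protected theorem smul [NormedSpace ℝ E] (hf : DoublingStable w f) (hF : DoublingStable w F) :
    DoublingStable w fun L i j => f L i j • F L i j := by
  obtain ⟨M, hM, hM'⟩ := (hf.eventually.and hF.eventually).exists
  have hM0 := hM.nonneg
  refine ⟨M * M + M * M, fun {L i j} hL hi hj => ?_, fun {L i i' j} hL hi hi' hj h₁ h₂ => ?_⟩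
  · calc ‖f L i j • F L i j‖ = ‖f L i j‖ * ‖F L i j‖ := norm_smul _ _
      _ ≤ M * M := by gcongr; exacts [hM.norm_le hL hi hj, hM'.norm_le hL hi hj]
      _ ≤ M * M + M * M := le_add_of_nonneg_left (by positivity)
  · have hj' : j / 2 < L := by omega
    calc ‖f L i (j / 2) • F L i (j / 2) - f (2 * L) i' j • F (2 * L) i' j‖
        = ‖(f L i (j / 2) - f (2 * L) i' j) • F L i (j / 2)
            + f (2 * L) i' j • (F L i (j / 2) - F (2 * L) i' j)‖ := by
          congr 1; rw [sub_smul, smul_sub]; abel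
      _ ≤ M * (1 / L + w i' j) * M + M * (M * (1 / L + w i' j)) := by
          refine norm_add_le_of_le ?_ ?_ <;> rw [norm_smul] <;> gcongr
          exacts [hM.norm_sub_le hL hi hi' hj h₁ h₂, hM'.norm_le hL hi hj',
            hM.norm_le (by omega) hi' hj, hM'.norm_sub_le hL hi hi' hj h₁ h₂]
      _ = (M * M + M * M) * (1 / L + w i' j) := by ring

protected theorem mul {g : ℕ → ℕ → ℕ → ℝ} (hf : DoublingStable w f) (hg : DoublingStable w g) :
    DoublingStable w fun L i j => f L i j * g L i j :=
  hf.smul hg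

theorem comp_continuousLinearMap [NormedSpace ℝ E] [NormedSpace ℝ G] (φ : E →L[ℝ] G)
    (hF : DoublingStable w F) :
    DoublingStable w fun L i j => φ (F L i j) := by
  obtain ⟨M, hM⟩ := hF
  refine ⟨‖φ‖ * M, fun hL hi hj => φ.le_opNorm_of_le (hM.norm_le hL hi hj),
    fun hL hi hi' hj h₁ h₂ => ?_⟩
  rw [← map_sub, mul_assoc]
  exact φ.le_opNorm_of_le (hM.norm_sub_le hL hi hi' hj h₁ h₂)

theorem comp_locallyLipschitz {φ : ℝ → ℝ} (hφ : LocallyLipschitz φ) (hf : DoublingStable w f) :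
    DoublingStable w fun L i j => φ (f L i j) := by
  obtain ⟨M, hM⟩ := hf
  have hM0 := hM.nonneg
  obtain ⟨K, hK⟩ := hφ.locallyLipschitzOn.exists_lipschitzOnWith_of_compact
    (isCompact_closedBall (0 : ℝ) M)
  have hmem {L i j : ℕ} (hL : 1 ≤ L) (hi : i ≤ L) (hj : j < L) :
      f L i j ∈ Metric.closedBall (0 : ℝ) M :=
    mem_closedBall_zero_iff.2 (hM.norm_le hL hi hj)
  refine ⟨K * M + ‖φ 0‖, fun hL hi hj => ?_, fun {L i i' j} hL hi hi' hj h₁ h₂ => ?_⟩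
  · refine (norm_le_norm_sub_add _ (φ 0)).trans (add_le_add_left ?_ _)
    refine (hK.norm_sub_le (hmem hL hi hj) (Metric.mem_closedBall_self hM0)).trans ?_
    rw [sub_zero]
    gcongr
    exact hM.norm_le hL hi hj
  · calc ‖φ (f L i (j / 2)) - φ (f (2 * L) i' j)‖
        ≤ K * ‖f L i (j / 2) - f (2 * L) i' j‖ :=
          hK.norm_sub_le (hmem hL hi (by omega)) (hmem (by omega) hi' hj)
      _ ≤ K * (M * (1 / L + w i' j)) := by
          gcongr; exact hM.norm_sub_le hL hi hi' hj h₁ h₂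
      _ ≤ (K * M + ‖φ 0‖) * (1 / L + w i' j) := by
          rw [← mul_assoc]; gcongr; exact le_add_of_nonneg_right (norm_nonneg _)

theorem reflect (hw : ∀ {N i j : ℕ}, i ≤ N → j < N → w (N - i) (N - 1 - j) = w i j)
    (hF : DoublingStable w F) : DoublingStable w fun L i j => F L (L - i) (L - 1 - j) := by
  obtain ⟨M, hM⟩ := hF
  refine ⟨M, fun hL _ hj => hM.norm_le hL (by omega) (by omega),
    fun {L i i' j} hL hi hi' hj h₁ h₂ => ?_⟩
  have hhalf : L - 1 - j / 2 = (2 * L - 1 - j) / 2 := by omega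
  rw [hhalf, ← hw hi' hj]
  exact hM.norm_sub_le hL (by omega) (by omega) (by omega) (by omega) (by omega)

theorem last {F : ℕ → ℕ → ℕ → E} (hF : DoublingStable 0 F) :
    DoublingStable 0 fun L _ _ => F L L (L - 1) := by
  obtain ⟨M, hM⟩ := hF
  refine ⟨M, DoublingStableWith.zero_iff.2 ⟨fun {L _ _} hL _ _ => hM.norm_le hL le_rfl (by omega),
    fun {L _ _ _} hL _ _ _ _ _ => ?_⟩⟩
  have hhalf : L - 1 = (2 * L - 1) / 2 := by omega
  rw [hhalf]
  exact hM.norm_sub_le_div hL le_rfl le_rfl (by omega) (by omega) (by omega)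

end DoublingStable

theorem doublingStable_indicator_lt :
    DoublingStable endpointWeight fun _ i j => if j < i then (1 : ℝ) else 0 := by
  refine ⟨1, fun _ _ _ => by split_ifs <;> simp, fun {L i i' j} _ _ _ _ h₁ h₂ => ?_⟩
  rw [one_mul]
  by_cases hend : i' = j ∨ i' = j + 1
  · have hw : (1 : ℝ) ≤ endpointWeight i' j := by
      rcases hend with rfl | rfl <;> simp [endpointWeight]
    calc ‖(if j / 2 < i then (1 : ℝ) else 0) - if j < i' then 1 else 0‖ ≤ 1 := by
          split_ifs <;> simp
      _ ≤ 1 / L + endpointWeight i' j := le_add_of_nonneg_of_le (by positivity) hw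
  · have hiff : j / 2 < i ↔ j < i' := by omega
    simp only [hiff, sub_self, norm_zero]
    positivity

/-! ### Summation over a refined grid -/

theorem sum_range_two_mul_div_two (g : ℕ → E) (m : ℕ) :
    ∑ l ∈ Finset.range (2 * m), g (l / 2) = 2 • ∑ l ∈ Finset.range m, g l := by
  induction m with
  | zero => simp
  | succ m ih =>
    rw [mul_add_one, Finset.sum_range_succ, Finset.sum_range_succ, ih, Finset.sum_range_succ,
      smul_add, two_nsmul (g m), add_assoc, show (2 * m + 1) / 2 = m by omega,
      Nat.mul_div_cancel_left m two_pos]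

theorem norm_two_smul_sum_sub_sum_le {g h : ℕ → E} {n : ℕ} {b : ℝ} (hb : 0 ≤ b)
    (hg : ∀ m, 2 * m < n → ‖g m‖ ≤ b) :
    ‖2 • ∑ l ∈ Finset.range (n / 2), g l - ∑ l ∈ Finset.range n, h l‖
      ≤ b + ∑ l ∈ Finset.range n, ‖g (l / 2) - h l‖ := by
  have hmid : ‖2 • ∑ l ∈ Finset.range (n / 2), g l - ∑ l ∈ Finset.range n, g (l / 2)‖ ≤ b := by
    rw [← sum_range_two_mul_div_two]
    obtain ⟨m, rfl | rfl⟩ := Nat.even_or_odd' n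
    · simpa [Nat.mul_div_cancel_left] using hb
    · have hm : (2 * m + 1) / 2 = m := by omega
      simpa [hm, Finset.sum_range_succ, Nat.mul_div_cancel_left] using hg m (by omega)
  calc _ ≤ _ + ‖∑ l ∈ Finset.range n, g (l / 2) - ∑ l ∈ Finset.range n, h l‖ :=
        norm_sub_le_norm_sub_add_norm_sub _ _ _
    _ ≤ _ := by
        rw [← Finset.sum_sub_distrib]
        gcongr
        exact norm_sum_le _ _

theorem sum_mul_inv_add_le {L n : ℕ} {D : ℝ} {v : ℕ → ℝ≥0} (hL : 1 ≤ L) (hn : n ≤ 2 * L)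
    (hD : 0 ≤ D) (hv : ∑ l ∈ Finset.range n, v l ≤ 2) :
    ∑ l ∈ Finset.range n, D * (1 / L + v l) ≤ D * 4 := by
  have hv' : ∑ l ∈ Finset.range n, (v l : ℝ) ≤ 2 := by exact_mod_cast hv
  have hn' : n * (1 / L : ℝ) ≤ 2 := by
    rw [mul_one_div, div_le_iff₀ (by positivity)]
    exact_mod_cast hn
  rw [← Finset.mul_sum, Finset.sum_add_distrib, Finset.sum_const, Finset.card_range, nsmul_eq_mul]
  gcongr
  linarith only [hv', hn']

theorem inv_natCast_smul_eq_two_nsmul [NormedSpace ℝ E] (L : ℕ) (v : E) :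
    (L : ℝ)⁻¹ • v = ((2 * L : ℕ) : ℝ)⁻¹ • (2 • v) := by
  rw [← Nat.cast_smul_eq_nsmul ℝ, smul_smul]
  congr 1
  push_cast
  rw [mul_inv, mul_right_comm, inv_mul_cancel₀ two_ne_zero, one_mul]

/-! ### Coupled linear systems on a grid -/

section LinearSystem

variable [NormedSpace ℝ E] [NormedSpace ℝ G]

/-- The defect of states `x i j` and covariances `c i` in the equation
`x (i + 1) j = x i j + N⁻¹ • H (i + 1) j (π (x i i) - c i)`, summed from node `0` to node `i`:
for a solution it is the state at node `0` plus the accumulated forcing. -/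
noncomputable def stateResidual (N : ℕ) (π : E →L[ℝ] G) (H : ℕ → ℕ → G →L[ℝ] E)
    (x : ℕ → ℕ → E) (c : ℕ → G) (i j : ℕ) : E :=
  x i j - (N : ℝ)⁻¹ • ∑ l ∈ Finset.range i, H (l + 1) j (π (x l l) - c l)

/-- The defect of `x` and `c` in the equation expressing the covariance `c i` as the mean over the
cells `j` of linear functions of the state `x i j` and of the covariance `c j`. -/
noncomputable def covResidual (N : ℕ) (A : ℕ → ℕ → E →L[ℝ] G) (B : ℕ → ℕ → G →L[ℝ] G)
    (x : ℕ → ℕ → E) (c : ℕ → G) (i : ℕ) : G :=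
  c i - (N : ℝ)⁻¹ • ∑ j ∈ Finset.range N, (A i j (x i j) + B i j (c j))

variable {N : ℕ} {π : E →L[ℝ] G} {H : ℕ → ℕ → G →L[ℝ] E} {A : ℕ → ℕ → E →L[ℝ] G}
  {B : ℕ → ℕ → G →L[ℝ] G} {x y : ℕ → ℕ → E} {c d : ℕ → G} {κ ε : ℝ} {S : ℕ → ℝ} {i j : ℕ}

theorem stateResidual_sub :
    stateResidual N π H (fun i j => x i j - y i j) (fun i => c i - d i) i j
      = stateResidual N π H x c i j - stateResidual N π H y d i j := by
  simp only [stateResidual, map_sub, Finset.sum_sub_distrib, smul_sub]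
  abel

theorem covResidual_sub :
    covResidual N A B (fun i j => x i j - y i j) (fun i => c i - d i) i
      = covResidual N A B x c i - covResidual N A B y d i := by
  simp only [covResidual, map_sub, Finset.sum_sub_distrib, Finset.sum_add_distrib, smul_sub,
    smul_add]
  abel

theorem add_sum_mul_one_add_pow (ε r : ℝ) (i : ℕ) :
    ε + ∑ l ∈ Finset.range i, r * (ε * (1 + r) ^ l) = ε * (1 + r) ^ i := by
  induction i with
  | zero => simp
  | succ i ih => rw [Finset.sum_range_succ, ← add_assoc, ih]; ring

theorem one_add_div_pow_le_exp {K : ℝ} (hi : i ≤ N) (hK : 0 ≤ K) :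
    (1 + K / N) ^ i ≤ Real.exp K := by
  calc (1 + K / N) ^ i ≤ Real.exp (K / N) ^ i := by
        gcongr
        rw [add_comm]
        exact Real.add_one_le_exp _
    _ = Real.exp (i * K / N) := by rw [← Real.exp_nat_mul, mul_div_assoc]
    _ ≤ Real.exp K := by
        gcongr
        refine div_le_of_le_mul₀ (by positivity) hK ?_
        rw [mul_comm]
        gcongr

theorem norm_state_le (hH : ∀ l < i, ‖H (l + 1) j‖ ≤ κ)
    (hres : ‖stateResidual N π H x c i j‖ ≤ ε)
    (hx : ∀ l < i, ‖x l l‖ ≤ S l) (hc : ∀ l < i, ‖c l‖ ≤ (κ + 1) * S l) :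
    ‖x i j‖ ≤ ε + ∑ l ∈ Finset.range i, κ * (‖π‖ + κ + 1) / N * S l := by
  have hterm : ∀ l ∈ Finset.range i,
      ‖H (l + 1) j (π (x l l) - c l)‖ ≤ κ * (‖π‖ * S l + (κ + 1) * S l) := fun l hl => by
    have hl' := Finset.mem_range.1 hl
    refine (H (l + 1) j).le_of_opNorm_le_of_le (hH l hl') (norm_sub_le_of_le ?_ (hc l hl'))
    exact π.le_opNorm_of_le (hx l hl')
  calc ‖x i j‖ = ‖stateResidual N π H x c i j
        + (N : ℝ)⁻¹ • ∑ l ∈ Finset.range i, H (l + 1) j (π (x l l) - c l)‖ := by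
        rw [stateResidual, sub_add_cancel]
    _ ≤ ε + (N : ℝ)⁻¹ * ∑ l ∈ Finset.range i, κ * (‖π‖ * S l + (κ + 1) * S l) := by
        refine norm_add_le_of_le hres ?_
        rw [norm_smul, Real.norm_of_nonneg (by positivity)]
        gcongr
        exact norm_sum_le_of_le _ hterm
    _ = ε + ∑ l ∈ Finset.range i, κ * (‖π‖ + κ + 1) / N * S l := by
        rw [Finset.mul_sum]
        congr! 2
        ring

theorem norm_cov_le (hi : i < N) (hA : ∀ j < N, ‖A i j‖ ≤ κ)
    (hB : ∀ j < N, ‖B i j‖ ≤ κ) (hcausal : ∀ j < N, i ≤ j → B i j = 0)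
    (hres : ‖covResidual N A B x c i‖ ≤ ε)
    (hx : ∀ j < N, ‖x i j‖ ≤ S i) (hc : ∀ l < i, ‖c l‖ ≤ (κ + 1) * S l) :
    ‖c i‖ ≤ κ * S i + (ε + ∑ l ∈ Finset.range i, κ * (κ + 1) / N * S l) := by
  have hA' : ∀ j ∈ Finset.range N, ‖A i j (x i j)‖ ≤ κ * S i := fun j hj =>
    have hj' := Finset.mem_range.1 hj
    (A i j).le_of_opNorm_le_of_le (hA j hj') (hx j hj')
  have hB' : ∀ l ∈ Finset.range i, ‖B i l (c l)‖ ≤ κ * ((κ + 1) * S l) := fun l hl =>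
    have hl' := Finset.mem_range.1 hl
    (B i l).le_of_opNorm_le_of_le (hB l (hl'.trans hi)) (hc l hl')
  have hpast : ∑ j ∈ Finset.range N, B i j (c j) = ∑ l ∈ Finset.range i, B i l (c l) := by
    refine (Finset.sum_subset (Finset.range_subset_range.2 hi.le) fun j hj hij => ?_).symm
    simp only [Finset.mem_range, not_lt] at hj hij
    rw [hcausal j hj hij, zero_apply]
  have hN : (N : ℝ) ≠ 0 := Nat.cast_ne_zero.2 (by omega)
  calc ‖c i‖ = ‖covResidual N A B x c i
        + (N : ℝ)⁻¹ • ∑ j ∈ Finset.range N, (A i j (x i j) + B i j (c j))‖ := by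
        rw [covResidual, sub_add_cancel]
    _ ≤ ε + (N : ℝ)⁻¹ * (N * (κ * S i) + ∑ l ∈ Finset.range i, κ * ((κ + 1) * S l)) := by
        refine norm_add_le_of_le hres ?_
        rw [norm_smul, Real.norm_of_nonneg (by positivity), Finset.sum_add_distrib, hpast]
        gcongr
        refine norm_add_le_of_le ?_ (norm_sum_le_of_le _ hB')
        simpa using norm_sum_le_of_le _ hA'
    _ = κ * S i + (ε + ∑ l ∈ Finset.range i, κ * (κ + 1) / N * S l) := by
        have hsum : ∑ l ∈ Finset.range i, κ * (κ + 1) / N * S l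
            = (N : ℝ)⁻¹ * ∑ l ∈ Finset.range i, κ * ((κ + 1) * S l) := by
          rw [Finset.mul_sum]
          congr! 1
          ring
        rw [hsum]
        field_simp
        ring

/-- The amplification factor from residuals to solutions of a coupled linear system with
coefficients of norm at most `κ` and projection of norm `ρ`. -/
noncomputable def stabilityConst (ρ κ : ℝ) : ℝ := (κ + 1) * Real.exp (κ * (ρ + κ + 1))

theorem norm_le_of_residual_le (hκ : 0 ≤ κ) (hε : 0 ≤ ε)
    (hH : ∀ i j, i ≤ N → j < N → ‖H i j‖ ≤ κ) (hA : ∀ i j, i ≤ N → j < N → ‖A i j‖ ≤ κ)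
    (hB : ∀ i j, i ≤ N → j < N → ‖B i j‖ ≤ κ) (hcausal : ∀ i j, j < N → i ≤ j → B i j = 0)
    (hstate : ∀ i j, i ≤ N → j < N → ‖stateResidual N π H x c i j‖ ≤ ε)
    (hcov : ∀ i < N, ‖covResidual N A B x c i‖ ≤ ε) :
    (∀ i j, i ≤ N → j < N → ‖x i j‖ ≤ stabilityConst ‖π‖ κ * ε) ∧
      ∀ i < N, ‖c i‖ ≤ stabilityConst ‖π‖ κ * ε := by
  set K := κ * (‖π‖ + κ + 1)
  set S : ℕ → ℝ := fun i => ε * (1 + K / N) ^ i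
  have hS (i : ℕ) : ε + ∑ l ∈ Finset.range i, K / N * S l = S i :=
    add_sum_mul_one_add_pow ε (K / N) i
  have hS0 (i : ℕ) : 0 ≤ S i := by positivity
  have hSexp {i : ℕ} (hi : i ≤ N) : (κ + 1) * S i ≤ stabilityConst ‖π‖ κ * ε := by
    calc (κ + 1) * S i ≤ (κ + 1) * (ε * Real.exp K) := by
          refine mul_le_mul_of_nonneg_left (mul_le_mul_of_nonneg_left ?_ hε) (by positivity)
          exact one_add_div_pow_le_exp hi (by positivity)
      _ = stabilityConst ‖π‖ κ * ε := by rw [stabilityConst]; ring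
  have hmain (i : ℕ) : i ≤ N → (∀ j < N, ‖x i j‖ ≤ S i) ∧ (i < N → ‖c i‖ ≤ (κ + 1) * S i) := by
    induction i using Nat.strong_induction_on with
    | _ i ih =>
      intro hi
      have hc : ∀ l < i, ‖c l‖ ≤ (κ + 1) * S l := fun l hl =>
        (ih l hl (by omega)).2 (by omega)
      have hx : ∀ j < N, ‖x i j‖ ≤ S i := fun j hj => hS i ▸
        norm_state_le (fun l hl => hH _ _ (by omega) hj) (hstate i j hi hj)
          (fun l hl => (ih l hl (by omega)).1 l (by omega)) hc
      refine ⟨hx, fun hi => ?_⟩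
      calc ‖c i‖ ≤ κ * S i + (ε + ∑ l ∈ Finset.range i, κ * (κ + 1) / N * S l) :=
            norm_cov_le hi (hA i · hi.le) (hB i · hi.le) (hcausal i) (hcov i hi) hx hc
        _ ≤ κ * S i + S i := by
            rw [← hS i]
            gcongr
            exact mul_le_mul_of_nonneg_left (by linarith [norm_nonneg π]) hκ
        _ = (κ + 1) * S i := by ring
  have hSle (i : ℕ) : S i ≤ (κ + 1) * S i := by nlinarith [hS0 i]
  exact ⟨fun i j hi hj => ((hmain i hi).1 j hj).trans ((hSle i).trans (hSexp hi)),
    fun i hi => ((hmain i hi.le).2 hi).trans (hSexp hi.le)⟩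

/-! ### Comparison of the depths `L` and `2 * L` -/

theorem norm_stateResidual_double_sub_le {H : ℕ → ℕ → ℕ → G →L[ℝ] E} {M Y : ℝ} {L : ℕ}
    (hH : DoublingStableWith endpointWeight M H) (hL : 1 ≤ L) (hi : i ≤ 2 * L) (hj : j < 2 * L)
    (hY : ∀ l < L, ‖π (x l l) - c l‖ ≤ Y) :
    ‖stateResidual (2 * L) π (H (2 * L)) (fun i j => x (i / 2) (j / 2)) (fun i => c (i / 2)) i j
        - stateResidual L π (H L) x c (i / 2) (j / 2)‖ ≤ 5 * (M * Y) / (2 * L) := by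
  have hM := hH.nonneg
  have hY0 : 0 ≤ Y := (norm_nonneg _).trans (hY 0 hL)
  set y : ℕ → G := fun l => π (x l l) - c l
  have hterm : ∀ l ∈ Finset.range i,
      ‖H L (l / 2 + 1) (j / 2) (y (l / 2)) - H (2 * L) (l + 1) j (y (l / 2))‖
        ≤ M * Y * (1 / L + endpointWeight (l + 1) j) := fun l hl => by
    have hl' := Finset.mem_range.1 hl
    rw [← sub_apply, mul_right_comm]
    exact ContinuousLinearMap.le_of_opNorm_le_of_le _
      (hH.norm_sub_le hL (by omega) (by omega) hj (by omega) (by omega)) (hY _ (by omega))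
  have hresidual : stateResidual (2 * L) π (H (2 * L)) (fun i j => x (i / 2) (j / 2))
        (fun i => c (i / 2)) i j - stateResidual L π (H L) x c (i / 2) (j / 2)
      = ((2 * L : ℕ) : ℝ)⁻¹ • (2 • ∑ l ∈ Finset.range (i / 2), H L (l + 1) (j / 2) (y l)
          - ∑ l ∈ Finset.range i, H (2 * L) (l + 1) j (y (l / 2))) := by
    simp only [stateResidual, y, smul_sub _ (2 • _), ← inv_natCast_smul_eq_two_nsmul]
    abel
  rw [hresidual, norm_smul, norm_inv, Real.norm_natCast, div_eq_inv_mul, Nat.cast_mul,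
    Nat.cast_ofNat]
  gcongr
  calc _ ≤ M * Y + _ := norm_two_smul_sum_sub_sum_le (by positivity) fun m hm =>
        ContinuousLinearMap.le_of_opNorm_le_of_le _ (hH.norm_le hL (by omega) (by omega))
          (hY m (by omega))
    _ ≤ M * Y + M * Y * 4 := by
        gcongr
        refine (Finset.sum_le_sum hterm).trans (sum_mul_inv_add_le hL hi (by positivity) ?_)
        exact sum_endpointWeight_node_le i j
    _ = 5 * (M * Y) := by ring

theorem norm_covResidual_double_sub_le {A : ℕ → ℕ → ℕ → E →L[ℝ] G} {B : ℕ → ℕ → ℕ → G →L[ℝ] G}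
    {M X : ℝ} {L : ℕ} (hA : DoublingStableWith endpointWeight M A)
    (hB : DoublingStableWith endpointWeight M B) (hL : 1 ≤ L) (hi : i < 2 * L)
    (hx : ∀ i j, i ≤ L → j < L → ‖x i j‖ ≤ X) (hc : ∀ i < L, ‖c i‖ ≤ X) :
    ‖covResidual (2 * L) (A (2 * L)) (B (2 * L)) (fun i j => x (i / 2) (j / 2))
          (fun i => c (i / 2)) i
        - covResidual L (A L) (B L) x c (i / 2)‖ ≤ 4 * (M * X) / L := by
  have hM := hA.nonneg
  have hX : 0 ≤ X := (norm_nonneg _).trans (hc 0 hL)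
  set g : ℕ → G := fun j => A L (i / 2) j (x (i / 2) j) + B L (i / 2) j (c j)
  set h : ℕ → G := fun j =>
    A (2 * L) i j (x (i / 2) (j / 2)) + B (2 * L) i j (c (j / 2))
  have hterm : ∀ j ∈ Finset.range (2 * L),
      ‖g (j / 2) - h j‖ ≤ 2 * (M * X) * (1 / L + endpointWeight i j) := fun j hj => by
    have hj' := Finset.mem_range.1 hj
    calc ‖g (j / 2) - h j‖ = ‖(A L (i / 2) (j / 2) - A (2 * L) i j) (x (i / 2) (j / 2))
          + (B L (i / 2) (j / 2) - B (2 * L) i j) (c (j / 2))‖ := by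
          simp only [g, h, sub_apply, add_sub_add_comm]
      _ ≤ M * (1 / L + endpointWeight i j) * X + M * (1 / L + endpointWeight i j) * X :=
          norm_add_le_of_le
            (ContinuousLinearMap.le_of_opNorm_le_of_le _
              (hA.norm_sub_le hL (by omega) hi.le hj' (by omega) (by omega))
              (hx _ _ (by omega) (by omega)))
            (ContinuousLinearMap.le_of_opNorm_le_of_le _
              (hB.norm_sub_le hL (by omega) hi.le hj' (by omega) (by omega)) (hc _ (by omega)))
      _ = 2 * (M * X) * (1 / L + endpointWeight i j) := by ring
  have hresidual : covResidual (2 * L) (A (2 * L)) (B (2 * L)) (fun i j => x (i / 2) (j / 2))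
        (fun i => c (i / 2)) i - covResidual L (A L) (B L) x c (i / 2)
      = ((2 * L : ℕ) : ℝ)⁻¹ • ∑ j ∈ Finset.range (2 * L), (g (j / 2) - h j) := by
    rw [Finset.sum_sub_distrib, sum_range_two_mul_div_two, smul_sub,
      ← inv_natCast_smul_eq_two_nsmul]
    simp only [covResidual, g, h]
    abel
  rw [hresidual, norm_smul, norm_inv, Real.norm_natCast]
  calc _ ≤ ((2 * L : ℕ) : ℝ)⁻¹ * (2 * (M * X) * 4) := by
        gcongr
        refine (norm_sum_le_of_le _ hterm).trans (sum_mul_inv_add_le hL le_rfl (by positivity) ?_)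
        exact sum_endpointWeight_cell_le _ i
    _ = 4 * (M * X) / L := by
        push_cast
        field_simp

/-- A family, over all depths `L`, of solutions `x L`, `c L` of coupled linear systems with
doubling-stable accumulated forcing `z` and coefficients `H`, `A`, `B`. The covariance at node `i`
depends only on the covariances of the earlier cells. -/
structure IsSweepFamily (π : E →L[ℝ] G) (z : ℕ → ℕ → ℕ → E) (H : ℕ → ℕ → ℕ → G →L[ℝ] E)
    (A : ℕ → ℕ → ℕ → E →L[ℝ] G) (B : ℕ → ℕ → ℕ → G →L[ℝ] G) (x : ℕ → ℕ → ℕ → E)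
    (c : ℕ → ℕ → G) (M : ℝ) : Prop where
  forcing : DoublingStableWith 0 M z
  feedback : DoublingStableWith endpointWeight M H
  cov_state : DoublingStableWith endpointWeight M A
  cov_cov : DoublingStableWith endpointWeight M B
  causal : ∀ {L i j : ℕ}, 1 ≤ L → j < L → i ≤ j → B L i j = 0
  state_eq : ∀ {L i j : ℕ}, 1 ≤ L → i ≤ L → j < L →
    stateResidual L π (H L) (x L) (c L) i j = z L i j
  cov_eq : ∀ {L i : ℕ}, 1 ≤ L → i < L → covResidual L (A L) (B L) (x L) (c L) i = 0

namespace IsSweepFamily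

variable {z : ℕ → ℕ → ℕ → E} {H : ℕ → ℕ → ℕ → G →L[ℝ] E} {A : ℕ → ℕ → ℕ → E →L[ℝ] G}
  {B : ℕ → ℕ → ℕ → G →L[ℝ] G} {x : ℕ → ℕ → ℕ → E} {c : ℕ → ℕ → G} {M : ℝ} {L : ℕ}

/-- A bound, uniform in the depth, for the states and covariances of a sweep family. -/
noncomputable def bound (_ : IsSweepFamily π z H A B x c M) : ℝ := stabilityConst ‖π‖ M * M

variable (h : IsSweepFamily π z H A B x c M)
include h

theorem norm_le_bound (hL : 1 ≤ L) :
    (∀ i j, i ≤ L → j < L → ‖x L i j‖ ≤ h.bound) ∧ ∀ i < L, ‖c L i‖ ≤ h.bound := by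
  have hM := h.forcing.nonneg
  refine norm_le_of_residual_le hM hM (fun _ _ => h.feedback.norm_le hL)
    (fun _ _ => h.cov_state.norm_le hL) (fun _ _ => h.cov_cov.norm_le hL)
    (fun _ _ => h.causal hL) (fun i j hi hj => ?_) fun i hi => ?_
  · rw [h.state_eq hL hi hj]
    exact h.forcing.norm_le hL hi hj
  · rwa [h.cov_eq hL hi, norm_zero]

theorem bound_nonneg : 0 ≤ h.bound :=
  (norm_nonneg _).trans ((h.norm_le_bound le_rfl).2 0 zero_lt_one)

theorem norm_feedback_le (hL : 1 ≤ L) {l : ℕ} (hl : l < L) :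
    ‖π (x L l l) - c L l‖ ≤ (‖π‖ + 1) * h.bound := by
  rw [add_one_mul]
  exact norm_sub_le_of_le (π.le_opNorm_of_le ((h.norm_le_bound hL).1 l l hl.le hl))
    ((h.norm_le_bound hL).2 l hl)

theorem exists_norm_double_sub_le : ∃ D, 0 ≤ D ∧ ∀ {L : ℕ}, 1 ≤ L →
    (∀ i j, i ≤ 2 * L → j < 2 * L → ‖x L (i / 2) (j / 2) - x (2 * L) i j‖ ≤ D / L) ∧
      ∀ i < 2 * L, ‖c L (i / 2) - c (2 * L) i‖ ≤ D / L := by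
  have hM := h.forcing.nonneg
  have hX := h.bound_nonneg
  set D₀ := M + 5 * (M * ((‖π‖ + 1) * h.bound)) + 4 * (M * h.bound)
  refine ⟨stabilityConst ‖π‖ M * D₀, by unfold stabilityConst; positivity, fun {L} hL => ?_⟩
  have h2L : 1 ≤ 2 * L := by omega
  rw [mul_div_assoc]
  refine norm_le_of_residual_le hM (by positivity) (fun _ _ => h.feedback.norm_le h2L)
    (fun _ _ => h.cov_state.norm_le h2L) (fun _ _ => h.cov_cov.norm_le h2L)
    (fun _ _ => h.causal h2L) (fun i j hi hj => ?_) fun i hi => ?_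
  · rw [stateResidual_sub, h.state_eq h2L hi hj]
    have hres := norm_stateResidual_double_sub_le h.feedback hL hi hj
      fun l hl => h.norm_feedback_le hL hl
    rw [h.state_eq hL (by omega) (by omega)] at hres
    calc _ ≤ 5 * (M * ((‖π‖ + 1) * h.bound)) / (2 * L) + M / L :=
          (norm_sub_le_norm_sub_add_norm_sub _ (z L (i / 2) (j / 2)) _).trans <| add_le_add hres <|
            h.forcing.norm_sub_le_div hL (by omega) hi hj (by omega) (by omega)
      _ ≤ 5 * (M * ((‖π‖ + 1) * h.bound)) / L + M / L := by
          gcongr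
          exact le_mul_of_one_le_left (by positivity) one_le_two
      _ ≤ D₀ / L := by
          rw [← add_div, add_comm _ M]
          gcongr
          exact le_add_of_nonneg_right (by positivity)
  · rw [covResidual_sub, h.cov_eq h2L hi]
    have hres := norm_covResidual_double_sub_le h.cov_state h.cov_cov hL hi
      (h.norm_le_bound hL).1 (h.norm_le_bound hL).2
    rw [h.cov_eq hL (by omega)] at hres
    refine hres.trans ?_
    gcongr
    exact le_add_of_nonneg_left (by positivity)

theorem norm_state_succ_sub_le {i j : ℕ} (hL : 1 ≤ L) (hi : i < L) (hj : j < L) :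
    ‖x L (i + 1) j - x L i j‖ ≤ (2 * M + M * ((‖π‖ + 1) * h.bound)) / L := by
  have hforcing : ‖z L (i + 1) j - z L i j‖ ≤ M / L + M / L := by
    have hz {k : ℕ} (hk : k = i ∨ k = i + 1) :
        ‖z L k j - z (2 * L) (2 * i + 1) (2 * j)‖ ≤ M / L := by
      have hdouble := h.forcing.norm_sub_le_div (i := k) (i' := 2 * i + 1) (j := 2 * j) hL
        (by omega) (by omega) (by omega) (by omega) (by omega)
      rwa [Nat.mul_div_cancel_left j two_pos] at hdouble
    rw [← sub_sub_sub_cancel_right]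
    exact norm_sub_le_of_le (hz (Or.inr rfl)) (hz (Or.inl rfl))
  have hstep : x L (i + 1) j - x L i j
      = z L (i + 1) j - z L i j + (L : ℝ)⁻¹ • H L (i + 1) j (π (x L i i) - c L i) := by
    rw [← h.state_eq hL hi hj, ← h.state_eq hL hi.le hj, stateResidual, stateResidual,
      Finset.sum_range_succ, smul_add]
    abel
  have hfeedback : ‖(L : ℝ)⁻¹ • H L (i + 1) j (π (x L i i) - c L i)‖
      ≤ M * ((‖π‖ + 1) * h.bound) / L := by
    rw [norm_smul, norm_inv, Real.norm_natCast, div_eq_inv_mul]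
    gcongr
    exact ContinuousLinearMap.le_of_opNorm_le_of_le _ (h.feedback.norm_le hL hi hj)
      (h.norm_feedback_le hL hi)
  rw [hstep]
  exact (norm_add_le_of_le hforcing hfeedback).trans_eq (by ring)

theorem doublingStable_state : DoublingStable 0 x := by
  obtain ⟨D, hD, hdouble⟩ := h.exists_norm_double_sub_le
  have hX := h.bound_nonneg
  have hM := h.forcing.nonneg
  set R := 2 * M + M * ((‖π‖ + 1) * h.bound)
  have hR : 0 ≤ R := by positivity
  refine ⟨h.bound + (R + D), DoublingStableWith.zero_iff.2 ⟨fun {L i j} hL hi hj => ?_,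
    fun {L i i' j} hL hi hi' hj h₁ h₂ => ?_⟩⟩
  · exact ((h.norm_le_bound hL).1 i j hi hj).trans (le_add_of_nonneg_right (by positivity))
  · have hrow : ‖x L i (j / 2) - x L (i' / 2) (j / 2)‖ ≤ R / L := by
      obtain rfl | rfl : i = i' / 2 ∨ i = i' / 2 + 1 := by omega
      · rw [sub_self, norm_zero]
        exact div_nonneg hR (Nat.cast_nonneg L)
      · exact h.norm_state_succ_sub_le hL (by omega) (by omega)
    calc _ ≤ R / L + D / L := (norm_sub_le_norm_sub_add_norm_sub _ _ _).trans <|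
          add_le_add hrow ((hdouble hL).1 i' j hi' hj)
      _ ≤ (h.bound + (R + D)) / L := by
          rw [← add_div]
          exact div_le_div_of_nonneg_right (le_add_of_nonneg_left hX) (by positivity)

theorem doublingStable_cov : DoublingStable 0 fun L _ j => c L j := by
  obtain ⟨D, hD, hdouble⟩ := h.exists_norm_double_sub_le
  have hX := h.bound_nonneg
  refine ⟨h.bound + D, DoublingStableWith.zero_iff.2 ⟨fun {L i j} hL _ hj => ?_,
    fun {L i i' j} hL _ _ hj _ _ => ?_⟩⟩
  · exact ((h.norm_le_bound hL).2 j hj).trans (le_add_of_nonneg_right hD)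
  · refine ((hdouble hL).2 j hj).trans ?_
    gcongr
    exact le_add_of_nonneg_left hX

end IsSweepFamily

end LinearSystem

end

/-! ### One sweep of the recursion on a grid -/

section MulVec

variable {ι κ : Type*} [Fintype κ] [DecidableEq κ]

/-- The continuous linear map given by multiplication with a real matrix. -/
noncomputable def mulVecCLM : Matrix ι κ ℝ →ₗ[ℝ] (κ → ℝ) →L[ℝ] (ι → ℝ) :=
  LinearMap.toContinuousLinearMap.toLinearMap ∘ₗ Matrix.toLin'.toLinearMap

theorem mulVecCLM_apply (m : Matrix ι κ ℝ) (v : κ → ℝ) (i : ι) :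
    mulVecCLM m v i = ∑ k, m i k * v k :=
  rfl

theorem DoublingStable.mulVecCLM [Fintype ι] {w : ℕ → ℕ → ℝ≥0}
    {m : ℕ → ℕ → ℕ → Matrix ι κ ℝ} (h : ∀ p k, DoublingStable w fun L i j => m L i j p k) :
    DoublingStable w fun L i j => mulVecCLM (m L i j) := by
  classical
  have hsum : DoublingStable w fun L i j => ∑ p, ∑ k,
      m L i j p k • _root_.mulVecCLM (Matrix.single p k (1 : ℝ)) :=
    .sum fun p _ => .sum fun k _ => (h p k).smul (.const _)
  refine hsum.congr fun {L i j} _ _ _ => ?_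
  conv_lhs => rw [Matrix.matrix_eq_sum_single (m L i j)]
  simp only [map_sum, ← map_smul, Matrix.smul_single, smul_eq_mul, mul_one]

end MulVec

/-- The recursion of time step `t` at depth `L`, written on the grid: `γ t` is produced by the
sweep, and `η` is produced by the sweep in the opposite direction. The sweep is the forward one
for `a = false`, with `z` the input; it is the backward one, with the layers numbered in reverse
order and `z` the loss derivative, for `a = true`. The number `γ t r b i j` is the value of
`Γ_{t,r,a,b}` at the node `i` and the cell `j`, and `c t s b j` is the value of `C_{t,s,b}` on the
cell `j`. -/
structure IsDiscreteSweep (a : Bool) (t L : ℕ) (γ η : ℕ → ℤ → Bool → ℕ → ℕ → ℝ)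
    (c : ℤ → ℤ → Bool → ℕ → ℝ) (z : ℝ) : Prop where
  init : ∀ {r : ℤ} {b : Bool} {j : ℕ}, -1 ≤ r → r ≤ t → j < L →
    γ t r b 0 j = if r = -1 ∧ b = a then z else 0
  step : ∀ {r : ℤ} {b : Bool} {i j : ℕ}, -1 ≤ r → r ≤ t → i < L → j < L →
    γ t r b (i + 1) j = γ t r b i j + (if t = r ∧ b = a ∧ i = j then 1 else 0)
      + (L : ℝ)⁻¹ * ∑ s ∈ Finset.range t, η s r b (i + 1) j * (γ t s (!a) i i - c t s a i)
  cov : ∀ {s i : ℕ}, s ≤ t → i < L → c t s a i = (L : ℝ)⁻¹ * ∑ j ∈ Finset.range L,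
    ∑ t' ∈ Finset.Icc (-1 : ℤ) t, ∑ s' ∈ Finset.Icc (-1 : ℤ) s, ∑ b : Bool,
      γ t t' b i j * c t' s' b j * γ s s' b i j
  symm : ∀ (r s : ℤ) (b : Bool) (j : ℕ), c r s b j = c s r b j
  mixed : ∀ (b : Bool) (j : ℕ), c t (-1) b j = 0
  vanish : ∀ {s : ℕ} {r : ℤ} (b : Bool) (i j : ℕ), s < r → γ s r b i j = 0
  vanish_opposite : ∀ {s : ℕ} {r : ℤ} (b : Bool) (i j : ℕ), s < r → η s r b i j = 0

theorem sum_Icc_neg_one_eq_sum_range {f : ℤ → ℝ} {s n : ℕ} (hs : s < n) (hneg : f (-1) = 0)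
    (hlarge : ∀ k : ℕ, s < k → f k = 0) :
    ∑ k ∈ Finset.Icc (-1 : ℤ) s, f k = ∑ k ∈ Finset.range n, f k := by
  have hrange : ∑ k ∈ Finset.range (s + 1), f k = ∑ k ∈ Finset.range n, f k :=
    Finset.sum_subset (Finset.range_subset_range.2 hs) fun k _ hk => hlarge k (by simpa using hk)
  rw [← hrange]
  refine (Finset.sum_of_injOn (fun k : ℕ => (k : ℤ)) Nat.cast_injective.injOn ?_ ?_ ?_).symm
  · intro k hk
    simp only [Finset.coe_range, Set.mem_Iio, Finset.coe_Icc, Set.mem_Icc] at hk ⊢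
    omega
  · intro k hk hk'
    obtain rfl | hk0 : k = -1 ∨ 0 ≤ k := by rw [Finset.mem_Icc] at hk; omega
    · exact hneg
    · lift k to ℕ using hk0
      exact absurd ⟨k, by simpa [Nat.lt_succ_iff] using hk⟩ hk'
  · exact fun _ _ => rfl

/-- The pairs `(r, b)` with `-1 ≤ r < t`, which index the unknowns `Γ_{t,r,a,b}` of the sweep at
time `t`. -/
abbrev PastIndex (t : ℕ) : Type := Finset.Icc (-1 : ℤ) (t - 1) × Bool

/-- The coefficient of `Γ_{t,r,a,b}` in the formula for `C_{t,s,a}`. -/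
noncomputable def covWeight (γ : ℕ → ℤ → Bool → ℕ → ℕ → ℝ) (c : ℤ → ℤ → Bool → ℕ → ℝ) (s : ℕ)
    (r : ℤ) (b : Bool) (i j : ℕ) : ℝ :=
  ∑ s' ∈ Finset.Icc (-1 : ℤ) s, c r s' b j * γ s s' b i j

/-- The continuous linear map reading off the values `Γ_{t,s,a,!a}` for `s < t`, on which the
feedback in a sweep acts, from the vector of all `Γ_{t,r,a,b}` for `r < t`. The system has `n`
covariances `C_{t,s,a}`: those with `s < t` if `n = t`, and also `C_{t,t,a}` if `n = t + 1`. -/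
noncomputable def readout (a : Bool) (t n : ℕ) : (PastIndex t → ℝ) →L[ℝ] (Fin n → ℝ) :=
  ContinuousLinearMap.pi fun s =>
    if hs : (s : ℕ) < t then
      ContinuousLinearMap.proj (⟨(s : ℤ), Finset.mem_Icc.2 (by omega)⟩, !a)
    else 0

/-- The coefficients of the feedback in the recursion for `Γ_{t,r,a,b}`. -/
noncomputable def feedbackMatrix (η : ℕ → ℤ → Bool → ℕ → ℕ → ℝ) (t n i j : ℕ) :
    Matrix (PastIndex t) (Fin n) ℝ :=
  Matrix.of fun k s => if (s : ℕ) < t then η s k.1 k.2 i j else 0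

/-- The coefficients of `Γ_{t,r,a,b}`, `r < t`, in the formulas for `C_{t,s,a}`. -/
noncomputable def covStateMatrix (γ : ℕ → ℤ → Bool → ℕ → ℕ → ℝ) (c : ℤ → ℤ → Bool → ℕ → ℝ)
    (t n i j : ℕ) : Matrix (Fin n) (PastIndex t) ℝ :=
  Matrix.of fun s k => covWeight γ c s k.1 k.2 i j

/-- The coefficients of `C_{t,s',a}` in the formulas for `C_{t,s,a}`. They come from `Γ_{t,t,a,a}`,
which is the indicator of the cells `j < i`. -/
noncomputable def covCovMatrix (a : Bool) (γ : ℕ → ℤ → Bool → ℕ → ℕ → ℝ) (n i j : ℕ) :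
    Matrix (Fin n) (Fin n) ℝ :=
  Matrix.of fun s s' => if j < i then γ s s' a i j else 0

theorem mulVecCLM_feedbackMatrix_readout {η : ℕ → ℤ → Bool → ℕ → ℕ → ℝ} {a : Bool} {t n : ℕ}
    (htn : t ≤ n) (g : ℤ → Bool → ℝ) (w : ℤ → ℝ) (i j : ℕ) (k : PastIndex t) :
    mulVecCLM (feedbackMatrix η t n i j)
        (readout a t n (fun k => g k.1 k.2) - fun s : Fin n => w s) k
      = ∑ s ∈ Finset.range t, η s k.1 k.2 i j * (g s (!a) - w s) := by
  have hterm (s : Fin n) : feedbackMatrix η t n i j k s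
      * (readout a t n (fun k => g k.1 k.2) - fun s : Fin n => w s) s
      = if (s : ℕ) < t then η s k.1 k.2 i j * (g (s : ℕ) (!a) - w (s : ℕ)) else 0 := by
    by_cases hs : (s : ℕ) < t <;> simp [feedbackMatrix, readout, hs]
  rw [mulVecCLM_apply, Finset.sum_congr rfl fun s _ => hterm s, Fin.sum_univ_eq_sum_range
      fun s => if s < t then η s k.1 k.2 i j * (g s (!a) - w s) else 0,
    ← Finset.sum_subset (Finset.range_subset_range.2 htn) fun s _ hs =>
      if_neg (by simpa using hs)]
  exact Finset.sum_congr rfl fun s hs => if_pos (Finset.mem_range.1 hs)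

namespace IsDiscreteSweep

section FixedDepth

variable {a : Bool} {t L : ℕ} {γ η : ℕ → ℤ → Bool → ℕ → ℕ → ℝ} {c : ℤ → ℤ → Bool → ℕ → ℝ} {z : ℝ}
  (h : IsDiscreteSweep a t L γ η c z) {b : Bool} {i j n s : ℕ}
include h

theorem diag_eq (hi : i ≤ L) (hj : j < L) : γ t t b i j = if b = a ∧ j < i then 1 else 0 := by
  induction i with
  | zero => rw [h.init (by omega) le_rfl hj, if_neg (by omega), if_neg (by omega)]
  | succ i ih =>
    have hfeedback : ∑ s ∈ Finset.range t,
        η s t b (i + 1) j * (γ t s (!a) i i - c t s a i) = 0 :=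
      Finset.sum_eq_zero fun s hs => by
        rw [h.vanish_opposite _ _ _ (by exact_mod_cast Finset.mem_range.1 hs), zero_mul]
    rw [h.step (by omega) le_rfl hi hj, ih (by omega), hfeedback, mul_zero, add_zero]
    by_cases hb : b = a
    · simp only [hb, true_and]
      split_ifs <;> first | omega | norm_num
    · simp [hb]

theorem covWeight_self (hsn : s < n) :
    covWeight γ c s t a i j = ∑ s' : Fin n, γ s s' a i j * c t s' a j := by
  rw [Fin.sum_univ_eq_sum_range fun s' : ℕ => γ s s' a i j * c t s' a j,
    ← sum_Icc_neg_one_eq_sum_range (f := fun s' => γ s s' a i j * c t s' a j) hsn]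
  · simp only [covWeight, mul_comm]
  · rw [h.mixed, mul_zero]
  · intro k hk
    rw [h.vanish _ _ _ (by exact_mod_cast hk), zero_mul]

theorem cov_integrand_eq (hsn : s < n) (hi : i < L) (hj : j < L) :
    ∑ t' ∈ Finset.Icc (-1 : ℤ) t, ∑ s' ∈ Finset.Icc (-1 : ℤ) s, ∑ b : Bool,
        γ t t' b i j * c t' s' b j * γ s s' b i j
      = ∑ k : PastIndex t, covWeight γ c s k.1 k.2 i j * γ t k.1 k.2 i j
        + ∑ s' : Fin n, (if j < i then γ s s' a i j else 0) * c t s' a j := by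
  have hregroup (t' : ℤ) : ∑ s' ∈ Finset.Icc (-1 : ℤ) s, ∑ b : Bool,
        γ t t' b i j * c t' s' b j * γ s s' b i j
      = ∑ b : Bool, covWeight γ c s t' b i j * γ t t' b i j := by
    simp only [covWeight, Finset.sum_mul]
    rw [Finset.sum_comm]
    congr! 2
    ring
  have hpresent : ∑ b : Bool, covWeight γ c s t b i j * γ t t b i j
      = ∑ s' : Fin n, (if j < i then γ s s' a i j else 0) * c t s' a j := by
    rw [Finset.sum_eq_single a (fun b _ hb => by simp [h.diag_eq hi.le hj, hb]) (by simp),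
      h.diag_eq hi.le hj, h.covWeight_self hsn]
    by_cases hji : j < i <;> simp [hji]
  simp only [hregroup]
  rw [← Finset.insert_Icc_sub_one_right_eq_Icc (by omega : (-1 : ℤ) ≤ t),
    Finset.sum_insert (by simp), hpresent, add_comm, Fintype.sum_prod_type,
    Finset.sum_coe_sort _ fun t' => ∑ b : Bool, covWeight γ c s t' b i j * γ t t' b i j]

theorem stateResidual_eq (htn : t ≤ n) (hi : i ≤ L) (hj : j < L) :
    stateResidual L (readout a t n) (fun i j => mulVecCLM (feedbackMatrix η t n i j))
        (fun i j (k : PastIndex t) => γ t k.1 k.2 i j) (fun i s => c t s a i) i j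
      = fun k => if (k.1 : ℤ) = -1 ∧ k.2 = a then z else 0 := by
  funext k
  obtain ⟨hk₀, hk₁⟩ := Finset.mem_Icc.1 k.1.2
  simp only [stateResidual, Pi.sub_apply, Pi.smul_apply, Finset.sum_apply, smul_eq_mul]
  induction i with
  | zero => rw [Finset.sum_range_zero, mul_zero, sub_zero, h.init hk₀ (by omega) hj]
  | succ i ih =>
    rw [← ih (by omega), Finset.sum_range_succ, mul_add, h.step hk₀ (by omega) hi hj,
      if_neg (by omega), mulVecCLM_feedbackMatrix_readout htn (fun r b => γ t r b i i)
        (fun s => c t s a i)]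
    ring

theorem covResidual_eq (hnt : n ≤ t + 1) (hi : i < L) :
    covResidual L (fun i j => mulVecCLM (covStateMatrix γ c t n i j))
        (fun i j => mulVecCLM (covCovMatrix a γ n i j))
        (fun i j (k : PastIndex t) => γ t k.1 k.2 i j) (fun i s => c t s a i) i = 0 := by
  funext s
  simp only [covResidual, Pi.sub_apply, Pi.smul_apply, Finset.sum_apply, Pi.add_apply,
    mulVecCLM_apply, covStateMatrix, covCovMatrix, Matrix.of_apply, smul_eq_mul, Pi.zero_apply]
  rw [h.cov (by omega) hi, sub_eq_zero]
  congr 1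
  refine Finset.sum_congr rfl fun j hj => ?_
  exact h.cov_integrand_eq s.2 hi (Finset.mem_range.1 hj)

end FixedDepth

end IsDiscreteSweep

/-! ### Stability of a sweep -/

/-- What the earlier steps provide for the sweep at time `t`: the weights of either direction and
the covariances of all times before `t` are doubling-stable. -/
structure HasStablePast (t : ℕ) (γ η : ℕ → ℕ → ℤ → Bool → ℕ → ℕ → ℝ)
    (c : ℕ → ℤ → ℤ → Bool → ℕ → ℝ) : Prop where
  weight : ∀ {s : ℕ} {r : ℤ} {b : Bool}, s < t → -1 ≤ r → r < t →
    DoublingStable endpointWeight fun L i j => γ L s r b i j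
  weight_opposite : ∀ {s : ℕ} {r : ℤ} {b : Bool}, s < t → -1 ≤ r → r < t →
    DoublingStable endpointWeight fun L i j => η L s r b i j
  cov : ∀ {r s : ℤ} {b : Bool}, -1 ≤ r → r < t → -1 ≤ s → s < t →
    DoublingStable 0 fun L _ j => c L r s b j

theorem HasStablePast.covWeight {t s : ℕ} {γ η : ℕ → ℕ → ℤ → Bool → ℕ → ℕ → ℝ}
    {c : ℕ → ℤ → ℤ → Bool → ℕ → ℝ} {r : ℤ} {b : Bool} (h : HasStablePast t γ η c) (hs : s < t)
    (hr : -1 ≤ r) (hr' : r < t) :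
    DoublingStable endpointWeight fun L i j => covWeight (γ L) (c L) s r b i j :=
  .sum fun s' hs' => by
    obtain ⟨hs'₀, hs'₁⟩ := Finset.mem_Icc.1 hs'
    exact (h.cov hr hr' hs'₀ (by omega)).of_zero.mul (h.weight hs hs'₀ (by omega))

namespace IsDiscreteSweep

variable {a : Bool} {t n : ℕ} {γ η : ℕ → ℕ → ℤ → Bool → ℕ → ℕ → ℝ}
  {c : ℕ → ℤ → ℤ → Bool → ℕ → ℝ} {z : ℕ → ℝ}
  {r : ℤ} {b : Bool} {s : ℕ}
  (h : ∀ {L : ℕ}, 1 ≤ L → IsDiscreteSweep a t L (γ L) (η L) (c L) (z L))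
include h

theorem exists_isSweepFamily (htn : t ≤ n) (hnt : n ≤ t + 1)
    (hz : DoublingStable 0 fun L _ _ => z L)
    (hpast : HasStablePast t γ η c)
    (hweight : ∀ {s : ℕ} {r : ℤ} {b : Bool}, s < n → -1 ≤ r → r < t →
      DoublingStable endpointWeight fun L i j => covWeight (γ L) (c L) s r b i j)
    (hγ : ∀ {s s' : ℕ}, s < n → s' < n →
      DoublingStable endpointWeight fun L i j => γ L s s' a i j) :
    ∃ M, IsSweepFamily (readout a t n)
      (fun L _ _ (k : PastIndex t) => if (k.1 : ℤ) = -1 ∧ k.2 = a then z L else 0)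
      (fun L i j => mulVecCLM (feedbackMatrix (η L) t n i j))
      (fun L i j => mulVecCLM (covStateMatrix (γ L) (c L) t n i j))
      (fun L i j => mulVecCLM (covCovMatrix a (γ L) n i j))
      (fun L i j (k : PastIndex t) => γ L t k.1 k.2 i j) (fun L i s => c L t s a i) M := by
  have hk (k : PastIndex t) : -1 ≤ (k.1 : ℤ) ∧ (k.1 : ℤ) < t := by
    have := Finset.mem_Icc.1 k.1.2
    omega
  have hforcing : DoublingStable 0 fun L _ _ (k : PastIndex t) =>
      if (k.1 : ℤ) = -1 ∧ k.2 = a then z L else 0 := by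
    refine (hz.comp_continuousLinearMap (ContinuousLinearMap.pi fun k : PastIndex t =>
      if (k.1 : ℤ) = -1 ∧ k.2 = a then .id ℝ ℝ else 0)).congr fun _ _ _ => ?_
    ext k
    by_cases hk : (k.1 : ℤ) = -1 ∧ k.2 = a <;> simp [hk]
  have hfeedback : DoublingStable endpointWeight fun L i j =>
      mulVecCLM (feedbackMatrix (η L) t n i j) := .mulVecCLM fun k s => by
    simp only [feedbackMatrix, Matrix.of_apply]
    by_cases hs : (s : ℕ) < t
    · simpa only [if_pos hs] using hpast.weight_opposite hs (hk k).1 (hk k).2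
    · simpa only [if_neg hs] using .const 0
  have hstate : DoublingStable endpointWeight fun L i j =>
      mulVecCLM (covStateMatrix (γ L) (c L) t n i j) :=
    .mulVecCLM fun s k => hweight s.2 (hk k).1 (hk k).2
  have hcov : DoublingStable endpointWeight fun L i j =>
      mulVecCLM (covCovMatrix a (γ L) n i j) := .mulVecCLM fun s s' => by
    refine (doublingStable_indicator_lt.mul (hγ s.2 s'.2)).congr fun _ _ _ => ?_
    simp only [covCovMatrix, Matrix.of_apply, ite_mul, one_mul, zero_mul]
  obtain ⟨M, ⟨⟨hMz, hMH⟩, hMA⟩, hMB⟩ := (((hforcing.eventually.and hfeedback.eventually).and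
    hstate.eventually).and hcov.eventually).exists
  refine ⟨M, hMz, hMH, hMA, hMB, fun {L i j} _ _ hij => ?_,
    fun hL hi hj => (h hL).stateResidual_eq htn hi hj, fun hL hi => (h hL).covResidual_eq hnt hi⟩
  have hzero : covCovMatrix a (γ L) n i j = 0 := by
    ext
    exact if_neg hij.not_gt
  rw [hzero, map_zero]

theorem doublingStable_diag : DoublingStable endpointWeight fun L i j => γ L t t b i j := by
  by_cases hb : b = a
  · refine doublingStable_indicator_lt.congr fun hL hi hj => ?_
    simp only [(h hL).diag_eq hi hj, hb, true_and]
  · refine (DoublingStable.const (0 : ℝ)).congr fun hL hi hj => ?_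
    simp only [(h hL).diag_eq hi hj, hb, false_and, if_false]

theorem doublingStable_past (hz : DoublingStable 0 fun L _ _ => z L)
    (hpast : HasStablePast t γ η c) :
    (∀ {r : ℤ} {b : Bool}, -1 ≤ r → r < t → DoublingStable 0 fun L i j => γ L t r b i j) ∧
      ∀ {s : ℕ}, s < t → DoublingStable 0 fun L _ j => c L t s a j := by
  obtain ⟨M, hfamily⟩ := exists_isSweepFamily h le_rfl (by omega) hz hpast
    hpast.covWeight fun hs hs' => hpast.weight hs (by omega) (by omega)
  refine ⟨fun {r b} hr hr' => ?_, fun {s} hs => ?_⟩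
  · exact hfamily.doublingStable_state.comp_continuousLinearMap
      (.proj (R := ℝ) (⟨⟨r, Finset.mem_Icc.2 (by omega)⟩, b⟩ : PastIndex t))
  · exact hfamily.doublingStable_cov.comp_continuousLinearMap (.proj (R := ℝ) (⟨s, hs⟩ : Fin t))

theorem doublingStable_covWeight_self (hz : DoublingStable 0 fun L _ _ => z L)
    (hpast : HasStablePast t γ η c) (hr : -1 ≤ r) (hr' : r < t) :
    DoublingStable endpointWeight fun L i j => covWeight (γ L) (c L) t r b i j := by
  obtain ⟨hγ, hc⟩ := doublingStable_past h hz hpast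
  refine .sum fun s' hs' => ?_
  obtain ⟨hs'₀, hs'₁⟩ := Finset.mem_Icc.1 hs'
  rcases hs'₁.lt_or_eq with hs't | rfl
  · exact ((hpast.cov hr hr' hs'₀ hs't).mul (hγ hs'₀ hs't)).of_zero
  by_cases hb : b = a
  · subst hb
    refine .mul ?_ (doublingStable_diag h)
    obtain rfl | hr0 : r = -1 ∨ 0 ≤ r := by omega
    · exact (DoublingStable.const (0 : ℝ)).congr fun hL _ _ => by rw [(h hL).symm, (h hL).mixed]
    · lift r to ℕ using hr0
      exact (hc (by omega)).of_zero.congr fun hL _ _ => (h hL).symm _ _ _ _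
  · refine (DoublingStable.const (0 : ℝ)).congr fun hL hi hj => ?_
    simp only [(h hL).diag_eq hi hj, hb, false_and, if_false, mul_zero]

theorem doublingStable_cov (hz : DoublingStable 0 fun L _ _ => z L)
    (hpast : HasStablePast t γ η c) (hs : s ≤ t) :
    DoublingStable 0 fun L _ j => c L t s a j := by
  -- The formula for `C_{t,t,a}` is quadratic in the `Γ_{t,r,a,b}`. It joins the system only now
  -- that these are known to be stable, so that one of the two factors can serve as a coefficient.
  obtain ⟨hγ, -⟩ := doublingStable_past h hz hpast
  obtain ⟨M, hfamily⟩ := exists_isSweepFamily h t.le_succ le_rfl hz hpast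
    (fun hs hr hr' => by
      rcases Nat.lt_succ_iff_lt_or_eq.1 hs with hs | rfl
      · exact hpast.covWeight hs hr hr'
      · exact doublingStable_covWeight_self h hz hpast hr hr')
    fun {s s'} hs hs' => by
      rcases Nat.lt_succ_iff_lt_or_eq.1 hs' with hs' | rfl
      · rcases Nat.lt_succ_iff_lt_or_eq.1 hs with hs | rfl
        · exact hpast.weight hs (by omega) (by omega)
        · exact (hγ (by omega) (by omega)).of_zero
      · rcases Nat.lt_succ_iff_lt_or_eq.1 hs with hs | rfl
        · exact (DoublingStable.const (0 : ℝ)).congr fun hL _ _ =>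
            (h hL).vanish _ _ _ (by omega)
        · exact doublingStable_diag h
  exact hfamily.doublingStable_cov.comp_continuousLinearMap
    (.proj (R := ℝ) (⟨s, by omega⟩ : Fin (t + 1)))

end IsDiscreteSweep

/-! ### The grid of a network of finite depth -/

/-- The cell `j` of the grid with `L` cells on `(0, 1]`. -/
def gridCell (L j : ℕ) : Set ℝ := Set.Ioc ((j : ℝ) / L) ((j + 1 : ℕ) / L)

section GridCell

variable {L i j : ℕ} {q : ℝ}

theorem mem_gridCell_iff (hL : 0 < L) : q ∈ gridCell L j ↔ ⌈(L : ℝ) * q⌉₊ = j + 1 := by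
  have hL' : (0 : ℝ) < L := Nat.cast_pos.2 hL
  rw [Nat.ceil_eq_iff j.succ_ne_zero, gridCell, Set.mem_Ioc, div_lt_iff₀' hL', le_div_iff₀' hL']
  rfl

theorem right_mem_gridCell (hL : 0 < L) : ((j + 1 : ℕ) : ℝ) / L ∈ gridCell L j :=
  Set.right_mem_Ioc.2 <| div_lt_div_of_pos_right (by simp) (Nat.cast_pos.2 hL)

theorem mem_Ioc_of_mem_gridCell (hj : j < L) (hq : q ∈ gridCell L j) : q ∈ Set.Ioc 0 1 :=
  ⟨lt_of_le_of_lt (by positivity) hq.1,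
    hq.2.trans (div_le_one_of_le₀ (by exact_mod_cast hj) (Nat.cast_nonneg L))⟩

theorem ceil_mul_sub_one_lt (hL : 0 < L) (hq : q ∈ Set.Ioc 0 1) : ⌈(L : ℝ) * q⌉₊ - 1 < L := by
  have : ⌈(L : ℝ) * q⌉₊ ≤ L := Nat.ceil_le.2 (mul_le_of_le_one_right (by positivity) hq.2)
  omega

theorem mem_gridCell_ceil (hL : 0 < L) (hq : 0 < q) : q ∈ gridCell L (⌈(L : ℝ) * q⌉₊ - 1) := by
  have : 0 < ⌈(L : ℝ) * q⌉₊ := Nat.ceil_pos.2 (by positivity)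
  rw [mem_gridCell_iff hL]
  omega

theorem layer_eq_intCeil_iff (hL : 0 < L) (hq : q ∈ gridCell L j) :
    ((i + 1 : ℕ) : ℤ) = ⌈(L : ℝ) * q⌉ ↔ i = j := by
  have hq0 : 0 ≤ q := le_trans (by positivity) hq.1.le
  rw [← Int.natCast_ceil_eq_ceil (by positivity), (mem_gridCell_iff hL).1 hq, Nat.cast_inj,
    Nat.add_right_cancel_iff]

theorem setIntegral_Ioc_eq_sum_gridCell {f : ℝ → ℝ} {v : ℕ → ℝ} (hL : 0 < L)
    (hf : ∀ j < L, ∀ q ∈ gridCell L j, f q = v j) :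
    ∫ q in Set.Ioc (0 : ℝ) 1, f q = (L : ℝ)⁻¹ * ∑ j ∈ Finset.range L, v j := by
  have hle (j : ℕ) : (j : ℝ) / L ≤ (j + 1 : ℕ) / L := by gcongr; omega
  have hcell : ∀ j < L, EqOn f (fun _ => v j) (Set.Ioc ((j : ℝ) / L) ((j + 1 : ℕ) / L)) := hf
  have hsum := intervalIntegral.sum_integral_adjacent_intervals (f := f) (μ := volume)
    (a := fun j : ℕ => (j : ℝ) / L) (n := L) fun j hj =>
      (intervalIntegrable_iff_integrableOn_Ioc_of_le (hle j)).2 <|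
        (integrableOn_const (by simp)).congr_fun (hcell j hj).symm measurableSet_Ioc
  simp only [Nat.cast_zero, zero_div, div_self (Nat.cast_ne_zero.2 hL.ne' : (L : ℝ) ≠ 0)] at hsum
  rw [← intervalIntegral.integral_of_le zero_le_one, ← hsum, Finset.mul_sum]
  refine Finset.sum_congr rfl fun j hj => ?_
  rw [intervalIntegral.integral_of_le (hle j),
    setIntegral_congr_fun measurableSet_Ioc (hcell j (Finset.mem_range.1 hj)),
    setIntegral_const, Real.volume_real_Ioc_of_le (hle j), smul_eq_mul]
  push_cast
  ring

end GridCell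

/-- The node reached by the sweep in direction `a` after `i` layers: the backward sweep numbers the
layers from the output. -/
def sweepNode (a : Bool) (L i : ℕ) : ℕ := bif a then L - i else i

/-- The cell of the layer that the sweep in direction `a` passes after `j` layers. -/
def sweepCell (a : Bool) (L j : ℕ) : ℕ := bif a then L - 1 - j else j

section Sweep

variable {a : Bool} {L i j : ℕ}

theorem sweepNode_le (hi : i ≤ L) : sweepNode a L i ≤ L := by
  cases a <;> simp [sweepNode, hi]

theorem sweepCell_lt (hj : j < L) : sweepCell a L j < L := by
  grind [sweepCell]

theorem sweepNode_sweepNode (hi : i ≤ L) : sweepNode a L (sweepNode a L i) = i := by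
  grind [sweepNode]

theorem sweepCell_sweepCell (hj : j < L) : sweepCell a L (sweepCell a L j) = j := by
  grind [sweepCell]

theorem sweepCell_inj (hi : i < L) (hj : j < L) :
    sweepCell a L i = sweepCell a L j ↔ i = j := by
  grind [sweepCell]

theorem sum_range_sweepCell (a : Bool) (L : ℕ) (g : ℕ → ℝ) :
    ∑ j ∈ Finset.range L, g (sweepCell a L j) = ∑ j ∈ Finset.range L, g j := by
  cases a
  · rfl
  · exact Finset.sum_range_reflect g L

theorem DoublingStable.sweep {w : ℕ → ℕ → ℝ≥0} {F : ℕ → ℕ → ℕ → ℝ} (hF : DoublingStable w F)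
    (hw : ∀ {N i j : ℕ}, i ≤ N → j < N → w (N - i) (N - 1 - j) = w i j) (a : Bool) :
    DoublingStable w fun L i j => F L (sweepNode a L i) (sweepCell a L j) := by
  cases a
  · exact hF
  · exact hF.reflect hw

theorem DoublingStable.of_sweep {w : ℕ → ℕ → ℝ≥0} {F : ℕ → ℕ → ℕ → ℝ}
    (hF : DoublingStable w fun L i j => F L (sweepNode a L i) (sweepCell a L j))
    (hw : ∀ {N i j : ℕ}, i ≤ N → j < N → w (N - i) (N - 1 - j) = w i j) : DoublingStable w F :=
  (hF.sweep hw a).congr fun _ hi hj => by rw [sweepNode_sweepNode hi, sweepCell_sweepCell hj]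

end Sweep

namespace IsLinearTP

variable {T L : ℕ} {ξ : ℕ → ℝ} {ℓ' : ℕ → ℝ → ℝ} {Γ : ℕ → ℤ → Bool → Bool → ℝ → ℝ → ℝ}
  {C : ℤ → ℤ → Bool → ℝ → ℝ} {f χ : ℕ → ℝ} (h : IsLinearTP T L ξ ℓ' Γ C f χ)
  {t s i j : ℕ} {r : ℤ} {a b : Bool} {p q : ℝ}
include h

theorem weight_sweepNode_zero (ht : t < T) (hr : -1 ≤ r) (hr' : r ≤ t) (hL : 0 < L)
    (hq : q ∈ Set.Ioc 0 1) :
    Γ t r a b (sweepNode a L 0 / L) q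
      = if r = -1 ∧ b = a then (bif a then χ t else ξ t) else 0 := by
  cases a
  · simpa [sweepNode] using h.fwd_init t ht r hr hr' b q hq.1 hq.2
  · simpa [sweepNode, hL.ne'] using h.bwd_init t ht r hr hr' b q hq.1 hq.2

theorem weight_sweepNode_succ (ht : t < T) (hr : -1 ≤ r) (hr' : r ≤ t) (hi : i < L) (hj : j < L)
    (hq : q ∈ gridCell L j) :
    Γ t r a b (sweepNode a L (i + 1) / L) q
      = Γ t r a b (sweepNode a L i / L) q + (if t = r ∧ b = a ∧ sweepCell a L i = j then 1 else 0)
        + (L : ℝ)⁻¹ * ∑ s ∈ Finset.range t, Γ s r (!a) b (sweepNode a L (i + 1) / L) q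
          * (Γ t s a (!a) (sweepNode a L i / L) ((sweepCell a L i + 1 : ℕ) / L)
            - C t s a ((sweepCell a L i + 1 : ℕ) / L)) := by
  have hL : (0 : ℝ) < L := Nat.cast_pos.2 (by omega)
  have hq' := mem_Ioc_of_mem_gridCell hj hq
  cases a
  · have hlayer := layer_eq_intCeil_iff (i := i) (by omega) hq
    have hstep := h.fwd_step t ht (i + 1) (by omega) hi r hr hr' b _ q
      (div_lt_div_of_pos_right (sub_one_lt _) hL) le_rfl hq'.1 hq'.2
    simp only [hlayer] at hstep
    convert hstep using 4 <;> simp [sweepNode, sweepCell]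
  · obtain ⟨l, rfl⟩ : ∃ l, L = l + 1 + i := ⟨L - 1 - i, by omega⟩
    have hlayer := layer_eq_intCeil_iff (i := l) (by omega) hq
    have hnode : l + 1 + i - (i + 1) = l := by omega
    have hstep := h.bwd_step t ht (l + 1) (by omega) (by omega) r hr hr' b (l / (l + 1 + i : ℕ)) q
      (div_lt_div_of_pos_right (by push_cast; linarith) hL) (by simp) (by positivity) hq'.1 hq'.2
    simp only [hlayer] at hstep
    convert hstep using 4 <;> simp [sweepNode, sweepCell, hnode]

theorem cov_eq_integral (ht : t < T) (hs : s ≤ t) (hi : i < L)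
    (hp : p ∈ gridCell L (sweepCell a L i)) :
    C t s a p = ∑ t' ∈ Finset.Icc (-1 : ℤ) t, ∑ s' ∈ Finset.Icc (-1 : ℤ) s, ∑ b : Bool,
      ∫ q in Set.Ioc (0 : ℝ) 1, Γ t t' a b (sweepNode a L i / L) q * C t' s' b q
        * Γ s s' a b (sweepNode a L i / L) q := by
  cases a
  · simp only [sweepCell, cond_false] at hp
    simpa [sweepNode] using h.fwd_C t ht s hs (i + 1) (by omega) hi p (by simpa using hp.1) hp.2
  · obtain ⟨l, rfl⟩ : ∃ l, L = l + 1 + i := ⟨L - 1 - i, by omega⟩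
    have hcell : l + 1 + i - 1 - i = l := by omega
    simp only [sweepCell, hcell, cond_true] at hp
    simpa [sweepNode] using
      h.bwd_C t ht s hs (l + 1) (by omega) (by omega) p (by simpa using hp.1) hp.2

end IsLinearTP

/-- The values of `Γ` at depth `L` on the grid: `i` numbers the nodes and `j` the cells. -/
noncomputable def gridWeight (Γ : ℕ → ℤ → Bool → Bool → ℝ → ℝ → ℝ) (L t : ℕ) (r : ℤ) (a b : Bool)
    (i j : ℕ) : ℝ :=
  Γ t r a b (i / L) ((j + 1 : ℕ) / L)

/-- The values of `C` at depth `L` on the grid: `j` numbers the cells. -/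
noncomputable def gridCov (C : ℤ → ℤ → Bool → ℝ → ℝ) (L : ℕ) (r s : ℤ) (b : Bool) (j : ℕ) : ℝ :=
  C r s b ((j + 1 : ℕ) / L)

namespace IsLinearTP

variable {T L : ℕ} {ξ : ℕ → ℝ} {ℓ' : ℕ → ℝ → ℝ} {Γ : ℕ → ℤ → Bool → Bool → ℝ → ℝ → ℝ}
  {C : ℤ → ℤ → Bool → ℝ → ℝ} {f χ : ℕ → ℝ} (h : IsLinearTP T L ξ ℓ' Γ C f χ)
  {t i j : ℕ} {r s : ℤ} {a b : Bool} {p p' q q' : ℝ}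
include h

theorem weight_eq_of_mem_gridCell (ht : t < T) (hr : -1 ≤ r) (hi : i ≤ L) (hj : j < L)
    (hq : q ∈ gridCell L j) (hq' : q' ∈ gridCell L j) :
    Γ t r a b (i / L) q = Γ t r a b (i / L) q' := by
  induction t using Nat.strong_induction_on generalizing r a b i with
  | _ t ih =>
    rcases lt_or_ge (t : ℤ) r with hrt | hrt
    · rw [h.Γ_vanish t r hrt, h.Γ_vanish t r hrt]
    obtain ⟨k, hk, rfl⟩ : ∃ k ≤ L, sweepNode a L k = i :=
      ⟨_, sweepNode_le hi, sweepNode_sweepNode hi⟩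
    induction k with
    | zero =>
      rw [h.weight_sweepNode_zero ht hr hrt (by omega) (mem_Ioc_of_mem_gridCell hj hq),
        h.weight_sweepNode_zero ht hr hrt (by omega) (mem_Ioc_of_mem_gridCell hj hq')]
    | succ k ihk =>
      have hfeedback (s : ℕ) (hs : s ∈ Finset.range t) :
          Γ s r (!a) b (sweepNode a L (k + 1) / L) q
            = Γ s r (!a) b (sweepNode a L (k + 1) / L) q' :=
        have hst := Finset.mem_range.1 hs
        ih s hst (hst.trans ht) hr hi
      rw [h.weight_sweepNode_succ ht hr hrt hk hj hq, h.weight_sweepNode_succ ht hr hrt hk hj hq',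
        ihk (by omega) (sweepNode_le (by omega))]
      congr! 4 with s hs
      exact hfeedback s hs

theorem cov_eq_of_mem_gridCell (hr : -1 ≤ r) (hrT : r < T) (hs : -1 ≤ s) (hsT : s < T) (hj : j < L)
    (hp : p ∈ gridCell L j) (hp' : p' ∈ gridCell L j) : C r s b p = C r s b p' := by
  wlog hsr : s ≤ r generalizing r s
  · rw [h.C_symm r, h.C_symm r]
    exact this hs hsT hr hrT (by omega)
  obtain rfl | hs0 : s = -1 ∨ 0 ≤ s := by omega
  · obtain rfl | hr0 : r = -1 ∨ 0 ≤ r := by omega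
    · rw [h.C_base, h.C_base]
    · rw [h.C_mixed r hr0, h.C_mixed r hr0]
  lift s to ℕ using hs0
  lift r to ℕ using by omega
  rw [← sweepCell_sweepCell (a := b) hj] at hp hp'
  rw [h.cov_eq_integral (by omega) (by omega) (sweepCell_lt hj) hp,
    h.cov_eq_integral (by omega) (by omega) (sweepCell_lt hj) hp']

theorem setIntegral_cov_integrand {t s : ℕ} {t' s' : ℤ} (hi : i ≤ L) (hL : 0 < L) (ht : t < T)
    (hs : s < T) (ht' : t' ∈ Finset.Icc (-1 : ℤ) t) (hs' : s' ∈ Finset.Icc (-1 : ℤ) s) :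
    ∫ q in Set.Ioc (0 : ℝ) 1, Γ t t' a b (i / L) q * C t' s' b q * Γ s s' a b (i / L) q
      = (L : ℝ)⁻¹ * ∑ j ∈ Finset.range L,
        gridWeight Γ L t t' a b i j * gridCov C L t' s' b j * gridWeight Γ L s s' a b i j := by
  rw [Finset.mem_Icc] at ht' hs'
  refine setIntegral_Ioc_eq_sum_gridCell hL fun j hj q hq => ?_
  have hright := right_mem_gridCell (j := j) hL
  rw [h.weight_eq_of_mem_gridCell ht ht'.1 hi hj hq hright,
    h.weight_eq_of_mem_gridCell hs hs'.1 hi hj hq hright,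
    h.cov_eq_of_mem_gridCell ht'.1 (by omega) hs'.1 (by omega) hj hq hright]
  rfl

theorem gridCov_eq_sum {t s : ℕ} (ht : t < T) (hs : s ≤ t) (hi : i < L) :
    gridCov C L t s a (sweepCell a L i) = (L : ℝ)⁻¹ * ∑ j ∈ Finset.range L,
      ∑ t' ∈ Finset.Icc (-1 : ℤ) t, ∑ s' ∈ Finset.Icc (-1 : ℤ) s, ∑ b : Bool,
        gridWeight Γ L t t' a b (sweepNode a L i) j * gridCov C L t' s' b j
          * gridWeight Γ L s s' a b (sweepNode a L i) j := by
  have hL : 0 < L := by omega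
  rw [gridCov, h.cov_eq_integral ht hs hi (right_mem_gridCell hL)]
  symm
  rw [Finset.sum_comm, Finset.mul_sum]
  refine Finset.sum_congr rfl fun t' ht' => ?_
  rw [Finset.sum_comm, Finset.mul_sum]
  refine Finset.sum_congr rfl fun s' hs' => ?_
  rw [Finset.sum_comm, Finset.mul_sum]
  refine Finset.sum_congr rfl fun b _ => ?_
  exact (h.setIntegral_cov_integrand (sweepNode_le hi.le) hL ht (hs.trans_lt ht) ht' hs').symm

theorem isDiscreteSweep (hL : 0 < L) (ht : t < T) (a : Bool) :
    IsDiscreteSweep a t L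
      (fun s r b i j => gridWeight Γ L s r a b (sweepNode a L i) (sweepCell a L j))
      (fun s r b i j => gridWeight Γ L s r (!a) b (sweepNode a L i) (sweepCell a L j))
      (fun r s b j => gridCov C L r s b (sweepCell a L j)) (bif a then χ t else ξ t) where
  init hr hr' hj := h.weight_sweepNode_zero ht hr hr' hL <|
    mem_Ioc_of_mem_gridCell (sweepCell_lt hj) (right_mem_gridCell hL)
  step {r b i j} hr hr' hi hj := by
    simpa only [gridWeight, gridCov, sweepCell_inj hi hj] using
      h.weight_sweepNode_succ (a := a) (b := b) ht hr hr' hi (sweepCell_lt (a := a) hj)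
        (right_mem_gridCell hL)
  cov {s i} hs hi := by
    rw [sum_range_sweepCell a L fun j => ∑ t' ∈ Finset.Icc (-1 : ℤ) t, ∑ s' ∈ Finset.Icc (-1 : ℤ) s,
      ∑ b : Bool, gridWeight Γ L t t' a b (sweepNode a L i) j * gridCov C L t' s' b j
        * gridWeight Γ L s s' a b (sweepNode a L i) j]
    exact h.gridCov_eq_sum ht hs hi
  symm r s b _ := h.C_symm r s b _
  mixed b _ := h.C_mixed t (by omega) b _
  vanish {s r} b _ _ hsr := h.Γ_vanish s r hsr a b _ _
  vanish_opposite {s r} b _ _ hsr := h.Γ_vanish s r hsr (!a) b _ _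

theorem weight_eq_gridWeight (ht : t < T) (hr : -1 ≤ r) (hrt : r ≤ t) (hL : 0 < L)
    (hp : p ∈ Set.Icc 0 1) (hq : q ∈ Set.Ioc 0 1) :
    Γ t r a b p q = gridWeight Γ L t r a b ⌈(L : ℝ) * p⌉₊ (⌈(L : ℝ) * q⌉₊ - 1) := by
  have hL' : (0 : ℝ) < L := Nat.cast_pos.2 hL
  have hpL : ⌈(L : ℝ) * p⌉₊ ≤ L := Nat.ceil_le.2 (mul_le_of_le_one_right hL'.le hp.2)
  have hnode : Γ t r a b p q = Γ t r a b (⌈(L : ℝ) * p⌉₊ / L) q := by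
    rcases hp.1.eq_or_lt with rfl | hp0
    · simp
    refine h.Γ_const t ht r hr hrt a b _ (Nat.ceil_pos.2 (by positivity)) hpL p q ?_ ?_ hq.1 hq.2
    · rw [div_lt_iff₀' hL', sub_lt_iff_lt_add]
      exact Nat.ceil_lt_add_one (by positivity)
    · rw [le_div_iff₀' hL']
      exact Nat.le_ceil _
  rw [hnode, gridWeight]
  exact h.weight_eq_of_mem_gridCell ht hr hpL (ceil_mul_sub_one_lt hL hq)
    (mem_gridCell_ceil hL hq.1) (right_mem_gridCell hL)

theorem cov_eq_gridCov (hr : -1 ≤ r) (hrT : r < T) (hs : -1 ≤ s) (hsT : s < T) (hL : 0 < L)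
    (hp : p ∈ Set.Ioc 0 1) : C r s b p = gridCov C L r s b (⌈(L : ℝ) * p⌉₊ - 1) :=
  h.cov_eq_of_mem_gridCell hr hrT hs hsT (ceil_mul_sub_one_lt hL hp)
    (mem_gridCell_ceil hL hp.1) (right_mem_gridCell hL)

end IsLinearTP

/-! ### Doubling stability of the network -/

/-- The induction hypothesis on the time: every function computed before time `t` is doubling-stable
on the grid. Only the diagonal weights `Γ_{s,s,a,b}` may jump. -/
structure HasStableHistory (t : ℕ) (Γ : ℕ → ℕ → ℤ → Bool → Bool → ℝ → ℝ → ℝ)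
    (C : ℕ → ℤ → ℤ → Bool → ℝ → ℝ) : Prop where
  weight : ∀ {s : ℕ} {r : ℤ} (a b : Bool), s < t → -1 ≤ r → r < s →
    DoublingStable 0 fun L i j => gridWeight (Γ L) L s r a b i j
  weight_diag : ∀ {s : ℕ} (a b : Bool), s < t →
    DoublingStable endpointWeight fun L i j => gridWeight (Γ L) L s s a b i j
  cov : ∀ {r s : ℤ} (b : Bool), -1 ≤ r → r < t → -1 ≤ s → s < t →
    DoublingStable 0 fun L _ j => gridCov (C L) L r s b j

namespace IsLinearTP

variable {T : ℕ} {ξ : ℕ → ℝ} {ℓ' : ℕ → ℝ → ℝ} {Γ : ℕ → ℕ → ℤ → Bool → Bool → ℝ → ℝ → ℝ}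
  {C : ℕ → ℤ → ℤ → Bool → ℝ → ℝ} {f χ : ℕ → ℕ → ℝ}
  (hTP : ∀ L : ℕ, 1 ≤ L → IsLinearTP T L ξ ℓ' (Γ L) (C L) (f L) (χ L)) {t : ℕ} {a b : Bool}
include hTP

theorem doublingStable_gridWeight_of_hasStableHistory (h : HasStableHistory t Γ C) {s : ℕ} {r : ℤ}
    (hs : s < t) (hr : -1 ≤ r) :
    DoublingStable endpointWeight fun L i j => gridWeight (Γ L) L s r a b i j := by
  rcases lt_trichotomy r s with hrs | rfl | hrs
  · exact (h.weight a b hs hr hrs).of_zero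
  · exact h.weight_diag a b hs
  · exact (DoublingStable.const (0 : ℝ)).congr fun hL _ _ => (hTP _ hL).Γ_vanish s r hrs a b _ _

theorem hasStablePast (h : HasStableHistory t Γ C) (a : Bool) :
    HasStablePast t
      (fun L s r b i j => gridWeight (Γ L) L s r a b (sweepNode a L i) (sweepCell a L j))
      (fun L s r b i j => gridWeight (Γ L) L s r (!a) b (sweepNode a L i) (sweepCell a L j))
      (fun L r s b j => gridCov (C L) L r s b (sweepCell a L j)) where
  weight hs hr _ :=
    (doublingStable_gridWeight_of_hasStableHistory hTP h hs hr).sweep endpointWeight_reflect a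
  weight_opposite hs hr _ :=
    (doublingStable_gridWeight_of_hasStableHistory hTP h hs hr).sweep endpointWeight_reflect a
  cov hr hrt hs hst := (h.cov _ hr hrt hs hst).sweep (fun _ _ => rfl) a

section Sweep

variable (h : HasStableHistory t Γ C) (ht : t < T)
  (hz : DoublingStable 0 fun L _ _ => bif a then χ L t else ξ t)
include h ht hz

theorem doublingStable_gridWeight {r : ℤ} (hr : -1 ≤ r) (hrt : r < t) :
    DoublingStable 0 fun L i j => gridWeight (Γ L) L t r a b i j :=
  .of_sweep (a := a) ((IsDiscreteSweep.doublingStable_past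
    (fun hL => (hTP _ hL).isDiscreteSweep hL ht a) hz (hasStablePast hTP h a)).1 hr hrt)
    fun _ _ => rfl

theorem doublingStable_gridCov {s : ℕ} (hs : s ≤ t) :
    DoublingStable 0 fun L _ j => gridCov (C L) L t s a j :=
  .of_sweep (a := a) (IsDiscreteSweep.doublingStable_cov
    (fun hL => (hTP _ hL).isDiscreteSweep hL ht a) hz (hasStablePast hTP h a) hs) fun _ _ => rfl

end Sweep

theorem doublingStable_gridWeight_diag (ht : t < T) :
    DoublingStable endpointWeight fun L i j => gridWeight (Γ L) L t t a b i j :=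
  .of_sweep (a := a) (IsDiscreteSweep.doublingStable_diag
    fun hL => (hTP _ hL).isDiscreteSweep hL ht a) endpointWeight_reflect

theorem doublingStable_output (h : HasStableHistory t Γ C) (ht : t < T) :
    DoublingStable 0 fun L _ _ => f L t := by
  refine (doublingStable_gridWeight (a := false) (b := true) hTP h ht (.const (ξ t)) le_rfl
    (by omega)).last.congr fun {L _ _} hL _ _ => ?_
  rw [(hTP L hL).f_def t ht, gridWeight, Nat.sub_add_cancel hL,
    div_self (Nat.cast_ne_zero.2 (by omega))]

theorem doublingStable_lossDeriv (hlip : LocallyLipschitz (ℓ' t)) (h : HasStableHistory t Γ C)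
    (ht : t < T) : DoublingStable 0 fun L _ _ => χ L t :=
  ((doublingStable_output hTP h ht).comp_locallyLipschitz hlip).congr fun hL _ _ =>
    (hTP _ hL).χ_def t ht

theorem hasStableHistory_succ (hlip : LocallyLipschitz (ℓ' t)) (h : HasStableHistory t Γ C)
    (ht : t < T) : HasStableHistory (t + 1) Γ C := by
  have hz : ∀ a, DoublingStable 0 fun L _ _ => bif a then χ L t else ξ t
    | false => .const _
    | true => doublingStable_lossDeriv hTP hlip h ht
  have hcov {s : ℤ} (b : Bool) (hs : -1 ≤ s) (hst : s ≤ t) :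
      DoublingStable 0 fun L _ j => gridCov (C L) L t s b j := by
    obtain rfl | hs0 : s = -1 ∨ 0 ≤ s := by omega
    · exact (DoublingStable.const (0 : ℝ)).congr fun hL _ _ => (hTP _ hL).C_mixed t (by omega) b _
    · lift s to ℕ using hs0
      exact doublingStable_gridCov hTP h ht (hz b) (by omega)
  refine ⟨fun {s r} a b hs hr hrs => ?_, fun {s} a b hs => ?_, fun {r s} b hr hrt hs hst => ?_⟩
  · rcases Nat.lt_succ_iff_lt_or_eq.1 hs with hs | rfl
    · exact h.weight a b hs hr hrs
    · exact doublingStable_gridWeight hTP h ht (hz a) hr hrs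
  · rcases Nat.lt_succ_iff_lt_or_eq.1 hs with hs | rfl
    · exact h.weight_diag a b hs
    · exact doublingStable_gridWeight_diag hTP ht
  · obtain rfl | hrt : r = t ∨ r < t := by omega
    · exact hcov b hs (by omega)
    obtain rfl | hst : s = t ∨ s < t := by omega
    · exact (hcov b hr hrt.le).congr fun hL _ _ => (hTP _ hL).C_symm _ _ b _
    · exact h.cov b hr hrt hs hst

theorem hasStableHistory (hlip : ∀ t, LocallyLipschitz (ℓ' t)) (ht : t ≤ T) :
    HasStableHistory t Γ C := by
  induction t with
  | zero =>
    refine ⟨fun _ _ hs => absurd hs (by omega), fun _ _ hs => absurd hs (by omega),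
      fun {r s} b hr hr0 hs hs0 => (DoublingStable.const (1 : ℝ)).congr fun hL _ _ => ?_⟩
    obtain rfl : r = -1 := by omega
    obtain rfl : s = -1 := by omega
    exact (hTP _ hL).C_base b _
  | succ t ih => exact hasStableHistory_succ hTP (hlip t) (ih (by omega)) ht

end IsLinearTP

/-! ### Convergence along the dyadic depths -/

theorem ceil_two_mul_le (y : ℝ) : ⌈2 * y⌉₊ ≤ 2 * ⌈y⌉₊ := by
  refine Nat.ceil_le.2 ?_
  push_cast
  linarith [Nat.le_ceil y]

theorem two_mul_ceil_le (y : ℝ) : 2 * ⌈y⌉₊ ≤ ⌈2 * y⌉₊ + 1 := by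
  rcases le_or_gt y 0 with hy | hy
  · simp [Nat.ceil_eq_zero.2 hy]
  have hlt : 2 * (⌈y⌉₊ : ℝ) < (⌈2 * y⌉₊ + 2 : ℕ) := by
    push_cast
    linarith [Nat.ceil_lt_add_one hy.le, Nat.le_ceil (2 * y)]
  have : 2 * ⌈y⌉₊ < ⌈2 * y⌉₊ + 2 := by exact_mod_cast hlt
  omega

theorem DoublingStable.cauchySeq {F : ℕ → ℕ → ℕ → ℝ} (hF : DoublingStable 0 F) {p q : ℝ}
    (hp : p ≤ 1) (hq : q ∈ Set.Ioc 0 1) :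
    CauchySeq fun k : ℕ =>
      F (2 ^ k) ⌈((2 ^ k : ℕ) : ℝ) * p⌉₊ (⌈((2 ^ k : ℕ) : ℝ) * q⌉₊ - 1) := by
  obtain ⟨M, hM⟩ := hF
  have hmul (k : ℕ) (x : ℝ) : ((2 ^ (k + 1) : ℕ) : ℝ) * x = 2 * ((2 ^ k : ℕ) * x) := by
    push_cast
    ring
  have hnode (k : ℕ) : ⌈((2 ^ k : ℕ) : ℝ) * p⌉₊ ≤ 2 ^ k :=
    Nat.ceil_le.2 (mul_le_of_le_one_right (by positivity) hp)
  refine cauchySeq_of_le_geometric (1 / 2) M (by norm_num) fun k => ?_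
  have hL : 1 ≤ 2 ^ k := Nat.one_le_two_pow
  have hceil : 0 < ⌈((2 ^ k : ℕ) : ℝ) * q⌉₊ := Nat.ceil_pos.2 (mul_pos (by positivity) hq.1)
  have hlower := two_mul_ceil_le ((2 ^ k : ℕ) * q)
  have hupper := ceil_two_mul_le ((2 ^ k : ℕ) * q)
  have hcell := ceil_mul_sub_one_lt (L := 2 ^ (k + 1)) (by positivity) hq
  have hnode' := hnode (k + 1)
  rw [hmul] at hcell hnode'
  have hhalf : ⌈((2 ^ k : ℕ) : ℝ) * q⌉₊ - 1 = (⌈2 * ((2 ^ k : ℕ) * q)⌉₊ - 1) / 2 := by omega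
  rw [hmul, hmul, hhalf, pow_succ', dist_eq_norm]
  refine (hM.norm_sub_le_div hL (hnode k) (by rwa [← pow_succ']) (by rwa [← pow_succ'])
    (two_mul_ceil_le _) ((ceil_two_mul_le _).trans (Nat.le_succ _))).trans_eq ?_
  simp [div_eq_mul_inv]

/-- The dyadic-depth sequences `(Γ^{2^k}_{t,s,a,b}(p,q))_k` and
`(C^{2^k}_{t,s,a}(p))_k` are Cauchy sequences of real numbers. -/
theorem stmt_10
    (T : ℕ) (hT : 1 ≤ T) (ξ : ℕ → ℝ) (ℓ : ℕ → ℝ → ℝ) (ℓ' : ℕ → ℝ → ℝ)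
    (hderiv : ∀ (t : ℕ) (x : ℝ), HasDerivAt (ℓ t) (ℓ' t x) x)
    (hlip : ∀ t : ℕ, LocallyLipschitz (ℓ' t))
    (Γ : ℕ → ℕ → ℤ → Bool → Bool → ℝ → ℝ → ℝ)
    (C : ℕ → ℤ → ℤ → Bool → ℝ → ℝ)
    (f χ : ℕ → ℕ → ℝ)
    (hTP : ∀ L : ℕ, 1 ≤ L → IsLinearTP T L ξ ℓ' (Γ L) (C L) (f L) (χ L)) :
    ∀ t : ℕ, t < T → ∀ s : ℤ, -1 ≤ s → s < (t : ℤ) → ∀ a b : Bool,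
      ∀ p : ℝ, 0 ≤ p → p ≤ 1 → ∀ q : ℝ, 0 < q → q ≤ 1 →
        CauchySeq (fun k : ℕ => Γ (2 ^ k) t s a b p q) ∧
        (0 < p → CauchySeq (fun k : ℕ => C (2 ^ k) (t : ℤ) s a p)) := by
  intro t ht s hs hst a b p hp0 hp1 q hq0 hq1
  have hstable := IsLinearTP.hasStableHistory hTP hlip le_rfl
  have hdepth (k : ℕ) := hTP (2 ^ k) Nat.one_le_two_pow
  have hΓ (k : ℕ) := (hdepth k).weight_eq_gridWeight (a := a) (b := b) ht hs hst.le (by positivity)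
    ⟨hp0, hp1⟩ ⟨hq0, hq1⟩
  refine ⟨by simpa only [hΓ] using (hstable.weight a b ht hs hst).cauchySeq hp1 ⟨hq0, hq1⟩,
    fun hp => ?_⟩
  have hC (k : ℕ) := (hdepth k).cov_eq_gridCov (r := t) (b := a) (by omega) (by omega) hs (by omega)
    (by positivity) ⟨hp, hp1⟩
  simpa only [hC] using
    (hstable.cov (r := t) a (by omega) (by omega) hs (by omega)).cauchySeq hp1 ⟨hp, hp1⟩
end
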